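/- arXiv:1506.07708 — 6 statements merged into one kernel-verified Lean document; each statement's English description precedes it below -/
import Mathlib

section
/- There exists K_{02}>0 such that for each K0≥K_{02} there exist ε0>0, A≥1 and s_{0,1}(K0,ε0,A)≥0 such that for all T>0 with s0=−log T≥s_{0,1} and every 0<η0≤1, there exists a closed rectangle D_T⊂[−2,2]² such that for all (d0,d1)∈D_T, the initial data u0(·,d0,d1) belongs to S*(K0,ε0,A,η0,T,0). -/
noncomputable section

open Real Set Filter Topology MeasureTheory

/-- A smooth cutoff function: `χ0 = 1` on `[-1,1]`, `χ0 = 0` outside `[-2,2]`,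
with values in `[0,1]`. -/
def IsCutoff (χ0 : ℝ → ℝ) : Prop :=
  ContDiff ℝ (⊤ : ℕ∞) χ0 ∧ (∀ ξ, χ0 ξ ∈ Set.Icc (0:ℝ) 1) ∧
    (∀ ξ, |ξ| ≤ 1 → χ0 ξ = 1) ∧ (∀ ξ, 2 ≤ |ξ| → χ0 ξ = 0)

/-- `u` is a `2π`-periodic classical solution of `∂ₜ u = ∂_θ² u + |u|^{p-1} u` on `ℝ × [0,T)`. -/
def IsSolHeat (p T : ℝ) (u : ℝ → ℝ → ℝ) : Prop :=
  ∀ t ∈ Set.Ico (0:ℝ) T,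
    (∀ θ, u (θ + 2*π) t = u θ t) ∧
    ContDiff ℝ 2 (fun θ => u θ t) ∧
    ∀ θ, HasDerivWithinAt (fun τ => u θ τ)
      (deriv (deriv (fun x => u x t)) θ + |u θ t| ^ (p-1) * u θ t) (Set.Ico (0:ℝ) T) t

/-- The blow-up profile `f(z) = (p-1+b z²)^{-1/(p-1)}`, `b = (p-1)²/(4p)`. -/
def fprof (p z : ℝ) : ℝ := (p - 1 + (p-1)^2/(4*p) * z^2) ^ (-(1/(p-1)))

/-- `κ = (p-1)^{-1/(p-1)}`. -/
def kap (p : ℝ) : ℝ := (p - 1) ^ (-(1/(p-1)))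

/-- The profile `φ(y,s) = f(y/√s) + κ/(4ps)`. -/
def phi (p y s : ℝ) : ℝ := fprof p (y / Real.sqrt s) + kap p / (4*p*s)

/-- Self-similar variable at time slice: given `v = u(·,t)` with `t = T - e^{-s}`,
`W(y,s) = e^{-s/(p-1)} v(y e^{-s/2})`. -/
def Wsl (p : ℝ) (v : ℝ → ℝ) (s y : ℝ) : ℝ :=
  Real.exp (-(s/(p-1))) * v (y * Real.exp (-(s/2)))

/-- Truncated self-similar solution `w = W·χ` for `|y| ≤ π e^{s/2}`, `0` otherwise. -/
def wsl (p ε0 : ℝ) (χ0 : ℝ → ℝ) (v : ℝ → ℝ) (s y : ℝ) : ℝ :=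
  if |y| ≤ π * Real.exp (s/2) then Wsl p v s y * χ0 (y * Real.exp (-(s/2)) / ε0) else 0

/-- `q = w - φ`. -/
def qsl (p ε0 : ℝ) (χ0 : ℝ → ℝ) (v : ℝ → ℝ) (s y : ℝ) : ℝ :=
  wsl p ε0 χ0 v s y - phi p y s

/-- Gaussian weight `ρ(y) = e^{-y²/4}/√(4π)`. -/
def rho (y : ℝ) : ℝ := Real.exp (-(y^2/4)) / Real.sqrt (4*π)

/-- Dilated Hermite polynomials. -/
def hpoly (m : ℕ) (y : ℝ) : ℝ :=
  ∑ n ∈ Finset.range (m/2 + 1),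
    ((m.factorial : ℝ) / ((n.factorial : ℝ) * ((m - 2*n).factorial : ℝ))) * (-1)^n * y^(m - 2*n)

/-- Normalized Hermite polynomials `k_m = h_m / ‖h_m‖²_{L²_ρ}`. -/
def kpoly (m : ℕ) (y : ℝ) : ℝ := hpoly m y / (∫ x, (hpoly m x)^2 * rho x)

/-- The inner cut-off `χ1(y,s) = χ0(|y|/(K0 √s))`. -/
def chi1 (K0 : ℝ) (χ0 : ℝ → ℝ) (y s : ℝ) : ℝ := χ0 (|y| / (K0 * Real.sqrt s))

/-- The component `q_m(s)` of `q`, `m = 0,1,2`. -/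
def qm (p ε0 K0 : ℝ) (χ0 : ℝ → ℝ) (v : ℝ → ℝ) (m : ℕ) (s : ℝ) : ℝ :=
  ∫ y, kpoly m y * chi1 K0 χ0 y s * qsl p ε0 χ0 v s y * rho y

/-- The negative part `q₋(y,s)`. -/
def qminus (p ε0 K0 : ℝ) (χ0 : ℝ → ℝ) (v : ℝ → ℝ) (s y : ℝ) : ℝ :=
  chi1 K0 χ0 y s * qsl p ε0 χ0 v s y - ∑ m ∈ Finset.range 3, qm p ε0 K0 χ0 v m s * hpoly m y

/-- The outer part `q_e(y,s)`. -/
def qe (p ε0 K0 : ℝ) (χ0 : ℝ → ℝ) (v : ℝ → ℝ) (s y : ℝ) : ℝ :=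
  (1 - chi1 K0 χ0 y s) * qsl p ε0 χ0 v s y

/-- `q(·,s) ∈ V_{K0,A}(s)`. -/
def inV (p ε0 K0 A : ℝ) (χ0 : ℝ → ℝ) (v : ℝ → ℝ) (s : ℝ) : Prop :=
  |qm p ε0 K0 χ0 v 0 s| ≤ A / s^2 ∧ |qm p ε0 K0 χ0 v 1 s| ≤ A / s^2 ∧
  |qm p ε0 K0 χ0 v 2 s| ≤ A^2 * Real.log s / s^2 ∧
  (∀ y, |qminus p ε0 K0 χ0 v s y| ≤ A / s^2 * (1 + |y|^3)) ∧
  (∀ y, |qe p ε0 K0 χ0 v s y| ≤ A / Real.sqrt s)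

/-- `u(t) ∈ S*(K0,ε0,A,η0,T,t)`. -/
def inS (p ε0 K0 A η0 T : ℝ) (χ0 : ℝ → ℝ) (u : ℝ → ℝ → ℝ) (t : ℝ) : Prop :=
  inV p ε0 K0 A χ0 (fun θ => u θ t) (-Real.log (T - t)) ∧
  ∀ θ, ε0/2 ≤ |θ| → |θ| ≤ π → |u θ t| ≤ η0

/-- Initial data on the base interval `[-π,π]`. -/
def u0base (p ε0 K0 A T d0 d1 : ℝ) (χ0 : ℝ → ℝ) (θ : ℝ) : ℝ :=
  T ^ (-(1/(p-1))) *
    (phi p (θ / Real.sqrt T) (-Real.log T) *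
        χ0 (8 * (θ / Real.sqrt T) * Real.exp (-(-Real.log T)/2) / ε0) +
      A / (-Real.log T)^2 * (d0 + d1 * (θ / Real.sqrt T)) *
        chi1 K0 χ0 (2 * (θ / Real.sqrt T)) (-Real.log T))

/-- Initial data, extended `2π`-periodically. -/
def u0init (p ε0 K0 A T d0 d1 : ℝ) (χ0 : ℝ → ℝ) (θ : ℝ) : ℝ :=
  u0base p ε0 K0 A T d0 d1 χ0 (θ - 2*π*(⌊(θ + π)/(2*π)⌋ : ℝ))

/-!
In the variables `(y, s)` with `T = e^{-s}`, the datum is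
`φ(y, s) χ0(8 y e^{-s/2} / ε0) + (A / s²) (d0 + d1 y) χ1(2 y, s)`. Once `√s` is small compared with
`ε0 e^{s/2}`, the support of `χ1` sees only the second summand of `q`, and the error `φ (1 - χ0)` in
the first one lives where `|y| ≥ ε0 e^{s/2} / 8`, a region in which `φ = o(s^{-1/2})`. Hence
`|χ1 q| ≤ (A / s²) max(|d0|, |d1|) (1 + |y|)`, and projecting on the Hermite modes costs only an
absolute constant. The bounds defining `V_{K0,A}` therefore hold for `(d0, d1)` in a square around
`0` whose size depends on no parameter at all.
-/

section HermiteModes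

lemma rho_nonneg (y : ℝ) : 0 ≤ rho y := by
  unfold rho
  positivity

lemma integrable_pow_mul_rho (n : ℕ) : Integrable fun y => y ^ n * rho y := by
  have h := integrable_rpow_mul_exp_neg_mul_sq (b := 1 / 4) (by norm_num) (s := n)
    (by linarith [n.cast_nonneg (α := ℝ)])
  refine (h.div_const √(4 * π)).congr (Eventually.of_forall fun y => ?_)
  simp only [rho, rpow_natCast]
  rw [show -(1 / 4) * y ^ 2 = -(y ^ 2 / 4) by ring, mul_div_assoc]

lemma integrable_hpoly_mul_pow_mul_rho (m n : ℕ) :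
    Integrable fun y => hpoly m y * y ^ n * rho y := by
  simp only [hpoly, Finset.sum_mul]
  refine integrable_finsetSum _ fun k _ => ?_
  refine ((integrable_pow_mul_rho (m - 2 * k + n)).const_mul
    ((m.factorial : ℝ) / (k.factorial * (m - 2 * k).factorial) * (-1) ^ k)).congr
    (Eventually.of_forall fun y => ?_)
  simp only [pow_add]
  ring

lemma integrable_abs_kpoly_mul_rho (m : ℕ) :
    Integrable fun y => |kpoly m y| * (1 + |y|) * rho y := by
  have h₀ := (integrable_hpoly_mul_pow_mul_rho m 0).abs
  have h₁ := (integrable_hpoly_mul_pow_mul_rho m 1).abs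
  refine ((h₀.add h₁).div_const |∫ x, hpoly m x ^ 2 * rho x|).congr
    (Eventually.of_forall fun y => ?_)
  simp only [Pi.add_apply, kpoly, abs_div, abs_mul, pow_zero, pow_one, abs_one,
    abs_of_nonneg (rho_nonneg y)]
  ring

/-- The norm of the functional `g ↦ ∫ k_m g ρ` with respect to `sup |g(y)| / (1 + |y|)`. -/
def modeNorm (m : ℕ) : ℝ := ∫ y, |kpoly m y| * (1 + |y|) * rho y

lemma modeNorm_nonneg (m : ℕ) : 0 ≤ modeNorm m :=
  integral_nonneg fun y => mul_nonneg (by positivity) (rho_nonneg y)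

/-- The sum of the absolute values of the coefficients of `h_m`. -/
def hpolyCoeffSum (m : ℕ) : ℝ :=
  ∑ n ∈ Finset.range (m / 2 + 1),
    (m.factorial : ℝ) / ((n.factorial : ℝ) * ((m - 2 * n).factorial : ℝ))

lemma hpolyCoeffSum_nonneg (m : ℕ) : 0 ≤ hpolyCoeffSum m :=
  Finset.sum_nonneg fun _ _ => by positivity

lemma pow_le_one_add_pow {x : ℝ} (hx : 0 ≤ x) {j k : ℕ} (hjk : j ≤ k) : x ^ j ≤ 1 + x ^ k := by
  rcases le_total x 1 with h | h
  · exact (pow_le_one₀ hx h).trans (le_add_of_nonneg_right (by positivity))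
  · exact (pow_le_pow_right₀ h hjk).trans (le_add_of_nonneg_left zero_le_one)

lemma abs_hpoly_le {m k : ℕ} (hmk : m ≤ k) (y : ℝ) :
    |hpoly m y| ≤ hpolyCoeffSum m * (1 + |y| ^ k) := by
  rw [hpoly, hpolyCoeffSum, Finset.sum_mul]
  refine (Finset.abs_sum_le_sum_abs _ _).trans (Finset.sum_le_sum fun n _ => ?_)
  rw [abs_mul, abs_mul, abs_neg_one_pow, mul_one, abs_pow, abs_of_nonneg (by positivity)]
  gcongr
  exact pow_le_one_add_pow (abs_nonneg y) (by lia)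

variable {p ε0 K0 s c : ℝ} {χ0 v : ℝ → ℝ}

lemma abs_qm_le (hq : ∀ y, |chi1 K0 χ0 y s * qsl p ε0 χ0 v s y| ≤ c * (1 + |y|)) (m : ℕ) :
    |qm p ε0 K0 χ0 v m s| ≤ c * modeNorm m := by
  have hpointwise (y : ℝ) : ‖kpoly m y * chi1 K0 χ0 y s * qsl p ε0 χ0 v s y * rho y‖ ≤
      c * (|kpoly m y| * (1 + |y|) * rho y) := by
    have hρ := rho_nonneg y
    calc ‖kpoly m y * chi1 K0 χ0 y s * qsl p ε0 χ0 v s y * rho y‖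
        = |kpoly m y| * |chi1 K0 χ0 y s * qsl p ε0 χ0 v s y| * rho y := by
          rw [mul_assoc (kpoly m y), norm_eq_abs, abs_mul, abs_mul, abs_of_nonneg hρ]
      _ ≤ |kpoly m y| * (c * (1 + |y|)) * rho y := by gcongr; exact hq y
      _ = c * (|kpoly m y| * (1 + |y|) * rho y) := by ring
  calc |qm p ε0 K0 χ0 v m s| ≤ ∫ y, c * (|kpoly m y| * (1 + |y|) * rho y) :=
        norm_integral_le_of_norm_le ((integrable_abs_kpoly_mul_rho m).const_mul c)
          (Eventually.of_forall hpointwise)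
    _ = c * modeNorm m := integral_const_mul _ _

lemma abs_qminus_le (hq : ∀ y, |chi1 K0 χ0 y s * qsl p ε0 χ0 v s y| ≤ c * (1 + |y|)) (y : ℝ) :
    |qminus p ε0 K0 χ0 v s y| ≤
      c * (2 + ∑ m ∈ Finset.range 3, modeNorm m * hpolyCoeffSum m) * (1 + |y| ^ 3) := by
  have hc : 0 ≤ c := by simpa using (abs_nonneg _).trans (hq 0)
  have hlin : 1 + |y| ≤ 2 * (1 + |y| ^ 3) := by
    have h₀ : 0 ≤ |y| ^ 3 := by positivity
    have h₁ := pow_le_one_add_pow (abs_nonneg y) (show 1 ≤ 3 by norm_num)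
    rw [pow_one] at h₁
    linarith
  have hmodes : |∑ m ∈ Finset.range 3, qm p ε0 K0 χ0 v m s * hpoly m y| ≤
      ∑ m ∈ Finset.range 3, c * modeNorm m * (hpolyCoeffSum m * (1 + |y| ^ 3)) := by
    refine (Finset.abs_sum_le_sum_abs _ _).trans (Finset.sum_le_sum fun m hm => ?_)
    rw [abs_mul]
    exact mul_le_mul (abs_qm_le hq m) (abs_hpoly_le (Finset.mem_range.1 hm).le y) (abs_nonneg _)
      (mul_nonneg hc (modeNorm_nonneg m))
  calc |qminus p ε0 K0 χ0 v s y|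
      ≤ |chi1 K0 χ0 y s * qsl p ε0 χ0 v s y| +
          |∑ m ∈ Finset.range 3, qm p ε0 K0 χ0 v m s * hpoly m y| := abs_sub _ _
    _ ≤ c * (2 * (1 + |y| ^ 3)) +
          ∑ m ∈ Finset.range 3, c * modeNorm m * (hpolyCoeffSum m * (1 + |y| ^ 3)) :=
        add_le_add ((hq y).trans (by gcongr)) hmodes
    _ = c * (2 + ∑ m ∈ Finset.range 3, modeNorm m * hpolyCoeffSum m) * (1 + |y| ^ 3) := by
        simp only [Finset.sum_range_succ, Finset.sum_range_zero]
        ring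

/-- The half-width of the square of admissible parameters `(d0, d1)`: small enough that neither the
modes `q_m` nor the remainder `q_-` gain a factor larger than `1`. -/
def boxRadius : ℝ := (2 + ∑ m ∈ Finset.range 3, modeNorm m * (1 + hpolyCoeffSum m))⁻¹

lemma sum_modeNorm_nonneg : 0 ≤ ∑ m ∈ Finset.range 3, modeNorm m * (1 + hpolyCoeffSum m) :=
  Finset.sum_nonneg fun m _ =>
    mul_nonneg (modeNorm_nonneg m) (by linarith [hpolyCoeffSum_nonneg m])

lemma boxRadius_pos : 0 < boxRadius := inv_pos.2 (by linarith [sum_modeNorm_nonneg])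

lemma boxRadius_le_two : boxRadius ≤ 2 :=
  inv_le_of_inv_le₀ two_pos (by linarith [sum_modeNorm_nonneg])

lemma boxRadius_mul_le_one {x : ℝ}
    (hx : x ≤ 2 + ∑ m ∈ Finset.range 3, modeNorm m * (1 + hpolyCoeffSum m)) :
    boxRadius * x ≤ 1 :=
  inv_mul_le_one_of_le₀ hx (by linarith [sum_modeNorm_nonneg])

lemma boxRadius_mul_modeNorm_le_one {m : ℕ} (hm : m < 3) : boxRadius * modeNorm m ≤ 1 := by
  have hterm : ∀ k, modeNorm k ≤ modeNorm k * (1 + hpolyCoeffSum k) := fun k =>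
    le_mul_of_one_le_right (modeNorm_nonneg k) (by linarith [hpolyCoeffSum_nonneg k])
  have hsum := Finset.single_le_sum (fun k _ => (modeNorm_nonneg k).trans (hterm k))
    (Finset.mem_range.2 hm)
  exact boxRadius_mul_le_one (by linarith [hterm m])

lemma boxRadius_mul_remainder_le_one :
    boxRadius * (2 + ∑ m ∈ Finset.range 3, modeNorm m * hpolyCoeffSum m) ≤ 1 := by
  refine boxRadius_mul_le_one (by gcongr with m; exacts [modeNorm_nonneg m, by linarith])

lemma inV_of_abs_le {A : ℝ} (hA : 0 ≤ A) (hlog : 1 ≤ A * log s)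
    (hq : ∀ y, |chi1 K0 χ0 y s * qsl p ε0 χ0 v s y| ≤ A / s ^ 2 * boxRadius * (1 + |y|))
    (hqe : ∀ y, |qe p ε0 K0 χ0 v s y| ≤ A / √s) :
    inV p ε0 K0 A χ0 v s := by
  have hA' : 0 ≤ A / s ^ 2 := by positivity
  have hqm : ∀ m < 3, |qm p ε0 K0 χ0 v m s| ≤ A / s ^ 2 := fun m hm => by
    refine (abs_qm_le hq m).trans ?_
    rw [mul_assoc]
    exact mul_le_of_le_one_right hA' (boxRadius_mul_modeNorm_le_one hm)
  refine ⟨hqm 0 (by norm_num), hqm 1 (by norm_num), ?_, fun y => ?_, hqe⟩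
  · calc |qm p ε0 K0 χ0 v 2 s| ≤ A / s ^ 2 := hqm 2 (by norm_num)
      _ ≤ A / s ^ 2 * (A * log s) := le_mul_of_one_le_right hA' hlog
      _ = A ^ 2 * log s / s ^ 2 := by ring
  · refine (abs_qminus_le hq y).trans ?_
    rw [mul_assoc (A / s ^ 2)]
    gcongr
    exact mul_le_of_le_one_right hA' boxRadius_mul_remainder_le_one

end HermiteModes

section Profile

variable {p : ℝ}

lemma phi_nonneg (hp : 1 < p) {s : ℝ} (hs : 0 ≤ s) (y : ℝ) : 0 ≤ phi p y s := by
  have : 0 ≤ p - 1 := by linarith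
  unfold phi fprof kap
  positivity

lemma fprof_le_rpow (hp : 1 < p) {x z : ℝ} (hx : 0 < x) (hxz : x ≤ (p - 1) ^ 2 / (4 * p) * z ^ 2) :
    fprof p z ≤ x ^ (-(1 / (p - 1))) :=
  rpow_le_rpow_of_nonpos hx (by linarith) (neg_nonpos.2 (one_div_nonneg.2 (by linarith)))

lemma phi_le_of_mul_exp_le_abs (hp : 1 < p) {c s y : ℝ} (hc : 0 < c) (hs : 0 < s)
    (hy : c * exp (s / 2) ≤ |y|) :
    phi p y s ≤ ((p - 1) ^ 2 / (4 * p) * c ^ 2) ^ (-(1 / (p - 1))) *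
      (s ^ (1 / (p - 1)) * exp (-(1 / (p - 1)) * s)) + kap p / (4 * p * s) := by
  have : 0 < p - 1 := by linarith
  have : 0 < (p - 1) ^ 2 / (4 * p) := by positivity
  have hsq : c ^ 2 * exp s ≤ y ^ 2 := by
    calc c ^ 2 * exp s = (c * exp (s / 2)) ^ 2 := by
          rw [mul_pow, ← exp_nat_mul, Nat.cast_two, mul_div_cancel₀ s two_ne_zero]
      _ ≤ |y| ^ 2 := by gcongr
      _ = y ^ 2 := sq_abs y
  have hf : fprof p (y / √s) ≤
      ((p - 1) ^ 2 / (4 * p) * (c ^ 2 * exp s / s)) ^ (-(1 / (p - 1))) := by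
    refine fprof_le_rpow hp (by positivity) ?_
    rw [div_pow, sq_sqrt hs.le]
    gcongr
  refine add_le_add_left (hf.trans_eq ?_) _
  rw [show (p - 1) ^ 2 / (4 * p) * (c ^ 2 * exp s / s) =
      (p - 1) ^ 2 / (4 * p) * c ^ 2 * (s⁻¹ * exp s) by ring,
    mul_rpow (by positivity) (by positivity), mul_rpow (by positivity) (exp_pos s).le,
    inv_rpow hs.le, rpow_neg hs.le, inv_inv, ← exp_mul, mul_comm s]

lemma eventually_phi_le (hp : 1 < p) {c r : ℝ} (hc : 0 < c) (hr : 0 < r) :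
    ∀ᶠ s in atTop, ∀ y, c * exp (s / 2) ≤ |y| → phi p y s ≤ r / √s := by
  set β := 1 / (p - 1)
  set C := ((p - 1) ^ 2 / (4 * p) * c ^ 2) ^ (-β)
  have hβ₀ : 0 < β := one_div_pos.2 (by linarith)
  have hexp : Tendsto (fun s => C * (s ^ (β + 1 / 2) * exp (-β * s))) atTop (𝓝 0) := by
    simpa using (tendsto_rpow_mul_exp_neg_mul_atTop_nhds_zero (β + 1 / 2) β hβ₀).const_mul C
  have hinv : Tendsto (fun s => kap p / (4 * p) / √s) atTop (𝓝 0) :=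
    tendsto_const_nhds.div_atTop tendsto_sqrt_atTop
  have hsum := hexp.add hinv
  rw [add_zero] at hsum
  filter_upwards [hsum.eventually_le_const hr, eventually_gt_atTop 0] with s hle hs y hy
  have hsqrt : 0 < √s := sqrt_pos.2 hs
  rw [le_div_iff₀ hsqrt]
  calc phi p y s * √s
      ≤ (C * (s ^ β * exp (-β * s)) + kap p / (4 * p * s)) * √s := by
        gcongr
        exact phi_le_of_mul_exp_le_abs hp hc hs hy
    _ = C * (s ^ β * √s * exp (-β * s)) + kap p / (4 * p) * (√s / s) := by ring
    _ = C * (s ^ (β + 1 / 2) * exp (-β * s)) + kap p / (4 * p) / √s := by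
        rw [rpow_add hs, ← sqrt_eq_rpow, sqrt_div_self, div_eq_mul_inv _ √s]
    _ ≤ r := hle

lemma eventually_mul_sqrt_le_exp (a : ℝ) {c : ℝ} (hc : 0 < c) :
    ∀ᶠ s in atTop, a * √s ≤ c * exp (s / 2) := by
  have h := ((isLittleO_rpow_exp_pos_mul_atTop (1 / 2) (one_half_pos (α := ℝ))).const_mul_left
    a).bound hc
  filter_upwards [h] with s hs
  rw [norm_of_nonneg (exp_pos _).le, ← sqrt_eq_rpow, one_div_mul_eq_div] at hs
  exact (le_abs_self _).trans hs

end Profile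

section Cutoff

variable {χ0 : ℝ → ℝ} {K0 s x y r : ℝ}

namespace IsCutoff

lemma nonneg (hχ0 : IsCutoff χ0) : 0 ≤ χ0 x := (hχ0.2.1 x).1

lemma le_one (hχ0 : IsCutoff χ0) : χ0 x ≤ 1 := (hχ0.2.1 x).2

lemma apply_div_eq_one (hχ0 : IsCutoff χ0) (hr : 0 < r) (hx : |x| ≤ r) : χ0 (x / r) = 1 :=
  hχ0.2.2.1 _ (by rwa [abs_div, abs_of_pos hr, div_le_one hr])

lemma apply_div_eq_zero (hχ0 : IsCutoff χ0) (hr : 0 < r) (hx : 2 * r ≤ |x|) : χ0 (x / r) = 0 :=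
  hχ0.2.2.2 _ (by rwa [abs_div, abs_of_pos hr, le_div_iff₀ hr])

end IsCutoff

lemma chi1_eq_one (hχ0 : IsCutoff χ0) (hK0 : 0 < K0) (hs : 0 < s) (hy : |y| ≤ K0 * √s) :
    chi1 K0 χ0 y s = 1 :=
  hχ0.apply_div_eq_one (by positivity) (by rwa [abs_abs])

lemma chi1_eq_zero (hχ0 : IsCutoff χ0) (hK0 : 0 < K0) (hs : 0 < s) (hy : 2 * (K0 * √s) ≤ |y|) :
    chi1 K0 χ0 y s = 0 :=
  hχ0.apply_div_eq_zero (by positivity) (by rwa [abs_abs])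

end Cutoff

/-- The part `(A / s²) (d0 + d1 y) χ1(2 y, s)` of the initial data that carries the two free
parameters, in self-similar variables. -/
def modulation (K0 A d0 d1 : ℝ) (χ0 : ℝ → ℝ) (s y : ℝ) : ℝ :=
  A / s ^ 2 * (d0 + d1 * y) * chi1 K0 χ0 (2 * y) s

section Modulation

variable {K0 A d0 d1 s y : ℝ} {χ0 : ℝ → ℝ}

lemma modulation_eq_zero (hχ0 : IsCutoff χ0) (hK0 : 0 < K0) (hs : 0 < s) (hy : K0 * √s ≤ |y|) :
    modulation K0 A d0 d1 χ0 s y = 0 := by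
  rw [modulation, chi1_eq_zero hχ0 hK0 hs (by rw [abs_mul, abs_two]; linarith), mul_zero]

lemma chi1_mul_modulation (hχ0 : IsCutoff χ0) (hK0 : 0 < K0) (hs : 0 < s) :
    chi1 K0 χ0 y s * modulation K0 A d0 d1 χ0 s y = modulation K0 A d0 d1 χ0 s y := by
  rcases le_total |y| (K0 * √s) with h | h
  · rw [chi1_eq_one hχ0 hK0 hs h, one_mul]
  · rw [modulation_eq_zero hχ0 hK0 hs h, mul_zero]

lemma abs_modulation_le (hχ0 : IsCutoff χ0) (hA : 0 ≤ A) {δ : ℝ} (hd0 : |d0| ≤ δ)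
    (hd1 : |d1| ≤ δ) : |modulation K0 A d0 d1 χ0 s y| ≤ A / s ^ 2 * δ * (1 + |y|) := by
  have hlin : |d0 + d1 * y| ≤ δ * (1 + |y|) := by
    calc |d0 + d1 * y| ≤ |d0| + |d1| * |y| := by rw [← abs_mul]; exact abs_add_le _ _
      _ ≤ δ + δ * |y| := by gcongr
      _ = δ * (1 + |y|) := by ring
  rw [modulation, chi1, abs_mul, abs_mul, abs_of_nonneg (by positivity : 0 ≤ A / s ^ 2),
    abs_of_nonneg hχ0.nonneg, mul_assoc (A / s ^ 2) δ]
  exact (mul_le_of_le_one_right (by positivity) hχ0.le_one).trans (by gcongr)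

end Modulation

section InitialData

variable {p ε0 K0 A d0 d1 s θ : ℝ} {χ0 : ℝ → ℝ}

lemma u0init_eq_u0base {T : ℝ} (hθ : θ ∈ Ico (-π) π) :
    u0init p ε0 K0 A T d0 d1 χ0 θ = u0base p ε0 K0 A T d0 d1 χ0 θ := by
  have hfloor : ⌊(θ + π) / (2 * π)⌋ = 0 := by
    rw [Int.floor_eq_zero_iff]
    exact ⟨div_nonneg (by linarith [hθ.1]) two_pi_pos.le,
      (div_lt_one two_pi_pos).2 (by linarith [hθ.2])⟩
  rw [u0init, hfloor, Int.cast_zero, mul_zero, sub_zero]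

lemma u0init_pi {T : ℝ} :
    u0init p ε0 K0 A T d0 d1 χ0 π = u0base p ε0 K0 A T d0 d1 χ0 (-π) := by
  have hfloor : ⌊(π + π) / (2 * π)⌋ = 1 := by
    rw [← two_mul, div_self two_pi_pos.ne', Int.floor_one]
  rw [u0init, hfloor, Int.cast_one, mul_one, two_mul, sub_add_cancel_left]

lemma u0base_exp_neg (p ε0 K0 A d0 d1 s θ : ℝ) (χ0 : ℝ → ℝ) :
    u0base p ε0 K0 A (exp (-s)) d0 d1 χ0 θ =
      exp (s / (p - 1)) * (phi p (θ * exp (s / 2)) s * χ0 (8 * θ / ε0) +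
        modulation K0 A d0 d1 χ0 s (θ * exp (s / 2))) := by
  have hsqrt : θ / √(exp (-s)) = θ * exp (s / 2) := by
    rw [← exp_half, div_eq_mul_inv, ← exp_neg, neg_div, neg_neg]
  have hscale : exp (-s) ^ (-(1 / (p - 1))) = exp (s / (p - 1)) := by
    rw [← exp_mul, neg_mul_neg, mul_one_div]
  have hcutoff : 8 * (θ * exp (s / 2)) * exp (-s / 2) / ε0 = 8 * θ / ε0 := by
    rw [← mul_assoc, mul_assoc (8 * θ), ← exp_add, neg_div, add_neg_cancel, exp_zero, mul_one]
  simp only [u0base, modulation, log_exp, neg_neg, hsqrt, hscale, hcutoff]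

lemma Wsl_u0base (p ε0 K0 A d0 d1 s y : ℝ) (χ0 : ℝ → ℝ) :
    Wsl p (u0base p ε0 K0 A (exp (-s)) d0 d1 χ0) s y =
      phi p y s * χ0 (8 * (y * exp (-(s / 2))) / ε0) + modulation K0 A d0 d1 χ0 s y := by
  have hy : y * exp (-(s / 2)) * exp (s / 2) = y := by
    rw [mul_assoc, ← exp_add, neg_add_cancel, exp_zero, mul_one]
  rw [Wsl, u0base_exp_neg, hy, ← mul_assoc, ← exp_add, neg_add_cancel, exp_zero, one_mul]

lemma u0base_eq_zero (hχ0 : IsCutoff χ0) (hK0 : 0 < K0) (hs : 0 < s) (hε0 : 0 < ε0)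
    (hsep : 16 * K0 * √s ≤ ε0 * exp (s / 2)) (hθ : ε0 / 4 ≤ |θ|) :
    u0base p ε0 K0 A (exp (-s)) d0 d1 χ0 θ = 0 := by
  have hcutoff : χ0 (8 * θ / ε0) = 0 := by
    refine hχ0.apply_div_eq_zero hε0 ?_
    rw [abs_mul, abs_of_pos (by norm_num : (0 : ℝ) < 8)]
    linarith
  have hmod : modulation K0 A d0 d1 χ0 s (θ * exp (s / 2)) = 0 := by
    refine modulation_eq_zero hχ0 hK0 hs ?_
    rw [abs_mul, abs_of_pos (exp_pos _)]
    have hpos : 0 ≤ K0 * √s := by positivity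
    have hθs : ε0 / 4 * exp (s / 2) ≤ |θ| * exp (s / 2) := by gcongr
    linarith
  rw [u0base_exp_neg, hcutoff, hmod, mul_zero, add_zero, mul_zero]

lemma u0init_eq_zero (hχ0 : IsCutoff χ0) (hK0 : 0 < K0) (hs : 0 < s) (hε0 : 0 < ε0)
    (hsep : 16 * K0 * √s ≤ ε0 * exp (s / 2)) (hθ : ε0 / 4 ≤ |θ|) (hθπ : |θ| ≤ π) :
    u0init p ε0 K0 A (exp (-s)) d0 d1 χ0 θ = 0 := by
  obtain ⟨hl, hr⟩ := abs_le.1 hθπ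
  rcases hr.lt_or_eq with h | rfl
  · rw [u0init_eq_u0base ⟨hl, h⟩, u0base_eq_zero hχ0 hK0 hs hε0 hsep hθ]
  · rw [u0init_pi, u0base_eq_zero hχ0 hK0 hs hε0 hsep (by rwa [abs_neg])]

lemma abs_mul_exp_neg (x y : ℝ) : |y * exp (-x)| = |y| / exp x := by
  rw [abs_mul, abs_of_pos (exp_pos _), exp_neg, div_eq_mul_inv]

lemma wsl_u0init (hχ0 : IsCutoff χ0) (hK0 : 0 < K0) (hs : 0 < s) (hε0 : ε0 ∈ Ioc 0 (4 * π))
    (hsep : 16 * K0 * √s ≤ ε0 * exp (s / 2)) (y : ℝ) :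
    wsl p ε0 χ0 (u0init p ε0 K0 A (exp (-s)) d0 d1 χ0) s y =
      phi p y s * χ0 (8 * (y * exp (-(s / 2))) / ε0) + modulation K0 A d0 d1 χ0 s y := by
  obtain ⟨hε, hεπ⟩ := hε0
  have hπ : |y| ≤ π * exp (s / 2) ↔ |y * exp (-(s / 2))| ≤ π := by
    rw [abs_mul_exp_neg, div_le_iff₀ (exp_pos _)]
  rw [← Wsl_u0base]
  simp only [wsl, Wsl, hπ]
  generalize y * exp (-(s / 2)) = θ
  rcases lt_or_ge |θ| (ε0 / 4) with h | h
  · have hθπ : |θ| < π := by linarith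
    rw [if_pos hθπ.le, hχ0.apply_div_eq_one hε (by linarith), mul_one,
      u0init_eq_u0base ⟨(abs_lt.1 hθπ).1.le, (abs_lt.1 hθπ).2⟩]
  · rw [u0base_eq_zero hχ0 hK0 hs hε hsep h, mul_zero]
    split_ifs with hθπ
    · rw [u0init_eq_zero hχ0 hK0 hs hε hsep h hθπ, mul_zero, zero_mul]
    · rfl

lemma IsCutoff.apply_truncation_eq_one (hχ0 : IsCutoff χ0) (hε0 : 0 < ε0) {y : ℝ}
    (hy : |y| ≤ ε0 / 8 * exp (s / 2)) : χ0 (8 * (y * exp (-(s / 2))) / ε0) = 1 := by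
  refine hχ0.apply_div_eq_one hε0 ?_
  rw [abs_mul, abs_of_pos (by norm_num : (0 : ℝ) < 8), abs_mul_exp_neg, ← mul_div_assoc,
    div_le_iff₀ (exp_pos _)]
  linarith

lemma chi1_mul_truncation_error (hχ0 : IsCutoff χ0) (hK0 : 0 < K0) (hs : 0 < s) (hε0 : 0 < ε0)
    (hsep : 16 * K0 * √s ≤ ε0 * exp (s / 2)) (y : ℝ) :
    chi1 K0 χ0 y s * (1 - χ0 (8 * (y * exp (-(s / 2))) / ε0)) = 0 := by
  rcases le_total (2 * (K0 * √s)) |y| with h | h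
  · rw [chi1_eq_zero hχ0 hK0 hs h, zero_mul]
  · rw [hχ0.apply_truncation_eq_one hε0 (by linarith), sub_self, mul_zero]

lemma chi1_mul_qsl_u0init (hχ0 : IsCutoff χ0) (hK0 : 0 < K0) (hs : 0 < s)
    (hε0 : ε0 ∈ Ioc 0 (4 * π)) (hsep : 16 * K0 * √s ≤ ε0 * exp (s / 2)) (y : ℝ) :
    chi1 K0 χ0 y s * qsl p ε0 χ0 (u0init p ε0 K0 A (exp (-s)) d0 d1 χ0) s y =
      modulation K0 A d0 d1 χ0 s y := by
  rw [qsl, wsl_u0init hχ0 hK0 hs hε0 hsep]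
  linear_combination chi1_mul_modulation hχ0 hK0 hs (A := A) (d0 := d0) (d1 := d1) (y := y) -
    phi p y s * chi1_mul_truncation_error hχ0 hK0 hs hε0.1 hsep y

lemma qe_u0init (hχ0 : IsCutoff χ0) (hK0 : 0 < K0) (hs : 0 < s) (hε0 : ε0 ∈ Ioc 0 (4 * π))
    (hsep : 16 * K0 * √s ≤ ε0 * exp (s / 2)) (y : ℝ) :
    qe p ε0 K0 χ0 (u0init p ε0 K0 A (exp (-s)) d0 d1 χ0) s y =
      -(phi p y s * (1 - χ0 (8 * (y * exp (-(s / 2))) / ε0))) := by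
  rw [qe, sub_mul, chi1_mul_qsl_u0init hχ0 hK0 hs hε0 hsep, qsl, wsl_u0init hχ0 hK0 hs hε0 hsep]
  ring

lemma abs_qe_u0init_le (hp : 1 < p) (hχ0 : IsCutoff χ0) (hK0 : 0 < K0) (hs : 0 < s)
    (hε0 : ε0 ∈ Ioc 0 (4 * π)) (hsep : 16 * K0 * √s ≤ ε0 * exp (s / 2)) {r : ℝ} (hr : 0 ≤ r)
    (hφ : ∀ y, ε0 / 8 * exp (s / 2) ≤ |y| → phi p y s ≤ r) (y : ℝ) :
    |qe p ε0 K0 χ0 (u0init p ε0 K0 A (exp (-s)) d0 d1 χ0) s y| ≤ r := by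
  rw [qe_u0init hχ0 hK0 hs hε0 hsep, abs_neg]
  rcases le_total (ε0 / 8 * exp (s / 2)) |y| with h | h
  · have hφ₀ := phi_nonneg hp hs.le y
    rw [abs_of_nonneg (mul_nonneg hφ₀ (sub_nonneg.2 hχ0.le_one))]
    exact (mul_le_of_le_one_right hφ₀ (sub_le_self _ hχ0.nonneg)).trans (hφ y h)
  · rwa [hχ0.apply_truncation_eq_one hε0.1 h, sub_self, mul_zero, abs_zero]

lemma inS_u0init (hp : 1 < p) (hχ0 : IsCutoff χ0) (hK0 : 0 < K0) (hs : 0 < s)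
    (hε0 : ε0 ∈ Ioc 0 (4 * π)) (hsep : 16 * K0 * √s ≤ ε0 * exp (s / 2)) (hA : 0 ≤ A)
    (hlog : 1 ≤ A * log s) (hφ : ∀ y, ε0 / 8 * exp (s / 2) ≤ |y| → phi p y s ≤ A / √s)
    (hd0 : |d0| ≤ boxRadius) (hd1 : |d1| ≤ boxRadius) {η0 : ℝ} (hη0 : 0 ≤ η0) :
    inS p ε0 K0 A η0 (exp (-s)) χ0 (fun θ _ => u0init p ε0 K0 A (exp (-s)) d0 d1 χ0 θ) 0 := by
  refine ⟨?_, fun θ hθ hθπ => ?_⟩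
  · rw [sub_zero, log_exp, neg_neg]
    refine inV_of_abs_le hA hlog (fun y => ?_)
      (abs_qe_u0init_le hp hχ0 hK0 hs hε0 hsep (by positivity) hφ)
    rw [chi1_mul_qsl_u0init hχ0 hK0 hs hε0 hsep]
    exact abs_modulation_le hχ0 hA hd0 hd1
  · beta_reduce
    rwa [u0init_eq_zero hχ0 hK0 hs hε0.1 hsep (by linarith [hε0.1]) hθπ, abs_zero]

end InitialData

theorem initial_data_in_S_general {p : ℝ} (hp : 1 < p) {χ0 : ℝ → ℝ} (hχ0 : IsCutoff χ0)
    {K0 ε0 A : ℝ} (hK0 : 0 < K0) (hε0 : ε0 ∈ Ioc 0 (4 * π)) (hA : 0 < A) :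
    ∃ s01 ≥ (0 : ℝ), ∀ T, 0 < T → s01 ≤ -log T → ∀ η0, 0 ≤ η0 →
      ∀ d0 ∈ Icc (-boxRadius) boxRadius, ∀ d1 ∈ Icc (-boxRadius) boxRadius,
        inS p ε0 K0 A η0 T χ0 (fun θ _ => u0init p ε0 K0 A T d0 d1 χ0 θ) 0 := by
  have hlarge : ∀ᶠ s in atTop, 0 < s ∧ 1 ≤ A * log s ∧ 16 * K0 * √s ≤ ε0 * exp (s / 2) ∧
      ∀ y, ε0 / 8 * exp (s / 2) ≤ |y| → phi p y s ≤ A / √s :=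
    (eventually_gt_atTop 0).and <|
      ((tendsto_log_atTop.const_mul_atTop hA).eventually_ge_atTop 1).and <|
        (eventually_mul_sqrt_le_exp _ hε0.1).and
          (eventually_phi_le hp (div_pos hε0.1 (by norm_num)) hA)
  obtain ⟨s01, hs01⟩ := eventually_atTop.1 hlarge
  refine ⟨max 0 s01, le_max_left _ _, fun T hT hsT η0 hη0 d0 hd0 d1 hd1 => ?_⟩
  obtain ⟨s, rfl⟩ : ∃ s, T = exp (-s) := ⟨-log T, by rw [neg_neg, exp_log hT]⟩
  rw [log_exp, neg_neg] at hsT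
  obtain ⟨hs, hlog, hsep, hφ⟩ := hs01 s ((le_max_right _ _).trans hsT)
  exact inS_u0init hp hχ0 hK0 hs hε0 hsep hA.le hlog hφ (abs_le.2 hd0) (abs_le.2 hd1) hη0

/-- Choice of the parameters `(d0,d1)` so that the initial data belong to `S*(0)`. -/
theorem initial_data_in_S (p : ℝ) (hp : 1 < p) (χ0 : ℝ → ℝ) (hχ0 : IsCutoff χ0) :
    ∃ K02 > (0:ℝ), ∀ K0 ≥ K02, ∃ ε0 > (0:ℝ), ∃ A ≥ (1:ℝ), ∃ s01 ≥ (0:ℝ),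
    ∀ T, 0 < T → s01 ≤ -Real.log T → ∀ η0, 0 < η0 → η0 ≤ 1 →
    ∃ a b c d : ℝ, a ≤ b ∧ c ≤ d ∧
      (Set.Icc a b ×ˢ Set.Icc c d : Set (ℝ × ℝ)) ⊆ Set.Icc (-2) 2 ×ˢ Set.Icc (-2) 2 ∧
      ∀ d0 d1 : ℝ, (d0, d1) ∈ (Set.Icc a b ×ˢ Set.Icc c d : Set (ℝ × ℝ)) →
        inS p ε0 K0 A η0 T χ0 (fun θ _ => u0init p ε0 K0 A T d0 d1 χ0 θ) 0 := by
  refine ⟨1, one_pos, fun K0 hK0 => ⟨1, one_pos, 1, le_rfl, ?_⟩⟩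
  obtain ⟨s01, hs01, hS⟩ := initial_data_in_S_general hp hχ0 (one_pos.trans_le hK0)
    (ε0 := 1) ⟨one_pos, by linarith [pi_gt_three]⟩ one_pos
  have hbox : Icc (-boxRadius) boxRadius ⊆ Icc (-2) 2 :=
    Icc_subset_Icc (neg_le_neg boxRadius_le_two) boxRadius_le_two
  have hle : -boxRadius ≤ boxRadius := neg_le_self boxRadius_pos.le
  exact ⟨s01, hs01, fun T hT hsT η0 hη0 _ =>
    ⟨-boxRadius, boxRadius, -boxRadius, boxRadius, hle, hle, prod_mono hbox hbox,
      fun d0 d1 hd => hS T hT hsT η0 hη0.le d0 hd.1 d1 hd.2⟩⟩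

end
end

section
/- For each integer m≥0 there exists a constant C_m>0 such that for every ρ̃>0 and every y∈ℝ: ∫_ℝ e^{ρ̃𝓛}(y,x)(1+|x|^m) dx ≤ C_m e^{ρ̃}(1+|y|^m). -/
/-
With `r = ρ̃`, the kernel `e^{ρ̃𝓛}(y, ·)` is `e^r` times the density of a Gaussian random variable
with mean `y e^{-r/2}` and variance `2 (1 - e^{-r})`. Such a variable can be written as
`y e^{-r/2} + √(2 (1 - e^{-r})) Z` with `Z` standard normal; the mean is at most `|y|` in absolute
value and the variance at most `2`, so its `m`-th absolute moment is at most
`2^{m-1} (|y|^m + √2^m E|Z|^m)`, uniformly in `r`.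
-/

noncomputable section

open Real MeasureTheory

/-- The Mehler kernel `e^{ρ̃𝓛}(y,x)` of the operator `𝓛 = ∂_y² − (y/2)∂_y + 1`. -/
def mehler (r y x : ℝ) : ℝ :=
  Real.exp r / Real.sqrt (4*π*(1 - Real.exp (-r))) *
    Real.exp (-((y * Real.exp (-(r/2)) - x)^2 / (4*(1 - Real.exp (-r)))))

open ProbabilityTheory
open scoped NNReal

lemma integral_norm_add_pow_le {α E : Type*} [MeasurableSpace α] [SeminormedAddCommGroup E]
    {μ : Measure α} {f g : α → E} (m : ℕ) (hf : Integrable (fun x ↦ ‖f x‖ ^ m) μ)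
    (hg : Integrable (fun x ↦ ‖g x‖ ^ m) μ) :
    ∫ x, ‖f x + g x‖ ^ m ∂μ ≤ 2 ^ (m - 1) * (∫ x, ‖f x‖ ^ m ∂μ + ∫ x, ‖g x‖ ^ m ∂μ) := by
  rw [← integral_add hf hg, ← integral_const_mul]
  refine integral_mono_of_nonneg (.of_forall fun x ↦ by positivity)
    ((hf.add hg).const_mul _) (.of_forall fun x ↦ ?_)
  calc ‖f x + g x‖ ^ m ≤ (‖f x‖ + ‖g x‖) ^ m := by gcongr; exact norm_add_le _ _
    _ ≤ 2 ^ (m - 1) * (‖f x‖ ^ m + ‖g x‖ ^ m) := add_pow_le (norm_nonneg _) (norm_nonneg _) m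

lemma integrable_abs_pow_gaussianReal (μ : ℝ) (v : ℝ≥0) (m : ℕ) :
    Integrable (fun x ↦ |x| ^ m) (gaussianReal μ v) :=
  (memLp_id_gaussianReal (m : ℝ≥0)).integrable_norm_pow'

lemma gaussianReal_eq_map_standard (μ : ℝ) (v : ℝ≥0) :
    gaussianReal μ v = (gaussianReal 0 1).map (fun z ↦ μ + √v * z) := by
  have hcomp : (fun z ↦ μ + √v * z) = (μ + ·) ∘ (√v * ·) := rfl
  rw [hcomp, ← Measure.map_map (by fun_prop) (by fun_prop), gaussianReal_map_const_mul,
    gaussianReal_map_const_add]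
  congr 1
  · simp
  · ext
    simp

lemma integral_abs_pow_gaussianReal_le (μ : ℝ) (v : ℝ≥0) (m : ℕ) :
    ∫ x, |x| ^ m ∂gaussianReal μ v ≤
      2 ^ (m - 1) * (|μ| ^ m + √v ^ m * ∫ z, |z| ^ m ∂gaussianReal 0 1) := by
  have habs (z : ℝ) : |√v * z| ^ m = √v ^ m * |z| ^ m := by
    rw [abs_mul, abs_of_nonneg (sqrt_nonneg _), mul_pow]
  have hint : Integrable (fun z ↦ |√v * z| ^ m) (gaussianReal 0 1) := by
    simpa only [habs] using (integrable_abs_pow_gaussianReal 0 1 m).const_mul (√v ^ m)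
  calc ∫ x, |x| ^ m ∂gaussianReal μ v
      = ∫ z, |μ + √v * z| ^ m ∂gaussianReal 0 1 := by
        rw [gaussianReal_eq_map_standard, integral_map (by fun_prop) (by fun_prop)]
    _ ≤ 2 ^ (m - 1) *
          (∫ _, |μ| ^ m ∂gaussianReal 0 1 + ∫ z, |√v * z| ^ m ∂gaussianReal 0 1) :=
        integral_norm_add_pow_le (f := fun _ ↦ μ) m (integrable_const _) hint
    _ = 2 ^ (m - 1) * (|μ| ^ m + √v ^ m * ∫ z, |z| ^ m ∂gaussianReal 0 1) := by
        simp only [habs, integral_const_mul, integral_const, probReal_univ, one_smul]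

/-- The variance `2 (1 - e^{-r})` of the Gaussian whose density is proportional to `mehler r y`.
The truncation at `0` is only effective for `r < 0`, where the kernel is not meaningful. -/
def mehlerVariance (r : ℝ) : ℝ≥0 := (2 * (1 - exp (-r))).toNNReal

lemma mehlerVariance_le_two (r : ℝ) : mehlerVariance r ≤ 2 := by
  rw [mehlerVariance, toNNReal_le_iff_le_coe, NNReal.coe_ofNat]
  linarith [exp_pos (-r)]

section Mehler

variable {r : ℝ}

lemma mehlerVariance_pos (hr : 0 < r) : 0 < mehlerVariance r := by
  have : exp (-r) < 1 := exp_lt_one_iff.2 (by linarith)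
  exact toNNReal_pos.2 (by linarith)

lemma mehler_eq_exp_mul_gaussianPDFReal (hr : 0 < r) (y x : ℝ) :
    mehler r y x = exp r * gaussianPDFReal (y * exp (-(r / 2))) (mehlerVariance r) x := by
  have hcoe : (mehlerVariance r : ℝ) = 2 * (1 - exp (-r)) :=
    coe_toNNReal _ (toNNReal_pos.1 (mehlerVariance_pos hr)).le
  rw [mehler, gaussianPDFReal, hcoe, div_eq_mul_inv, mul_assoc]
  ring_nf

lemma integral_mehler_smul {E : Type*} [NormedAddCommGroup E] [NormedSpace ℝ E]
    (hr : 0 < r) (y : ℝ) (f : ℝ → E) :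
    ∫ x, mehler r y x • f x =
      exp r • ∫ x, f x ∂gaussianReal (y * exp (-(r / 2))) (mehlerVariance r) := by
  simp only [mehler_eq_exp_mul_gaussianPDFReal hr, mul_smul, integral_smul,
    integral_gaussianReal_eq_integral_smul (mehlerVariance_pos hr).ne']

lemma integral_mehler_mul_one_add_abs_pow_le (hr : 0 < r) (y : ℝ) (m : ℕ) :
    ∫ x, mehler r y x * (1 + |x| ^ m) ≤
      exp r * (1 + 2 ^ (m - 1) * (|y| ^ m + √2 ^ m * ∫ z, |z| ^ m ∂gaussianReal 0 1)) := by
  have hmean : |y * exp (-(r / 2))| ≤ |y| := by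
    rw [abs_mul, abs_exp]
    exact mul_le_of_le_one_right (abs_nonneg y) (exp_le_one_iff.2 (by linarith))
  have hvar : (mehlerVariance r : ℝ) ≤ 2 := mod_cast mehlerVariance_le_two r
  have hmoment := integral_abs_pow_gaussianReal_le (y * exp (-(r / 2))) (mehlerVariance r) m
  simp only [← smul_eq_mul (mehler r y _), integral_mehler_smul hr]
  rw [smul_eq_mul, integral_add (integrable_const _) (integrable_abs_pow_gaussianReal _ _ m),
    integral_const, probReal_univ, one_smul]
  gcongr
  exact hmoment.trans (by gcongr)

end Mehler

/-- Moment bound for the Mehler kernel: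
`∫ e^{ρ̃𝓛}(y,x)(1+|x|^m) dx ≤ C_m e^{ρ̃}(1+|y|^m)`. -/
theorem mehler_moment_bound (m : ℕ) :
    ∃ C > (0:ℝ), ∀ r > (0:ℝ), ∀ y : ℝ,
      (∫ x : ℝ, mehler r y x * (1 + |x|^m)) ≤ C * Real.exp r * (1 + |y|^m) := by
  set K : ℝ := √2 ^ m * ∫ z, |z| ^ m ∂gaussianReal 0 1
  have : 0 ≤ K := by positivity
  refine ⟨1 + 2 ^ (m - 1) * (1 + K), by positivity, fun r hr y ↦ ?_⟩
  calc ∫ x, mehler r y x * (1 + |x| ^ m)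
      ≤ exp r * (1 + 2 ^ (m - 1) * (|y| ^ m + K)) := integral_mehler_mul_one_add_abs_pow_le hr y m
    _ ≤ exp r * ((1 + 2 ^ (m - 1) * (1 + K)) * (1 + |y| ^ m)) := by
        have hslack : 0 ≤ |y| ^ m + 2 ^ (m - 1) * (1 + K * |y| ^ m) := by positivity
        gcongr
        linarith
    _ = (1 + 2 ^ (m - 1) * (1 + K)) * exp r * (1 + |y| ^ m) := by ring

end
end

section
/- Let p>1. For every C0>0 there exists η0>0 such that: if T∈ℝ, a∈ℝ, r>0, and v is a classical solution of the differential inequality |∂_t v − ∂_x² v| ≤ C0(1+|v|^p) on B(a,r)×[T−r²,T) satisfying |v(x,t)| ≤ η0 (T−t)^{−1/(p−1)} for all (x,t)∈B(a,r)×[T−r²,T), then v does not blow up at (a,T), i.e. v is bounded on B(a,r')×[T−r'²,T) for some 0<r'<r. -/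
noncomputable section

open Real Set Metric
open Filter Function Topology

/-!
On a region where `|v| ≤ E (T - t) ^ (-1/(p-1))`, the nonlinearity `C |v| ^ p` is at most
`κ (T - t)⁻¹ |v|` with `κ = C E ^ (p-1)`. The integrating factor `(T - t) ^ κ` absorbs it, so that
`± v (T - t) ^ κ` satisfies a linear heat inequality wherever it is positive. Barriers that blow up
only at the two endpoints of a spatial interval at time `T` then improve the growth rate of `v`
inside the interval from `(T - t) ^ (-1/(p-1))` to `(T - t) ^ (-κ)`. If `κ (p-1) < 1`, the potential
`|v| ^ (p-1)` has become integrable in time: the next integrating factor is bounded above and below,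
and the same argument gives boundedness.

The maximum principle needs `v` to be jointly continuous, whereas a classical solution is only
assumed regular in space and in time separately. For a solution that is locally bounded, suppose
that the closed set where local continuity fails is nonempty. By Baire category, on a relatively
open part of it `v` is Lipschitz along both coordinate axes, with a uniform constant. These
estimates control `v` on the columns that meet this part, and between neighbouring columns the
maximum principle applies, a heat kernel concentrated at the exceptional point compensating for
the missing continuity there. So `v` is continuous at the points of this part, a contradiction.
-/

/-! ### The heat operator at a point -/

/-- `∂ₜu − ∂ₓ²u = f` at `(x, t)`, for a function `u` that is `C²` in space near `x` at time `t` and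
differentiable in time at `(x, t)`. No joint regularity of `u` is required. -/
structure HasHeatOpAt (u : ℝ → ℝ → ℝ) (f x t : ℝ) : Prop where
  contDiffAt : ContDiffAt ℝ 2 (fun y => u y t) x
  hasDerivAt : HasDerivAt (fun s => u x s) (f + iteratedDeriv 2 (fun y => u y t) x) t

/-- `∂ₜu − ∂ₓ²u ≤ C` at `(x, t)`. -/
def HeatSubsolutionAt (u : ℝ → ℝ → ℝ) (C x t : ℝ) : Prop :=
  ∃ f ≤ C, HasHeatOpAt u f x t

section HeatOperator

variable {u v : ℝ → ℝ → ℝ} {f g x t : ℝ}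

theorem HasHeatOpAt.of_hasDerivAt {u' : ℝ → ℝ} {u'' ut : ℝ}
    (hu : ContDiffAt ℝ 2 (fun y => u y t) x)
    (hu' : ∀ᶠ y in 𝓝 x, HasDerivAt (fun y => u y t) (u' y) y) (hu'' : HasDerivAt u' u'' x)
    (hut : HasDerivAt (fun s => u x s) ut t) : HasHeatOpAt u (ut - u'') x t where
  contDiffAt := hu
  hasDerivAt := by
    have hderiv : deriv (fun y => u y t) =ᶠ[𝓝 x] u' := hu'.mono fun y hy => hy.deriv
    rwa [iteratedDeriv_succ, iteratedDeriv_one, hderiv.deriv_eq, hu''.deriv, sub_add_cancel]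

theorem HasHeatOpAt.congr_op (hu : HasHeatOpAt u f x t) (hfg : f = g) : HasHeatOpAt u g x t :=
  hfg ▸ hu

theorem HasHeatOpAt.add (hu : HasHeatOpAt u f x t) (hv : HasHeatOpAt v g x t) :
    HasHeatOpAt (fun y s => u y s + v y s) (f + g) x t where
  contDiffAt := hu.contDiffAt.add hv.contDiffAt
  hasDerivAt := by
    refine (hu.hasDerivAt.add hv.hasDerivAt).congr_deriv ?_
    rw [iteratedDeriv_fun_add hu.contDiffAt hv.contDiffAt]
    ring

theorem HasHeatOpAt.mul_time {μ : ℝ → ℝ} {μ' : ℝ} (hu : HasHeatOpAt u f x t)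
    (hμ : HasDerivAt μ μ' t) :
    HasHeatOpAt (fun y s => u y s * μ s) (f * μ t + u x t * μ') x t where
  contDiffAt := hu.contDiffAt.mul contDiffAt_const
  hasDerivAt := by
    refine (hu.hasDerivAt.mul hμ).congr_deriv ?_
    rw [iteratedDeriv_mul_const_field]
    ring

theorem HasHeatOpAt.const_mul (c : ℝ) (hu : HasHeatOpAt u f x t) :
    HasHeatOpAt (fun y s => c * u y s) (c * f) x t := by
  simpa only [mul_comm c, mul_zero, add_zero] using hu.mul_time (hasDerivAt_const t c)

theorem HasHeatOpAt.neg (hu : HasHeatOpAt u f x t) :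
    HasHeatOpAt (fun y s => -u y s) (-f) x t := by
  simpa only [neg_one_mul] using hu.const_mul (-1)

theorem HasHeatOpAt.sub (hu : HasHeatOpAt u f x t) (hv : HasHeatOpAt v g x t) :
    HasHeatOpAt (fun y s => u y s - v y s) (f - g) x t := by
  simpa only [sub_eq_add_neg] using hu.add hv.neg

theorem HasHeatOpAt.comp_sub_const (a b : ℝ) (hu : HasHeatOpAt u f (x - a) (t - b)) :
    HasHeatOpAt (fun y s => u (y - a) (s - b)) f x t where
  contDiffAt := hu.contDiffAt.comp x (contDiffAt_id.sub contDiffAt_const)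
  hasDerivAt := by
    rw [iteratedDeriv_comp_sub_const 2 (fun y => u y (t - b)) a]
    exact hu.hasDerivAt.comp_sub_const t b

theorem hasHeatOpAt_of_time {μ : ℝ → ℝ} {μ' : ℝ} (hμ : HasDerivAt μ μ' t) :
    HasHeatOpAt (fun _ s => μ s) μ' x t := by
  simpa using HasHeatOpAt.of_hasDerivAt (u' := fun _ => 0) (u := fun _ s => μ s)
    contDiffAt_const (.of_forall fun y => hasDerivAt_const y (μ t)) (hasDerivAt_const x 0) hμ

theorem hasHeatOpAt_const (c : ℝ) : HasHeatOpAt (fun _ _ => c) 0 x t :=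
  hasHeatOpAt_of_time (hasDerivAt_const t c)

theorem hasHeatOpAt_mul_sub_time (c t₀ : ℝ) : HasHeatOpAt (fun _ s => c * (s - t₀)) c x t :=
  hasHeatOpAt_of_time (by simpa using ((hasDerivAt_id t).sub_const t₀).const_mul c)

theorem hasHeatOpAt_abs_sub {x₀ : ℝ} (hx : x ≠ x₀) :
    HasHeatOpAt (fun y _ => |y - x₀|) 0 x t := by
  have hx' : x - x₀ ≠ 0 := sub_ne_zero.2 hx
  refine HasHeatOpAt.comp_sub_const (u := fun y _ => |y|) x₀ 0 ?_
  have hsign : ∀ᶠ y in 𝓝 (x - x₀), SignType.sign y = SignType.sign (x - x₀) := by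
    rcases hx'.lt_or_gt with h | h
    · filter_upwards [Iio_mem_nhds h] with y hy
      rw [sign_neg hy, sign_neg h]
    · filter_upwards [Ioi_mem_nhds h] with y hy
      rw [sign_pos hy, sign_pos h]
  have hderiv : ∀ᶠ y in 𝓝 (x - x₀),
      HasDerivAt (fun y : ℝ => |y|) (SignType.sign (x - x₀) : ℝ) y := by
    filter_upwards [hsign, eventually_ne_nhds hx'] with y hy hy0
    rw [← hy]
    exact hasDerivAt_abs hy0
  simpa using HasHeatOpAt.of_hasDerivAt (u := fun y _ => |y|)
    (contDiffAt_abs hx') hderiv (hasDerivAt_const _ _) (hasDerivAt_const (t - 0) |x - x₀|)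

theorem HeatSubsolutionAt.sub {C : ℝ} (hu : HeatSubsolutionAt u C x t)
    (hv : HasHeatOpAt v g x t) : HeatSubsolutionAt (fun y s => u y s - v y s) (C - g) x t := by
  obtain ⟨f, hf, hu⟩ := hu
  exact ⟨f - g, sub_le_sub_right hf g, hu.sub hv⟩

theorem HeatSubsolutionAt.mono {C C' : ℝ} (hu : HeatSubsolutionAt u C x t) (hC : C ≤ C') :
    HeatSubsolutionAt u C' x t := by
  obtain ⟨f, hf, hu⟩ := hu
  exact ⟨f, hf.trans hC, hu⟩

theorem nonneg_of_hasDerivAt_of_eventually_le_left {φ : ℝ → ℝ} {φ' : ℝ} (hφ : HasDerivAt φ φ' t)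
    (hmax : ∀ᶠ s in 𝓝[<] t, φ s ≤ φ t) : 0 ≤ φ' := by
  refine ge_of_tendsto (hasDerivAt_iff_tendsto_slope_left_right.1 hφ).1 ?_
  filter_upwards [hmax, self_mem_nhdsWithin] with s hs hst
  rw [slope_def_field]
  exact div_nonneg_of_nonpos (sub_nonpos.2 hs) (sub_nonpos.2 (le_of_lt hst))

theorem iteratedDeriv_two_nonpos_of_isLocalMax {φ : ℝ → ℝ} (hmax : IsLocalMax φ x)
    (hφ : ContinuousAt φ x) : iteratedDeriv 2 φ x ≤ 0 := by
  rw [iteratedDeriv_succ, iteratedDeriv_one]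
  by_contra! hpos
  have hmin := isLocalMin_of_deriv_deriv_pos hpos hmax.deriv_eq_zero hφ
  have hconst : φ =ᶠ[𝓝 x] fun _ => φ x := by
    filter_upwards [hmax, hmin] with y hle hge using le_antisymm hle hge
  have hzero : deriv (deriv φ) x = 0 := by
    rw [hconst.deriv.deriv_eq]
    simp only [deriv_const', deriv_const]
  exact hpos.ne' hzero

theorem HasHeatOpAt.nonneg_of_isLocalMax (hu : HasHeatOpAt u f x t)
    (hspace : IsLocalMax (fun y => u y t) x) (htime : ∀ᶠ s in 𝓝[<] t, u x s ≤ u x t) :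
    0 ≤ f := by
  have h_time := nonneg_of_hasDerivAt_of_eventually_le_left hu.hasDerivAt htime
  have h_space := iteratedDeriv_two_nonpos_of_isLocalMax hspace hu.contDiffAt.continuousAt
  linarith

end HeatOperator

/-! ### Maximum principles -/

/-- The bottom and the two lateral sides of the rectangle `[x₁, x₂] × [t₁, t₂]`, with time as the
second coordinate. -/
def parabolicBoundary (x₁ x₂ t₁ t₂ : ℝ) : Set (ℝ × ℝ) :=
  Icc x₁ x₂ ×ˢ {t₁} ∪ {x₁, x₂} ×ˢ Icc t₁ t₂

section MaximumPrinciple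

variable {w : ℝ → ℝ → ℝ} {x₁ x₂ t₁ t₂ x t : ℝ}

theorem parabolicBoundary_subset (hx : x₁ ≤ x₂) (ht : t₁ ≤ t₂) :
    parabolicBoundary x₁ x₂ t₁ t₂ ⊆ Icc x₁ x₂ ×ˢ Icc t₁ t₂ :=
  union_subset (prod_mono_right (singleton_subset_iff.2 (left_mem_Icc.2 ht)))
    (prod_mono_left (pair_subset (left_mem_Icc.2 hx) (right_mem_Icc.2 hx)))

theorem mem_Ioo_Ioc_of_notMem_parabolicBoundary (hx : x ∈ Icc x₁ x₂) (ht : t ∈ Icc t₁ t₂)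
    (h : (x, t) ∉ parabolicBoundary x₁ x₂ t₁ t₂) : x ∈ Ioo x₁ x₂ ∧ t ∈ Ioc t₁ t₂ := by
  simp only [parabolicBoundary, mem_union, mem_prod, mem_insert_iff, mem_singleton_iff, hx, ht,
    true_and, and_true, not_or] at h
  exact ⟨⟨hx.1.lt_of_ne' h.2.1, hx.2.lt_of_ne h.2.2⟩, ht.1.lt_of_ne' h.1, ht.2⟩

theorem nonpos_of_heatSubsolutionAt {K : Set (ℝ × ℝ)} (hK : IsCompact K)
    (hcont : ContinuousOn (uncurry w) K)
    (hoff : ∀ x ∈ Icc x₁ x₂, ∀ t ∈ Icc t₁ t₂, (x, t) ∉ K → w x t ≤ 0)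
    (hbdry : ∀ x t, (x, t) ∈ parabolicBoundary x₁ x₂ t₁ t₂ → w x t ≤ 0)
    (hsub : ∀ x ∈ Ioo x₁ x₂, ∀ t ∈ Ioc t₁ t₂, 0 < w x t → HeatSubsolutionAt w 0 x t) :
    ∀ x ∈ Icc x₁ x₂, ∀ t ∈ Icc t₁ t₂, w x t ≤ 0 := by
  intro x hx t ht
  by_contra! hpos
  obtain ⟨ε, hε, hεpos⟩ : ∃ ε > 0, 0 < w x t - ε * (t - t₁) := by
    have hlim : Tendsto (fun ε => w x t - ε * (t - t₁)) (𝓝[>] 0) (𝓝 (w x t)) :=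
      tendsto_nhdsWithin_of_tendsto_nhds (Continuous.tendsto' (by fun_prop) _ _ (by simp))
    exact ((eventually_mem_nhdsWithin).and (hlim.eventually (lt_mem_nhds hpos))).exists
  set R : Set (ℝ × ℝ) := Icc x₁ x₂ ×ˢ Icc t₁ t₂
  have hR : IsClosed R := isClosed_Icc.prod isClosed_Icc
  have hxK : (x, t) ∈ K := not_imp_comm.1 (hoff x hx t ht) hpos.not_ge
  have hcont' : ContinuousOn (fun q : ℝ × ℝ => w q.1 q.2 - ε * (q.2 - t₁)) (K ∩ R) :=
    (hcont.mono inter_subset_left).sub (by fun_prop)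
  obtain ⟨⟨y, s⟩, ⟨-, hy, hs⟩, hmaxK⟩ :=
    (hK.inter_right hR).exists_isMaxOn ⟨(x, t), hxK, hx, ht⟩ hcont'
  have hyspos : 0 < w y s - ε * (s - t₁) := hεpos.trans_le (hmaxK ⟨hxK, hx, ht⟩)
  have hmax : ∀ z ∈ Icc x₁ x₂, ∀ r ∈ Icc t₁ t₂,
      w z r - ε * (r - t₁) ≤ w y s - ε * (s - t₁) := by
    intro z hz r hr
    by_cases hzK : (z, r) ∈ K
    · exact hmaxK ⟨hzK, hz, hr⟩
    · nlinarith [hoff z hz r hr hzK, hr.1]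
  have hwpos : 0 < w y s := by nlinarith [hs.1]
  obtain ⟨hyI, hsI⟩ := mem_Ioo_Ioc_of_notMem_parabolicBoundary hy hs
    fun hmem => (hbdry y s hmem).not_gt hwpos
  obtain ⟨f, hf, hheat⟩ := (hsub y hyI s hsI hwpos).sub (hasHeatOpAt_mul_sub_time ε t₁)
  have hf_nonneg : 0 ≤ f := by
    refine hheat.nonneg_of_isLocalMax ?_ ?_
    · filter_upwards [Icc_mem_nhds hyI.1 hyI.2] with z hz using hmax z hz s hs
    · filter_upwards [Ioo_mem_nhdsLT hsI.1] with r hr using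
        hmax y hy r ⟨hr.1.le, hr.2.le.trans hs.2⟩
  linarith

end MaximumPrinciple

section HeatKernel

/-- The fundamental solution of the one-dimensional heat equation without the factor `1 / √(4π)`. -/
def heatKernel (y τ : ℝ) : ℝ :=
  exp (-y ^ 2 / (4 * τ)) / √τ

theorem heatKernel_nonneg (y τ : ℝ) : 0 ≤ heatKernel y τ :=
  div_nonneg (exp_pos _).le (sqrt_nonneg τ)

theorem heatKernel_zero_left (τ : ℝ) : heatKernel 0 τ = 1 / √τ := by
  simp [heatKernel]

theorem heatKernel_le {y τ : ℝ} (hτ : 0 ≤ τ) : heatKernel y τ ≤ 1 / √τ := by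
  have hexp : -y ^ 2 / (4 * τ) ≤ 0 :=
    div_nonpos_of_nonpos_of_nonneg (neg_nonpos.2 (sq_nonneg y)) (by positivity)
  exact div_le_div_of_nonneg_right (exp_le_one_iff.2 hexp) (sqrt_nonneg τ)

theorem continuousOn_heatKernel : ContinuousOn (uncurry heatKernel) {q | 0 < q.2} := by
  have h4 : ∀ q ∈ {q : ℝ × ℝ | 0 < q.2}, 4 * q.2 ≠ 0 := fun q hq => (mul_pos four_pos hq).ne'
  have hsqrt : ∀ q ∈ {q : ℝ × ℝ | 0 < q.2}, √q.2 ≠ 0 := fun q hq => (sqrt_pos.2 hq).ne'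
  unfold Function.uncurry heatKernel
  fun_prop (disch := assumption)

theorem hasHeatOpAt_heatKernel {y τ : ℝ} (hτ : 0 < τ) : HasHeatOpAt heatKernel 0 y τ := by
  have hsqrt : √τ ≠ 0 := (sqrt_pos.2 hτ).ne'
  have hspace : ∀ z, HasDerivAt (fun z => heatKernel z τ) (heatKernel z τ * (-z / (2 * τ))) z := by
    intro z
    refine ((((hasDerivAt_pow 2 z).fun_neg.div_const (4 * τ)).exp).div_const √τ).congr_deriv ?_
    rw [heatKernel]
    field_simp
    ring
  have hspace' : HasDerivAt (fun z => heatKernel z τ * (-z / (2 * τ)))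
      (heatKernel y τ * (y ^ 2 / (4 * τ ^ 2) - 1 / (2 * τ))) y := by
    refine ((hspace y).mul ((hasDerivAt_neg' y).div_const (2 * τ))).congr_deriv ?_
    field_simp
    ring
  have htime : HasDerivAt (fun s => heatKernel y s)
      (heatKernel y τ * (y ^ 2 / (4 * τ ^ 2) - 1 / (2 * τ))) τ := by
    have hexponent : HasDerivAt (fun s : ℝ => -y ^ 2 / (4 * s)) (y ^ 2 / (4 * τ ^ 2)) τ := by
      refine ((hasDerivAt_const τ (-y ^ 2)).fun_div ((hasDerivAt_id' τ).const_mul 4)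
        (by positivity)).congr_deriv ?_
      field_simp
      ring
    refine (hexponent.exp.div (hasDerivAt_sqrt hτ.ne') hsqrt).congr_deriv ?_
    rw [heatKernel]
    field_simp
    rw [sq_sqrt hτ.le]
    ring
  have hcont : ContDiffAt ℝ 2 (fun z => heatKernel z τ) y := by
    unfold heatKernel
    fun_prop
  exact (HasHeatOpAt.of_hasDerivAt hcont (.of_forall hspace) hspace' htime).congr_op (sub_self _)

end HeatKernel

section ExceptionalPoints

variable {w : ℝ → ℝ → ℝ} {x₀ x₁ x₂ t₁ t₂ B : ℝ}

theorem le_of_heatSubsolutionAt_of_lt_at_point {Φ : ℝ → ℝ → ℝ}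
    (hcont : ContinuousOn (uncurry w) (Icc x₁ x₂ ×ˢ Icc t₁ t₂ \ {(x₀, t₁)}))
    (hB : ∀ x ∈ Icc x₁ x₂, ∀ t ∈ Icc t₁ t₂, w x t ≤ B)
    (hbdry : ∀ x t, (x, t) ∈ parabolicBoundary x₁ x₂ t₁ t₂ → (x, t) ≠ (x₀, t₁) → w x t ≤ 0)
    (hsub : ∀ x ∈ Ioo x₁ x₂, ∀ t ∈ Ioc t₁ t₂, 0 < w x t → HeatSubsolutionAt w 0 x t)
    (hΦ_cont : ContinuousOn (uncurry Φ) (Icc x₁ x₂ ×ˢ Icc t₁ t₂)) (hΦ_nonneg : ∀ x t, 0 ≤ Φ x t)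
    (hΦ_op : ∀ x ∈ Ioo x₁ x₂, ∀ t ∈ Ioc t₁ t₂, HasHeatOpAt Φ 0 x t) (hΦ_point : B < Φ x₀ t₁) :
    ∀ x ∈ Icc x₁ x₂, ∀ t ∈ Icc t₁ t₂, w x t ≤ Φ x t := by
  intro x hx t ht
  set R : Set (ℝ × ℝ) := Icc x₁ x₂ ×ˢ Icc t₁ t₂
  have hK : IsCompact (R ∩ uncurry Φ ⁻¹' Iic B) :=
    (isCompact_Icc.prod isCompact_Icc).of_isClosed_subset
      (hΦ_cont.preimage_isClosed_of_isClosed (isClosed_Icc.prod isClosed_Icc) isClosed_Iic)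
      inter_subset_left
  have hK_point : R ∩ uncurry Φ ⁻¹' Iic B ⊆ R \ {(x₀, t₁)} := by
    rintro q ⟨hqR, hqB⟩
    refine ⟨hqR, ?_⟩
    rintro rfl
    exact not_le.2 hΦ_point hqB
  refine sub_nonpos.1 (nonpos_of_heatSubsolutionAt (w := fun y s => w y s - Φ y s) hK
    ((hcont.mono hK_point).sub (hΦ_cont.mono inter_subset_left)) ?_ ?_ ?_ x hx t ht)
  · intro y hy s hs hyK
    have hlt : B < Φ y s := not_le.1 fun hle => hyK ⟨⟨hy, hs⟩, hle⟩
    linarith [hB y hy s hs]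
  · intro y s hys
    by_cases hpt : (y, s) = (x₀, t₁)
    · obtain ⟨rfl, rfl⟩ := Prod.mk.inj hpt
      obtain ⟨hyI, hsI⟩ :=
        parabolicBoundary_subset (hx.1.trans hx.2) (ht.1.trans ht.2) hys
      linarith [hB y hyI s hsI]
    · linarith [hbdry y s hys hpt, hΦ_nonneg y s]
  · intro y hy s hs hys
    simpa only [sub_zero] using
      (hsub y hy s hs ((hΦ_nonneg y s).trans_lt (sub_pos.1 hys))).sub (hΦ_op y hy s hs)

/- The function `A κ heatKernel (x - x₀) (t - t₁ + κ²)` equals `A` at the exceptional point and is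
`O(κ)` at every later time. -/
theorem nonpos_of_heatSubsolutionAt_of_ne_point
    (hcont : ContinuousOn (uncurry w) (Icc x₁ x₂ ×ˢ Icc t₁ t₂ \ {(x₀, t₁)}))
    (hB : ∀ x ∈ Icc x₁ x₂, ∀ t ∈ Icc t₁ t₂, w x t ≤ B)
    (hbdry : ∀ x t, (x, t) ∈ parabolicBoundary x₁ x₂ t₁ t₂ → (x, t) ≠ (x₀, t₁) → w x t ≤ 0)
    (hsub : ∀ x ∈ Ioo x₁ x₂, ∀ t ∈ Ioc t₁ t₂, 0 < w x t → HeatSubsolutionAt w 0 x t) :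
    ∀ x ∈ Icc x₁ x₂, ∀ t ∈ Ioc t₁ t₂, w x t ≤ 0 := by
  intro x hx t ht
  set A : ℝ := |B| + 1
  have : 0 < A := by positivity
  have hbound : ∀ κ > 0, w x t ≤ A * κ * (1 / √(t - t₁)) := by
    intro κ hκ
    have hpos : ∀ s ∈ Icc t₁ t₂, 0 < s - (t₁ - κ ^ 2) := fun s hs => by nlinarith [hs.1]
    calc w x t ≤ A * κ * heatKernel (x - x₀) (t - (t₁ - κ ^ 2)) := by
          refine le_of_heatSubsolutionAt_of_lt_at_point
            (Φ := fun y s => A * κ * heatKernel (y - x₀) (s - (t₁ - κ ^ 2))) hcont hB hbdry hsub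
            ?_ ?_ ?_ ?_ x hx t (Ioc_subset_Icc_self ht)
          · exact (continuousOn_heatKernel.comp
              (f := fun q : ℝ × ℝ => (q.1 - x₀, q.2 - (t₁ - κ ^ 2))) (by fun_prop)
              fun q hq => hpos q.2 hq.2).const_smul (A * κ)
          · exact fun y s => mul_nonneg (by positivity) (heatKernel_nonneg _ _)
          · intro y _ s hs
            simpa only [mul_zero] using ((hasHeatOpAt_heatKernel
              (hpos s (Ioc_subset_Icc_self hs))).comp_sub_const x₀ (t₁ - κ ^ 2)).const_mul (A * κ)
          · rw [sub_self, sub_sub_cancel, heatKernel_zero_left, sqrt_sq hκ.le,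
              mul_assoc, mul_one_div_cancel hκ.ne', mul_one]
            exact (le_abs_self B).trans_lt (lt_add_one _)
      _ ≤ A * κ * (1 / √(t - (t₁ - κ ^ 2))) := by
          gcongr
          exact heatKernel_le (hpos t (Ioc_subset_Icc_self ht)).le
      _ ≤ A * κ * (1 / √(t - t₁)) := by
          have hsqrt : 0 < √(t - t₁) := sqrt_pos.2 (sub_pos.2 ht.1)
          gcongr
          exact sub_le_self _ (sq_nonneg κ)
  have hlim : Tendsto (fun κ => A * κ * (1 / √(t - t₁))) (𝓝[>] 0) (𝓝 0) :=
    tendsto_nhdsWithin_of_tendsto_nhds (Continuous.tendsto' (by fun_prop) _ _ (by simp))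
  exact ge_of_tendsto hlim (eventually_mem_nhdsWithin.mono hbound)

theorem nonpos_of_heatSubsolutionAt_of_exceptional_times {N : Set ℝ} (hN : IsClosed N)
    (hcont : ContinuousOn (uncurry w) (Icc x₁ x₂ ×ˢ Icc t₁ t₂ \ {x₀} ×ˢ N))
    (hB : ∀ x ∈ Icc x₁ x₂, ∀ t ∈ Icc t₁ t₂, w x t ≤ B)
    (hbdry : ∀ x t, (x, t) ∈ parabolicBoundary x₁ x₂ t₁ t₂ → w x t ≤ 0)
    (hexc : ∀ x ∈ Icc x₁ x₂, ∀ t ∈ Icc t₁ t₂, t ∈ N → w x t ≤ 0)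
    (hsub : ∀ x ∈ Ioo x₁ x₂, ∀ t ∈ Ioc t₁ t₂, 0 < w x t → HeatSubsolutionAt w 0 x t) :
    ∀ x ∈ Icc x₁ x₂, ∀ t ∈ Icc t₁ t₂, w x t ≤ 0 := by
  intro x hx t ht
  obtain ⟨α, ⟨hα_exc, hα⟩, hα_last⟩ :=
    ((isCompact_Icc (a := t₁) (b := t)).inter_left (isClosed_singleton.union hN)).exists_isGreatest
      ⟨t₁, Or.inl rfl, le_rfl, ht.1⟩
  have hsubset : Icc α t ⊆ Icc t₁ t₂ := Icc_subset_Icc hα.1 ht.2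
  have hbottom : ∀ y ∈ Icc x₁ x₂, w y α ≤ 0 := by
    intro y hy
    rcases hα_exc with rfl | hαN
    · exact hbdry y α (Or.inl ⟨hy, rfl⟩)
    · exact hexc y hy α (hsubset ⟨le_rfl, hα.2⟩) hαN
  rcases hα.2.eq_or_lt with rfl | hαt
  · exact hbottom x hx
  refine nonpos_of_heatSubsolutionAt_of_ne_point (x₀ := x₀) (hcont.mono ?_)
    (fun y hy s hs => hB y hy s (hsubset hs)) ?_
    (fun y hy s hs => hsub y hy s ⟨hα.1.trans_lt hs.1, hs.2.trans ht.2⟩) x hx t ⟨hαt, le_rfl⟩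
  · rintro ⟨y, s⟩ ⟨⟨hy, hs⟩, hne⟩
    refine ⟨⟨hy, hsubset hs⟩, ?_⟩
    rintro ⟨rfl, hsN⟩
    exact hne (Prod.ext rfl ((hα_last ⟨Or.inr hsN, hα.1.trans hs.1, hs.2⟩).antisymm hs.1))
  · rintro y s (⟨hy, rfl⟩ | ⟨hy, hs⟩) -
    · exact hbottom y hy
    · exact hbdry y s (Or.inr ⟨hy, hsubset hs⟩)

end ExceptionalPoints

section Columns

variable {w : ℝ → ℝ → ℝ} {x₁ x₂ t₁ t₂ B L z : ℝ} {F : Set (ℝ × ℝ)}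

theorem exists_le_mul_abs_sub_of_lipschitz_on_side (h12 : x₁ < x₂) (hz : z = x₁ ∨ z = x₂)
    (hF : IsClosed F)
    (hside_F : ∀ x ∈ Icc x₁ x₂, ∀ t ∈ Icc t₁ t₂, (x, t) ∈ F → x = z)
    (hcont : ContinuousOn (uncurry w) (Icc x₁ x₂ ×ˢ Icc t₁ t₂ \ F))
    (hB : ∀ x ∈ Icc x₁ x₂, ∀ t ∈ Icc t₁ t₂, w x t ≤ B)
    (hbot : ∀ x ∈ Icc x₁ x₂, w x t₁ ≤ 0) (hside : ∀ t ∈ Icc t₁ t₂, w z t ≤ 0)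
    (hlip : ∀ t ∈ Icc t₁ t₂, (z, t) ∈ F → ∀ x ∈ Icc x₁ x₂, w x t ≤ L * |x - z|)
    (hsub : ∀ x ∈ Ioo x₁ x₂, ∀ t ∈ Ioc t₁ t₂, 0 < w x t → HeatSubsolutionAt w 0 x t) :
    ∃ K, ∀ x ∈ Icc x₁ x₂, ∀ t ∈ Icc t₁ t₂, w x t ≤ K * |x - z| := by
  have hlen : 0 < x₂ - x₁ := sub_pos.2 h12
  set K : ℝ := |L| + |B| / (x₂ - x₁)
  have hK : 0 ≤ K := by positivity
  have hLK : L ≤ K := (le_abs_self L).trans (le_add_of_nonneg_right (by positivity))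
  have hBK : B ≤ K * (x₂ - x₁) := by
    rw [add_mul, div_mul_cancel₀ _ hlen.ne']
    exact (le_abs_self B).trans (le_add_of_nonneg_left (by positivity))
  have hfar : ∀ x ∈ ({x₁, x₂} : Set ℝ), x ≠ z → |x - z| = x₂ - x₁ := by
    rintro x (rfl | rfl) hxz <;> rcases hz with rfl | rfl
    · exact absurd rfl hxz
    · rw [abs_sub_comm, abs_of_pos hlen]
    · rw [abs_of_pos hlen]
    · exact absurd rfl hxz
  refine ⟨K, fun x hx t ht => sub_nonpos.1 ?_⟩
  refine nonpos_of_heatSubsolutionAt_of_exceptional_times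
    (w := fun y s => w y s - K * |y - z|) (B := B) (x₀ := z) (N := {t | (z, t) ∈ F})
    (hF.preimage (by fun_prop)) ((hcont.mono ?_).sub (by fun_prop)) ?_ ?_ ?_ ?_ x hx t ht
  · rintro ⟨y, s⟩ ⟨⟨hy, hs⟩, hys⟩
    refine ⟨⟨hy, hs⟩, fun hysF => hys ?_⟩
    obtain rfl := hside_F y hy s hs hysF
    exact ⟨rfl, hysF⟩
  · exact fun y hy s hs => (sub_le_self _ (by positivity)).trans (hB y hy s hs)
  · rintro y s (⟨hy, rfl⟩ | ⟨hy, hs⟩)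
    · exact (sub_le_self _ (by positivity)).trans (hbot y hy)
    · by_cases hyz : y = z
      · exact (sub_le_self _ (by positivity)).trans (hyz ▸ hside s hs)
      · rw [hfar y hy hyz]
        have hyI : y ∈ Icc x₁ x₂ :=
          pair_subset (left_mem_Icc.2 h12.le) (right_mem_Icc.2 h12.le) hy
        exact sub_nonpos.2 ((hB y hyI s hs).trans hBK)
  · intro y hy s hs hsN
    exact sub_nonpos.2 ((hlip s hs hsN y hy).trans (by gcongr))
  · intro y hy s hs hpos
    have hyz : y ≠ z := by
      rcases hz with rfl | rfl
      exacts [hy.1.ne', hy.2.ne]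
    have hw : 0 < w y s := (mul_nonneg hK (abs_nonneg (y - z))).trans_lt (sub_pos.1 hpos)
    simpa only [mul_zero, sub_zero] using
      (hsub y hy s hs hw).sub ((hasHeatOpAt_abs_sub hyz).const_mul K)

theorem nonpos_of_heatSubsolutionAt_of_le_mul_min_abs_sub {K : ℝ}
    (hcont : ContinuousOn (uncurry w) (Ioo x₁ x₂ ×ˢ Icc t₁ t₂))
    (hK : ∀ x ∈ Icc x₁ x₂, ∀ t ∈ Icc t₁ t₂, w x t ≤ K * min |x - x₁| |x - x₂|)
    (hbot : ∀ x ∈ Icc x₁ x₂, w x t₁ ≤ 0)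
    (hsub : ∀ x ∈ Ioo x₁ x₂, ∀ t ∈ Ioc t₁ t₂, 0 < w x t → HeatSubsolutionAt w 0 x t) :
    ∀ x ∈ Icc x₁ x₂, ∀ t ∈ Icc t₁ t₂, w x t ≤ 0 := by
  intro x hx t ht
  refine le_of_forall_pos_le_add fun ε hε => ?_
  rw [zero_add]
  set S : Set (ℝ × ℝ) := Icc x₁ x₂ ×ˢ Icc t₁ t₂ ∩ {q | ε ≤ K * min |q.1 - x₁| |q.1 - x₂|}
  have hS : IsCompact S :=
    (isCompact_Icc.prod isCompact_Icc).inter_right (isClosed_le (by fun_prop) (by fun_prop))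
  have hS_inside : S ⊆ Ioo x₁ x₂ ×ˢ Icc t₁ t₂ := by
    rintro ⟨y, s⟩ ⟨⟨hy, hs⟩, hyS⟩
    have hyS' : ε ≤ K * min |y - x₁| |y - x₂| := hyS
    refine ⟨⟨hy.1.lt_of_ne ?_, hy.2.lt_of_ne ?_⟩, hs⟩ <;> rintro rfl
    · simp [hε.not_ge] at hyS'
    · simp [hε.not_ge] at hyS'
  refine sub_nonpos.1 (nonpos_of_heatSubsolutionAt (w := fun y s => w y s - ε) hS
    ((hcont.mono hS_inside).sub continuousOn_const) ?_ ?_ ?_ x hx t ht)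
  · intro y hy s hs hyS
    have hlt : K * min |y - x₁| |y - x₂| < ε := not_le.1 fun hle => hyS ⟨⟨hy, hs⟩, hle⟩
    exact sub_nonpos.2 ((hK y hy s hs).trans hlt.le)
  · rintro y s (⟨hy, rfl⟩ | ⟨hy, hs⟩)
    · exact (sub_le_self _ hε.le).trans (hbot y hy)
    · have hy' := hK y (pair_subset (left_mem_Icc.2 (hx.1.trans hx.2))
        (right_mem_Icc.2 (hx.1.trans hx.2)) hy) s hs
      have hmin : min |y - x₁| |y - x₂| = 0 := by
        rcases hy with rfl | rfl <;> simp
      rw [hmin, mul_zero] at hy'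
      exact (sub_le_self _ hε.le).trans hy'
  · intro y hy s hs hpos
    simpa only [sub_zero] using
      (hsub y hy s hs (hε.trans (sub_pos.1 hpos))).sub (hasHeatOpAt_const ε)

theorem nonpos_of_heatSubsolutionAt_of_gap (h12 : x₁ < x₂) (hF : IsClosed F)
    (hgap : ∀ x ∈ Ioo x₁ x₂, ∀ t ∈ Icc t₁ t₂, (x, t) ∉ F)
    (hcont : ContinuousOn (uncurry w) (Icc x₁ x₂ ×ˢ Icc t₁ t₂ \ F))
    (hB : ∀ x ∈ Icc x₁ x₂, ∀ t ∈ Icc t₁ t₂, w x t ≤ B)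
    (hbdry : ∀ x t, (x, t) ∈ parabolicBoundary x₁ x₂ t₁ t₂ → w x t ≤ 0)
    (hlip : ∀ z ∈ Icc x₁ x₂, ∀ t ∈ Icc t₁ t₂, (z, t) ∈ F →
      ∀ x ∈ Icc x₁ x₂, w x t ≤ L * |x - z|)
    (hsub : ∀ x ∈ Ioo x₁ x₂, ∀ t ∈ Ioc t₁ t₂, 0 < w x t → HeatSubsolutionAt w 0 x t) :
    ∀ x ∈ Icc x₁ x₂, ∀ t ∈ Icc t₁ t₂, w x t ≤ 0 := by
  have hbot : ∀ x ∈ Icc x₁ x₂, w x t₁ ≤ 0 := fun x hx => hbdry x t₁ (Or.inl ⟨hx, rfl⟩)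
  obtain ⟨m, hm, hxm⟩ : ∃ m, m - x₁ = x₂ - m ∧ x₁ < m := ⟨(x₁ + x₂) / 2, by ring, by linarith⟩
  have hmx : m < x₂ := by linarith
  have hmem : ∀ x ∈ Icc x₁ x₂, ∀ t ∈ Icc t₁ t₂, (x, t) ∈ F → x = x₁ ∨ x = x₂ := by
    intro x hx t ht hxt
    by_contra! hne
    exact hgap x ⟨hx.1.lt_of_ne' hne.1, hx.2.lt_of_ne hne.2⟩ t ht hxt
  have hleft : Icc x₁ m ⊆ Icc x₁ x₂ := Icc_subset_Icc le_rfl hmx.le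
  have hright : Icc m x₂ ⊆ Icc x₁ x₂ := Icc_subset_Icc hxm.le le_rfl
  obtain ⟨K₁, hw₁⟩ := exists_le_mul_abs_sub_of_lipschitz_on_side hxm (.inl rfl) hF
    (fun x hx t ht hxt => (hmem x (hleft hx) t ht hxt).resolve_right (hx.2.trans_lt hmx).ne)
    (hcont.mono (sdiff_subset_sdiff_left (prod_mono_left hleft))) (fun x hx => hB x (hleft hx))
    (fun x hx => hbot x (hleft hx)) (fun t ht => hbdry x₁ t (Or.inr ⟨.inl rfl, ht⟩))
    (fun t ht hxt x hx => hlip x₁ (left_mem_Icc.2 h12.le) t ht hxt x (hleft hx))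
    fun x hx => hsub x (Ioo_subset_Ioo le_rfl hmx.le hx)
  obtain ⟨K₂, hw₂⟩ := exists_le_mul_abs_sub_of_lipschitz_on_side hmx (.inr rfl) hF
    (fun x hx t ht hxt => (hmem x (hright hx) t ht hxt).resolve_left (hxm.trans_le hx.1).ne')
    (hcont.mono (sdiff_subset_sdiff_left (prod_mono_left hright))) (fun x hx => hB x (hright hx))
    (fun x hx => hbot x (hright hx)) (fun t ht => hbdry x₂ t (Or.inr ⟨.inr rfl, ht⟩))
    (fun t ht hxt x hx => hlip x₂ (right_mem_Icc.2 h12.le) t ht hxt x (hright hx))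
    fun x hx => hsub x (Ioo_subset_Ioo hxm.le le_rfl hx)
  refine nonpos_of_heatSubsolutionAt_of_le_mul_min_abs_sub (K := max K₁ K₂) (hcont.mono ?_)
    ?_ hbot hsub
  · exact fun q hq => ⟨⟨Ioo_subset_Icc_self hq.1, hq.2⟩, hgap q.1 hq.1 q.2 hq.2⟩
  · intro x hx t ht
    have h₁ : |x - x₁| = x - x₁ := abs_of_nonneg (sub_nonneg.2 hx.1)
    have h₂ : |x - x₂| = x₂ - x := by rw [abs_sub_comm, abs_of_nonneg (sub_nonneg.2 hx.2)]
    rcases le_total x m with hxm' | hmx'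
    · rw [min_eq_left (by linarith)]
      exact (hw₁ x ⟨hx.1, hxm'⟩ t ht).trans (by gcongr; exact le_max_left _ _)
    · rw [min_eq_right (by linarith)]
      exact (hw₂ x ⟨hmx', hx.2⟩ t ht).trans (by gcongr; exact le_max_right _ _)

theorem exists_Ioo_subset_compl_of_notMem {Q : Set ℝ} {x : ℝ} (hQ : IsClosed Q) (hx₁ : x₁ ∈ Q)
    (hx₂ : x₂ ∈ Q) (hx : x ∈ Icc x₁ x₂) (hxQ : x ∉ Q) :
    ∃ z₁ ∈ Q, ∃ z₂ ∈ Q, x ∈ Ioo z₁ z₂ ∧ Icc z₁ z₂ ⊆ Icc x₁ x₂ ∧ Ioo z₁ z₂ ⊆ Qᶜ := by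
  obtain ⟨z₁, ⟨hz₁Q, hz₁⟩, hz₁_last⟩ :=
    ((isCompact_Icc (a := x₁) (b := x)).inter_left hQ).exists_isGreatest ⟨x₁, hx₁, le_rfl, hx.1⟩
  obtain ⟨z₂, ⟨hz₂Q, hz₂⟩, hz₂_first⟩ :=
    ((isCompact_Icc (a := x) (b := x₂)).inter_left hQ).exists_isLeast ⟨x₂, hx₂, hx.2, le_rfl⟩
  refine ⟨z₁, hz₁Q, z₂, hz₂Q, ⟨hz₁.2.lt_of_ne (ne_of_mem_of_not_mem hz₁Q hxQ),
    hz₂.1.lt_of_ne' (ne_of_mem_of_not_mem hz₂Q hxQ)⟩, Icc_subset_Icc hz₁.1 hz₂.2, ?_⟩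
  intro y hy hyQ
  rcases le_total y x with hyx | hxy
  · exact hy.1.not_ge (hz₁_last ⟨hyQ, hz₁.1.trans hy.1.le, hyx⟩)
  · exact hy.2.not_ge (hz₂_first ⟨hyQ, hxy, hy.2.le.trans hz₂.2⟩)

theorem nonpos_of_heatSubsolutionAt_of_columns (hF : IsClosed F)
    (hcont : ContinuousOn (uncurry w) (Icc x₁ x₂ ×ˢ Icc t₁ t₂ \ F))
    (hB : ∀ x ∈ Icc x₁ x₂, ∀ t ∈ Icc t₁ t₂, w x t ≤ B)
    (hbdry : ∀ x t, (x, t) ∈ parabolicBoundary x₁ x₂ t₁ t₂ → w x t ≤ 0)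
    (hcol : ∀ x ∈ Icc x₁ x₂, ∀ t ∈ Icc t₁ t₂, (x, t) ∈ F → ∀ s ∈ Icc t₁ t₂, w x s ≤ 0)
    (hlip : ∀ z ∈ Icc x₁ x₂, ∀ t ∈ Icc t₁ t₂, (z, t) ∈ F →
      ∀ x ∈ Icc x₁ x₂, w x t ≤ L * |x - z|)
    (hsub : ∀ x ∈ Ioo x₁ x₂, ∀ t ∈ Ioc t₁ t₂, 0 < w x t → HeatSubsolutionAt w 0 x t) :
    ∀ x ∈ Icc x₁ x₂, ∀ t ∈ Icc t₁ t₂, w x t ≤ 0 := by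
  intro x hx t ht
  set P : Set ℝ := Prod.fst '' (Icc x₁ x₂ ×ˢ Icc t₁ t₂ ∩ F)
  set Q : Set ℝ := P ∪ {x₁, x₂}
  have hx₁Q : x₁ ∈ Q := Or.inr (Or.inl rfl)
  have hx₂Q : x₂ ∈ Q := Or.inr (Or.inr rfl)
  have hQ : IsClosed Q := ((((isCompact_Icc.prod isCompact_Icc).inter_right hF).image
    continuous_fst).isClosed).union (toFinite _).isClosed
  have hPQ : ∀ y ∈ Icc x₁ x₂, ∀ s ∈ Icc t₁ t₂, (y, s) ∈ F → y ∈ Q := fun y hy s hs hys =>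
    Or.inl ⟨(y, s), ⟨⟨hy, hs⟩, hys⟩, rfl⟩
  have hQ_col : ∀ y ∈ Q, ∀ s ∈ Icc t₁ t₂, w y s ≤ 0 := by
    rintro y (⟨⟨y, r⟩, ⟨⟨hy, hr⟩, hyr⟩, rfl⟩ | hy) s hs
    · exact hcol y hy r hr hyr s hs
    · exact hbdry y s (Or.inr ⟨hy, hs⟩)
  by_cases hxQ : x ∈ Q
  · exact hQ_col x hxQ t ht
  obtain ⟨z₁, hz₁Q, z₂, hz₂Q, hxz, hsubset, hgap⟩ :=
    exists_Ioo_subset_compl_of_notMem hQ hx₁Q hx₂Q hx hxQ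
  have hz : z₁ ≤ z₂ := (hxz.1.trans hxz.2).le
  have hIoo : Ioo z₁ z₂ ⊆ Ioo x₁ x₂ :=
    Ioo_subset_Ioo (hsubset (left_mem_Icc.2 hz)).1 (hsubset (right_mem_Icc.2 hz)).2
  refine nonpos_of_heatSubsolutionAt_of_gap (hxz.1.trans hxz.2) hF ?_
    (hcont.mono (sdiff_subset_sdiff_left (prod_mono_left hsubset)))
    (fun y hy => hB y (hsubset hy)) ?_
    (fun z hz s hs hzs y hy => hlip z (hsubset hz) s hs hzs y (hsubset hy))
    (fun y hy => hsub y (hIoo hy)) x (Ioo_subset_Icc_self hxz) t ht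
  · exact fun y hy s hs hys => hgap hy (hPQ y (hsubset (Ioo_subset_Icc_self hy)) s hs hys)
  · rintro y s (⟨hy, rfl⟩ | ⟨hy, hs⟩)
    · exact hbdry y s (Or.inl ⟨hsubset hy, rfl⟩)
    · exact hQ_col y (pair_subset hz₁Q hz₂Q hy) s hs

end Columns

/-! ### Joint continuity of bounded solutions -/

/-- On the part in `O` of the cross through `p` with axis-parallel arms, the values of `v` on the
two arms differ by at most `L` times the sum of the distances to `p`. -/
def CrossLipschitzAt (v : ℝ → ℝ → ℝ) (L : ℝ) (O : Set (ℝ × ℝ)) (p : ℝ × ℝ) : Prop :=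
  ∀ y s, (y, p.2) ∈ O → (p.1, s) ∈ O → |v y p.2 - v p.1 s| ≤ L * (|y - p.1| + |s - p.2|)

section CrossLipschitz

variable {v : ℝ → ℝ → ℝ} {L : ℝ} {D O F : Set (ℝ × ℝ)} {p : ℝ × ℝ}

theorem CrossLipschitzAt.mono (h : CrossLipschitzAt v L D p) (hOD : O ⊆ D) :
    CrossLipschitzAt v L O p :=
  fun y s hy hs => h y s (hOD hy) (hOD hs)

theorem CrossLipschitzAt.neg (h : CrossLipschitzAt v L O p) :
    CrossLipschitzAt (fun x t => -v x t) L O p := by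
  intro y s hy hs
  rw [neg_sub_neg, abs_sub_comm]
  exact h y s hy hs

theorem CrossLipschitzAt.space {x t y : ℝ} (h : CrossLipschitzAt v L O (x, t)) (hp : (x, t) ∈ O)
    (hy : (y, t) ∈ O) : |v y t - v x t| ≤ L * |y - x| := by
  simpa using h y t hy hp

theorem CrossLipschitzAt.time {x t s : ℝ} (h : CrossLipschitzAt v L O (x, t)) (hp : (x, t) ∈ O)
    (hs : (x, s) ∈ O) : |v x t - v x s| ≤ L * |s - t| := by
  simpa using h x s hp hs

theorem isClosed_setOf_crossLipschitzAt {r : ℝ} (hD : IsOpen D)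
    (hspace : ∀ x t, (x, t) ∈ D → ContinuousAt (fun y => v y t) x)
    (htime : ∀ x t, (x, t) ∈ D → ContinuousAt (fun s => v x s) t) :
    IsClosed {p | CrossLipschitzAt v L (D ∩ ball p r) p} := by
  refine isClosed_iff_frequently.2 fun p hp y s ⟨hyD, hy⟩ ⟨hsD, hs⟩ => ?_
  have hy_near : ∀ᶠ q : ℝ × ℝ in 𝓝 p, (y, q.2) ∈ D ∩ ball q r :=
    ((Continuous.tendsto (by fun_prop) p).eventually (hD.mem_nhds hyD)).and
      ((isOpen_lt (f := fun q : ℝ × ℝ => dist (y, q.2) q) (by fun_prop)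
        continuous_const).mem_nhds hy)
  have hs_near : ∀ᶠ q : ℝ × ℝ in 𝓝 p, (q.1, s) ∈ D ∩ ball q r :=
    ((Continuous.tendsto (by fun_prop) p).eventually (hD.mem_nhds hsD)).and
      ((isOpen_lt (f := fun q : ℝ × ℝ => dist (q.1, s) q) (by fun_prop)
        continuous_const).mem_nhds hs)
  refine le_of_tendsto_of_tendsto_of_frequently (b := 𝓝 p)
    (f := fun q => |v y q.2 - v q.1 s|) (g := fun q => L * (|y - q.1| + |s - q.2|)) ?_ ?_
    ((hp.and_eventually (hy_near.and hs_near)).mono fun q hq => hq.1 y s hq.2.1 hq.2.2)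
  · exact (((htime y p.2 hyD).tendsto.comp continuous_snd.continuousAt).sub
      ((hspace p.1 s hsD).tendsto.comp continuous_fst.continuousAt)).abs
  · exact Continuous.tendsto (by fun_prop) p

theorem eventually_forall_mem_ball_abs_sub_le {φ : ℝ → ℝ} {x : ℝ} (hφ : DifferentiableAt ℝ φ x) :
    ∀ᶠ n : ℕ in atTop, ∀ y ∈ ball x (1 / ((n : ℝ) + 1)), |φ y - φ x| ≤ (n + 1) * |y - x| := by
  obtain ⟨c, hc⟩ := hφ.isBigO_sub.bound
  obtain ⟨δ, hδ, hball⟩ := Metric.eventually_nhds_iff_ball.1 hc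
  filter_upwards [tendsto_one_div_add_atTop_nhds_zero_nat.eventually (gt_mem_nhds hδ),
    eventually_ge_atTop ⌈c⌉₊] with n hnδ hnc y hy
  have hcn : c ≤ n + 1 := (Nat.ceil_le.1 hnc).trans (le_add_of_nonneg_right zero_le_one)
  exact (hball y (ball_subset_ball hnδ.le hy)).trans (by gcongr; exact le_rfl)

theorem exists_crossLipschitzAt_ball
    (hspace : DifferentiableAt ℝ (fun y => v y p.2) p.1)
    (htime : DifferentiableAt ℝ (fun s => v p.1 s) p.2) :
    ∃ n : ℕ, CrossLipschitzAt v (n + 1) (ball p (1 / ((n : ℝ) + 1))) p := by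
  obtain ⟨n, hn_space, hn_time⟩ := ((eventually_forall_mem_ball_abs_sub_le hspace).and
    (eventually_forall_mem_ball_abs_sub_le htime)).exists
  refine ⟨n, fun y s hy hs => ?_⟩
  have hy' := hn_space y (lt_of_le_of_lt (le_max_left (dist y p.1) (dist p.2 p.2)) hy)
  have hs' := hn_time s (lt_of_le_of_lt (le_max_right (dist p.1 p.1) (dist s p.2)) hs)
  calc |v y p.2 - v p.1 s| ≤ |v y p.2 - v p.1 p.2| + |v p.1 p.2 - v p.1 s| := abs_sub_le _ _ _
    _ ≤ (n + 1) * |y - p.1| + (n + 1) * |s - p.2| :=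
      add_le_add hy' (by rwa [abs_sub_comm])
    _ = (n + 1) * (|y - p.1| + |s - p.2|) := by ring

/- Baire category argument: the sets where the cross-Lipschitz estimate holds with constant `n + 1`
on the ball of radius `1 / (n + 1)` are closed and cover `D`. -/
theorem exists_isOpen_crossLipschitzAt (hD : IsOpen D) (hF : IsClosed F) (hne : (D ∩ F).Nonempty)
    (hspace : ∀ x t, (x, t) ∈ D → DifferentiableAt ℝ (fun y => v y t) x)
    (htime : ∀ x t, (x, t) ∈ D → DifferentiableAt ℝ (fun s => v x s) t) :
    ∃ O ⊆ D, IsOpen O ∧ (O ∩ F).Nonempty ∧ ∃ L ≥ 0, ∀ p ∈ O ∩ F, CrossLipschitzAt v L O p := by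
  have : LocallyCompactSpace ↥(D ∩ F) :=
    (hD.isLocallyClosed.inter hF.isLocallyClosed).locallyCompactSpace
  have : Nonempty ↥(D ∩ F) := hne.to_subtype
  let A : ℕ → Set (ℝ × ℝ) := fun n =>
    {p | CrossLipschitzAt v (n + 1) (D ∩ ball p (1 / ((n : ℝ) + 1))) p}
  have hA_closed : ∀ n, IsClosed (A n) := fun n => isClosed_setOf_crossLipschitzAt hD
    (fun x t h => (hspace x t h).continuousAt) fun x t h => (htime x t h).continuousAt
  have hA_cover : ⋃ n, ((↑) : ↥(D ∩ F) → ℝ × ℝ) ⁻¹' A n = univ := by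
    refine eq_univ_of_forall fun p => ?_
    obtain ⟨n, hn⟩ := exists_crossLipschitzAt_ball (hspace _ _ p.2.1) (htime _ _ p.2.1)
    exact mem_iUnion.2 ⟨n, hn.mono inter_subset_right⟩
  obtain ⟨n, p, hp⟩ := nonempty_interior_of_iUnion_of_closed
    (fun n => (hA_closed n).preimage continuous_subtype_val) hA_cover
  obtain ⟨U, hU, hUA⟩ := mem_nhds_subtype _ _ _ |>.1 (mem_interior_iff_mem_nhds.1 hp)
  set r : ℝ := 1 / ((n : ℝ) + 1)
  have hr : 0 < r := by positivity
  refine ⟨D ∩ (interior U ∩ ball ↑p (r / 2)), inter_subset_left,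
    hD.inter (isOpen_interior.inter isOpen_ball),
    ⟨p, ⟨p.2.1, mem_interior_iff_mem_nhds.2 hU, mem_ball_self (half_pos hr)⟩, p.2.2⟩,
    n + 1, by positivity, ?_⟩
  rintro q ⟨⟨hqD, hqU, hqp⟩, hqF⟩
  have hq : CrossLipschitzAt v (n + 1) (D ∩ ball q r) q :=
    @hUA ⟨q, hqD, hqF⟩ (show q ∈ U from interior_subset hqU)
  refine hq.mono (inter_subset_inter_right D (inter_subset_right.trans (ball_subset_ball' ?_)))
  rw [dist_comm]
  linarith [mem_ball.1 hqp]

theorem CrossLipschitzAt.le_of_column {z t t₁ t₂ m : ℝ} (h : CrossLipschitzAt v L O (z, t))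
    (hL : 0 ≤ L) (hO : ∀ s ∈ Icc t₁ t₂, (z, s) ∈ O) (ht : t ∈ Icc t₁ t₂) (hbot : v z t₁ ≤ m) :
    ∀ s ∈ Icc t₁ t₂, v z s ≤ m + 2 * L * (t₂ - t₁) := by
  intro s hs
  have ht₁ : t₁ ∈ Icc t₁ t₂ := left_mem_Icc.2 (ht.1.trans ht.2)
  have htime : ∀ r ∈ Icc t₁ t₂, |v z t - v z r| ≤ L * (t₂ - t₁) := fun r hr =>
    (h.time (hO t ht) (hO r hr)).trans
      (mul_le_mul_of_nonneg_left (abs_sub_le_of_le_of_le hr.1 hr.2 ht.1 ht.2) hL)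
  linarith [abs_le.1 (htime s hs), abs_le.1 (htime t₁ ht₁)]

theorem le_barrier_of_columns {x₀ t₁ t₂ δ m B C : ℝ} (hδ : 0 < δ) (hC : 0 ≤ C)
    (hF : IsClosed F)
    (hcont : ContinuousOn (uncurry v) (Icc (x₀ - δ) (x₀ + δ) ×ˢ Icc t₁ t₂ \ F))
    (hB : ∀ x ∈ Icc (x₀ - δ) (x₀ + δ), ∀ t ∈ Icc t₁ t₂, |v x t| ≤ B)
    (hbot : ∀ x ∈ Icc (x₀ - δ) (x₀ + δ), v x t₁ ≤ m) (hx₀ : ∀ t ∈ Icc t₁ t₂, v x₀ t ≤ m)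
    (hcol : ∀ z ∈ Icc (x₀ - δ) (x₀ + δ), ∀ t ∈ Icc t₁ t₂, (z, t) ∈ F →
      ∀ s ∈ Icc t₁ t₂, v z s ≤ m)
    (hlip : ∀ z ∈ Icc (x₀ - δ) (x₀ + δ), ∀ t ∈ Icc t₁ t₂, (z, t) ∈ F →
      ∀ x ∈ Icc (x₀ - δ) (x₀ + δ), v x t - v z t ≤ L * |x - z|)
    (hsub : ∀ x ∈ Icc (x₀ - δ) (x₀ + δ), ∀ t ∈ Icc t₁ t₂, HeatSubsolutionAt v C x t) :
    ∀ x ∈ Icc (x₀ - δ) (x₀ + δ), ∀ t ∈ Icc t₁ t₂,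
      v x t ≤ m + 2 * B / δ * |x - x₀| + C * (t - t₁) := by
  intro x hx t ht
  have hx₀I : x₀ ∈ Icc (x₀ - δ) (x₀ + δ) := ⟨by linarith, by linarith⟩
  have hB0 : 0 ≤ B := (abs_nonneg _).trans (hB x hx t ht)
  have hBm : -B ≤ m := (neg_le_of_abs_le (hB x₀ hx₀I t ht)).trans (hx₀ t ht)
  set k : ℝ := 2 * B / δ
  set Φ : ℝ → ℝ → ℝ := fun x t => m + k * |x - x₀| + C * (t - t₁)
  have hΦ : ∀ y, ∀ s ∈ Icc t₁ t₂, m + k * |y - x₀| ≤ Φ y s := fun y s hs =>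
    le_add_of_nonneg_right (mul_nonneg hC (sub_nonneg.2 hs.1))
  have hmΦ : ∀ y, ∀ s ∈ Icc t₁ t₂, m ≤ Φ y s := fun y s hs =>
    (le_add_of_nonneg_right (by positivity)).trans (hΦ y s hs)
  have hΦ_op : ∀ y s, y ≠ x₀ → HasHeatOpAt Φ C y s := by
    intro y s hy
    exact (((hasHeatOpAt_const m).add ((hasHeatOpAt_abs_sub hy).const_mul k)).add
      (hasHeatOpAt_mul_sub_time C t₁)).congr_op (by ring)
  refine sub_nonpos.1 (nonpos_of_heatSubsolutionAt_of_columns (w := fun y s => v y s - Φ y s)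
    (B := B - m) (L := L) hF (hcont.sub (by fun_prop)) ?_ ?_ ?_ ?_ ?_ x hx t ht)
  · exact fun y hy s hs => sub_le_sub (le_of_abs_le (hB y hy s hs)) (hmΦ y s hs)
  · rintro y s (⟨hy, rfl⟩ | ⟨hy, hs⟩)
    · exact sub_nonpos.2 ((hbot y hy).trans (hmΦ y s ⟨le_rfl, ht.1.trans ht.2⟩))
    · have hy' : |y - x₀| = δ := by rcases hy with rfl | rfl <;> simp [hδ.le]
      have hyI : y ∈ Icc (x₀ - δ) (x₀ + δ) := by
        rcases hy with rfl | rfl <;> constructor <;> linarith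
      have hk : k * |y - x₀| = 2 * B := by rw [hy', div_mul_cancel₀ _ hδ.ne']
      linarith [hΦ y s hs, le_of_abs_le (hB y hyI s hs)]
  · exact fun z hz r hr hzr s hs => sub_nonpos.2 ((hcol z hz r hr hzr s hs).trans (hmΦ z s hs))
  · intro z hz r hr hzr y hy
    linarith [hlip z hz r hr hzr y hy, hcol z hz r hr hzr r hr, hmΦ y r hr]
  · intro y hy s hs hpos
    have hyx₀ : y ≠ x₀ := by
      rintro rfl
      linarith [hx₀ s (Ioc_subset_Icc_self hs), hmΦ y s (Ioc_subset_Icc_self hs)]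
    simpa only [sub_self] using
      (hsub y (Ioo_subset_Icc_self hy) s (Ioc_subset_Icc_self hs)).sub (hΦ_op y s hyx₀)

theorem exists_rectangle_subset_of_continuousAt_space {x₀ t₀ ε : ℝ} (k : ℝ) (hO : IsOpen O)
    (hp : (x₀, t₀) ∈ O) (hspace : ∀ x t, (x, t) ∈ O → ContinuousAt (fun y => v y t) x)
    (hε : 0 < ε) :
    ∃ τ > 0, k * τ < ε ∧ ∃ δ > 0, Icc (x₀ - δ) (x₀ + δ) ×ˢ Icc (t₀ - τ) (t₀ + τ) ⊆ O ∧
      ∀ x ∈ Icc (x₀ - δ) (x₀ + δ), v x (t₀ - τ) < v x₀ (t₀ - τ) + ε := by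
  obtain ⟨ρ, hρ, hρO⟩ := nhds_basis_closedBall.mem_iff.1 (hO.mem_nhds hp)
  rw [← closedBall_prod_same] at hρO
  obtain ⟨τ, hkτ, hτ⟩ : ∃ τ, k * τ < ε ∧ τ ∈ Ioo 0 ρ := by
    have hlim : Tendsto (fun τ => k * τ) (𝓝[>] 0) (𝓝 0) :=
      tendsto_nhdsWithin_of_tendsto_nhds (Continuous.tendsto' (by fun_prop) _ _ (by simp))
    exact ((hlim.eventually (gt_mem_nhds hε)).and (Ioo_mem_nhdsGT hρ)).exists
  have hτρ : Icc (t₀ - τ) (t₀ + τ) ⊆ closedBall t₀ ρ := by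
    rw [← Real.closedBall_eq_Icc]
    exact closedBall_subset_closedBall hτ.2.le
  have hbot : ∀ᶠ x in 𝓝 x₀, v x (t₀ - τ) < v x₀ (t₀ - τ) + ε :=
    (hspace x₀ (t₀ - τ) (hρO ⟨mem_closedBall_self hρ.le, hτρ
      ⟨le_rfl, by linarith [hτ.1]⟩⟩)).eventually (gt_mem_nhds (lt_add_of_pos_right _ hε))
  obtain ⟨δ, hδ, hδ_sub⟩ :=
    nhds_basis_closedBall.mem_iff.1 (inter_mem hbot (closedBall_mem_nhds x₀ hρ))
  rw [Real.closedBall_eq_Icc] at hδ_sub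
  exact ⟨τ, hτ.1, hkτ, δ, hδ, fun q hq => hρO ⟨(hδ_sub hq.1).2, hτρ hq.2⟩,
    fun x hx => (hδ_sub hx).1⟩

theorem eventually_lt_of_crossLipschitzAt {x₀ t₀ B C ε : ℝ} (hO : IsOpen O) (hC : 0 ≤ C)
    (hL : 0 ≤ L) (hF : IsClosed F) (hp : (x₀, t₀) ∈ O ∩ F)
    (hcont : ∀ p ∈ O, p ∉ F → ContinuousAt (uncurry v) p)
    (hlip : ∀ p ∈ O ∩ F, CrossLipschitzAt v L O p) (hB : ∀ x t, (x, t) ∈ O → |v x t| ≤ B)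
    (hsub : ∀ x t, (x, t) ∈ O → HeatSubsolutionAt v C x t) (hε : 0 < ε) :
    ∀ᶠ q : ℝ × ℝ in 𝓝 (x₀, t₀), v q.1 q.2 < v x₀ t₀ + ε := by
  have hspace : ∀ x t, (x, t) ∈ O → ContinuousAt (fun y => v y t) x := fun x t hxt => by
    obtain ⟨f, -, hf⟩ := hsub x t hxt
    exact hf.contDiffAt.continuousAt
  obtain ⟨τ, hτ, hτε, δ, hδ, hRO, hbot⟩ :=
    exists_rectangle_subset_of_continuousAt_space (5 * L + C) hO hp.1 hspace (half_pos hε)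
  have ht₁ : t₀ - τ ∈ Icc (t₀ - τ) (t₀ + τ) := ⟨le_rfl, by linarith⟩
  have ht₀ : t₀ ∈ Icc (t₀ - τ) (t₀ + τ) := ⟨by linarith, by linarith⟩
  have hx₀ : x₀ ∈ Icc (x₀ - δ) (x₀ + δ) := ⟨by linarith, by linarith⟩
  have hx₀t₁ := (hlip _ hp).time hp.1 (hRO ⟨hx₀, ht₁⟩)
  rw [sub_sub_cancel_left, abs_neg, abs_of_pos hτ] at hx₀t₁
  set b : ℝ := v x₀ t₀ + L * τ + ε / 2 with hb
  have hbot' : ∀ x ∈ Icc (x₀ - δ) (x₀ + δ), v x (t₀ - τ) ≤ b := fun x hx => by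
    linarith [hbot x hx, (abs_le.1 hx₀t₁).1]
  set m : ℝ := b + 2 * L * (t₀ + τ - (t₀ - τ))
  have hbm : b ≤ m := le_add_of_nonneg_right (mul_nonneg (by positivity) (by linarith))
  have hcol : ∀ z ∈ Icc (x₀ - δ) (x₀ + δ), ∀ t ∈ Icc (t₀ - τ) (t₀ + τ), (z, t) ∈ F →
      ∀ s ∈ Icc (t₀ - τ) (t₀ + τ), v z s ≤ m := fun z hz t ht hzt =>
    (hlip (z, t) ⟨hRO ⟨hz, ht⟩, hzt⟩).le_of_column hL (fun s hs => hRO ⟨hz, hs⟩) ht (hbot' z hz)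
  have hbarrier := le_barrier_of_columns (L := L) (m := m) (B := B) hδ hC hF
    (fun p hp => (hcont p (hRO hp.1) hp.2).continuousWithinAt)
    (fun x hx t ht => hB x t (hRO ⟨hx, ht⟩)) (fun x hx => (hbot' x hx).trans hbm)
    (hcol x₀ hx₀ t₀ ht₀ hp.2) hcol
    (fun z hz t ht hzt x hx => le_of_abs_le <|
      (hlip (z, t) ⟨hRO ⟨hz, ht⟩, hzt⟩).space (hRO ⟨hz, ht⟩) (hRO ⟨hx, ht⟩))
    fun x hx t ht => hsub x t (hRO ⟨hx, ht⟩)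
  have hlim : ∀ᶠ q : ℝ × ℝ in 𝓝 (x₀, t₀),
      m + 2 * B / δ * |q.1 - x₀| + C * (q.2 - (t₀ - τ)) < v x₀ t₀ + ε := by
    refine (Continuous.tendsto (by fun_prop) _).eventually (gt_mem_nhds ?_)
    simp only [sub_self, abs_zero, mul_zero, add_zero, m, b]
    linarith
  filter_upwards [hlim, prod_mem_nhds (Icc_mem_nhds (sub_lt_self x₀ hδ) (lt_add_of_pos_right x₀ hδ))
    (Icc_mem_nhds (sub_lt_self t₀ hτ) (lt_add_of_pos_right t₀ hτ))] with q hq hqR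
  exact (hbarrier q.1 hqR.1 q.2 hqR.2).trans_lt hq

theorem continuousAt_of_crossLipschitzAt {B C : ℝ} (hO : IsOpen O) (hL : 0 ≤ L)
    (hF : IsClosed F) (hp : p ∈ O ∩ F) (hcont : ∀ q ∈ O, q ∉ F → ContinuousAt (uncurry v) q)
    (hlip : ∀ q ∈ O ∩ F, CrossLipschitzAt v L O q) (hB : ∀ x t, (x, t) ∈ O → |v x t| ≤ B)
    (hheat : ∀ x t, (x, t) ∈ O → ∃ f, |f| ≤ C ∧ HasHeatOpAt v f x t) :
    ContinuousAt (uncurry v) p := by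
  have hC : 0 ≤ C := by
    obtain ⟨f, hf, -⟩ := hheat p.1 p.2 hp.1
    exact (abs_nonneg f).trans hf
  have hup : ∀ ε > 0, ∀ᶠ q : ℝ × ℝ in 𝓝 p, v q.1 q.2 < v p.1 p.2 + ε := fun ε hε =>
    eventually_lt_of_crossLipschitzAt hO hC hL hF hp hcont hlip hB (fun x t hxt => by
      obtain ⟨f, hf, hop⟩ := hheat x t hxt
      exact ⟨f, le_of_abs_le hf, hop⟩) hε
  have hlow : ∀ ε > 0, ∀ᶠ q : ℝ × ℝ in 𝓝 p, -v q.1 q.2 < -v p.1 p.2 + ε := fun ε hε =>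
    eventually_lt_of_crossLipschitzAt (v := fun x t => -v x t) hO hC hL hF hp
      (fun q hq hqF => (hcont q hq hqF).neg) (fun q hq => (hlip q hq).neg)
      (fun x t hxt => (abs_neg _).trans_le (hB x t hxt)) (fun x t hxt => by
        obtain ⟨f, hf, hop⟩ := hheat x t hxt
        exact ⟨-f, neg_le.1 (abs_le.1 hf).1, hop.neg⟩) hε
  refine Metric.tendsto_nhds.2 fun ε hε => ?_
  filter_upwards [hup ε hε, hlow ε hε] with q hq_up hq_low
  rw [Real.dist_eq, abs_lt]
  constructor <;> simp only [uncurry] <;> linarith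

theorem continuousAt_uncurry_of_bounded {B C : ℝ} (hD : IsOpen D)
    (hB : ∀ x t, (x, t) ∈ D → |v x t| ≤ B)
    (hheat : ∀ x t, (x, t) ∈ D → ∃ f, |f| ≤ C ∧ HasHeatOpAt v f x t) :
    ∀ p ∈ D, ContinuousAt (uncurry v) p := by
  set F : Set (ℝ × ℝ) := {p | ∀ᶠ q in 𝓝 p, ContinuousAt (uncurry v) q}ᶜ
  have hF : IsClosed F := isOpen_setOfPred_eventually_nhds.isClosed_compl
  have hcont : ∀ p, p ∉ F → ContinuousAt (uncurry v) p := fun p hp =>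
    (notMem_compl_iff.1 hp).self_of_nhds
  by_contra! hdisc
  obtain ⟨p, hpD, hp⟩ := hdisc
  have hspace : ∀ x t, (x, t) ∈ D → DifferentiableAt ℝ (fun y => v y t) x := fun x t hxt => by
    obtain ⟨f, -, hf⟩ := hheat x t hxt
    exact hf.contDiffAt.differentiableAt (by norm_num)
  have htime : ∀ x t, (x, t) ∈ D → DifferentiableAt ℝ (fun s => v x s) t := fun x t hxt => by
    obtain ⟨f, -, hf⟩ := hheat x t hxt
    exact hf.hasDerivAt.differentiableAt
  obtain ⟨O, hOD, hO, ⟨q, hqO, hqF⟩, L, hL, hlip⟩ :=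
    exists_isOpen_crossLipschitzAt hD hF ⟨p, hpD, not_imp_comm.1 (hcont p) hp⟩ hspace htime
  refine hqF (mem_of_superset (hO.mem_nhds hqO) fun z hzO => ?_)
  by_cases hzF : z ∈ F
  · exact continuousAt_of_crossLipschitzAt hO hL hF ⟨hzO, hzF⟩ (fun y _ => hcont y) hlip
      (fun x t h => hB x t (hOD h)) fun x t h => hheat x t (hOD h)
  · exact hcont z hzF

end CrossLipschitz

/-! ### Subsolutions with a power singularity at the final time -/

/-- A supersolution of the heat equation for `t < T`, singular only at `(b, T)`, which equals
`(T - t) ^ (-α)` on the line `x = b`. -/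
def cornerBarrier (α b T x t : ℝ) : ℝ :=
  (T - t + (x - b) ^ 2 / (4 * (α + 1))) ^ (-α)

section CornerBarrier

variable {α b T x t : ℝ}

theorem cornerBarrier_self : cornerBarrier α b T b t = (T - t) ^ (-α) := by
  simp [cornerBarrier]

theorem cornerBarrier_base_pos (hα : 0 ≤ α) (ht : t < T) :
    0 < T - t + (x - b) ^ 2 / (4 * (α + 1)) :=
  add_pos_of_pos_of_nonneg (sub_pos.2 ht) (by positivity)

theorem cornerBarrier_nonneg (hα : 0 ≤ α) (ht : t < T) : 0 ≤ cornerBarrier α b T x t :=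
  rpow_nonneg (cornerBarrier_base_pos hα ht).le _

theorem cornerBarrier_le {d : ℝ} (hα : 0 ≤ α) (ht : t ≤ T) (hd : 0 < d) (hx : d ≤ |x - b|) :
    cornerBarrier α b T x t ≤ (d ^ 2 / (4 * (α + 1))) ^ (-α) := by
  have hsq : d ^ 2 ≤ (x - b) ^ 2 := by
    rw [← sq_abs (x - b)]
    gcongr
  refine rpow_le_rpow_of_nonpos (by positivity) ?_ (neg_nonpos.2 hα)
  exact le_add_of_nonneg_of_le (sub_nonneg.2 ht) (by gcongr)

theorem continuousAt_cornerBarrier (hα : 0 ≤ α) (ht : t < T) :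
    ContinuousAt (uncurry (cornerBarrier α b T)) (x, t) :=
  ContinuousAt.rpow_const (by fun_prop) (Or.inl (cornerBarrier_base_pos hα ht).ne')

theorem exists_hasHeatOpAt_cornerBarrier (hα : 0 ≤ α) (ht : t < T) :
    ∃ f ≥ 0, HasHeatOpAt (cornerBarrier α b T) f x t := by
  set c : ℝ := 4 * (α + 1) with hc
  have : 0 < c := by positivity
  set Z : ℝ → ℝ → ℝ := fun y s => T - s + (y - b) ^ 2 / c with hZ_def
  have hZ : ∀ y, 0 < Z y t := fun y => cornerBarrier_base_pos hα ht
  have hZ_space : ∀ y, HasDerivAt (fun y => Z y t) (2 * (y - b) / c) y := fun y =>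
    (((((hasDerivAt_id' y).sub_const b).pow 2).div_const c).const_add (T - t)).congr_deriv
      (by norm_num)
  have hZ_time : HasDerivAt (fun s => Z x s) (-1) t :=
    ((hasDerivAt_id' t).const_sub T).add_const _
  have hspace : ∀ y, HasDerivAt (fun y => cornerBarrier α b T y t)
      (2 * (y - b) / c * -α * Z y t ^ (-α - 1)) y := fun y =>
    (hZ_space y).rpow_const (Or.inl (hZ y).ne')
  have hspace₂ := ((((hasDerivAt_id' x).sub_const b).const_mul 2).div_const c).mul_const (-α) |>.mul
    ((hZ_space x).rpow_const (p := -α - 1) (Or.inl (hZ x).ne'))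
  have hcontDiff : ContDiffAt ℝ 2 (fun y => cornerBarrier α b T y t) x :=
    ContDiffAt.rpow_const_of_ne (by fun_prop) (hZ x).ne'
  refine ⟨_, ?_, HasHeatOpAt.of_hasDerivAt hcontDiff (.of_forall hspace) hspace₂
    (hZ_time.rpow_const (p := -α) (Or.inl (hZ x).ne'))⟩
  set P : ℝ := Z x t ^ (-α - 1 - 1)
  have hP : 0 < P := rpow_pos_of_pos (hZ x) _
  have hZP : Z x t ^ (-α - 1) = P * Z x t := by
    rw [← rpow_add_one (hZ x).ne', sub_add_cancel]
  rw [hZP, ge_iff_le]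
  have hnonneg : 0 ≤ α * P * (T - t) + 2 * α / c * (P * Z x t) := by
    have : 0 < T - t := sub_pos.2 ht
    have : 0 < Z x t := hZ x
    positivity
  convert hnonneg using 1
  simp only [hZ_def, hc]
  field_simp
  ring

end CornerBarrier

section FinalTimeSingularity

variable {u : ℝ → ℝ → ℝ} {a R R' T₀ T B C α : ℝ}

theorem le_cornerBarrier_of_heatSubsolutionAt (hα : 0 ≤ α) (hB : 0 ≤ B) (hC : 0 ≤ C)
    (hcont : ContinuousOn (uncurry u) (Icc (a - R) (a + R) ×ˢ Ico T₀ T))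
    (hle : ∀ x ∈ Icc (a - R) (a + R), ∀ t ∈ Ico T₀ T, u x t ≤ B * (T - t) ^ (-α))
    (hsub : ∀ x ∈ Icc (a - R) (a + R), ∀ t ∈ Ico T₀ T, 0 < u x t → HeatSubsolutionAt u C x t) :
    ∀ x ∈ Icc (a - R) (a + R), ∀ t ∈ Ico T₀ T, u x t ≤ B * (T - T₀) ^ (-α) + C * (t - T₀) +
      (B * cornerBarrier α (a - R) T x t + B * cornerBarrier α (a + R) T x t) := by
  intro x hx t ht
  set Φ : ℝ → ℝ → ℝ := fun y s => B * (T - T₀) ^ (-α) + C * (s - T₀) +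
    (B * cornerBarrier α (a - R) T y s + B * cornerBarrier α (a + R) T y s)
  have hI : Icc T₀ t ⊆ Ico T₀ T := Icc_subset_Ico_right ht.2
  have hA : 0 ≤ B * (T - T₀) ^ (-α) :=
    mul_nonneg hB (rpow_nonneg (sub_nonneg.2 (ht.1.trans ht.2.le)) _)
  have hCs : ∀ s ∈ Icc T₀ t, 0 ≤ C * (s - T₀) := fun s hs => mul_nonneg hC (sub_nonneg.2 hs.1)
  have hS : ∀ b y, ∀ s ∈ Icc T₀ t, 0 ≤ B * cornerBarrier α b T y s := fun b y s hs =>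
    mul_nonneg hB (cornerBarrier_nonneg hα (hI hs).2)
  have hΦ_cont : ContinuousOn (uncurry Φ) (Icc (a - R) (a + R) ×ˢ Icc T₀ t) := fun q hq => by
    have hS_cont : ∀ b, ContinuousAt (fun q : ℝ × ℝ => cornerBarrier α b T q.1 q.2) q :=
      fun b => continuousAt_cornerBarrier hα (hI hq.2).2
    exact ContinuousAt.continuousWithinAt <| .add (by fun_prop)
      (((hS_cont _).const_mul B).add ((hS_cont _).const_mul B))
  have hΦ_op : ∀ y, ∀ s < T, ∃ f ≥ C, HasHeatOpAt Φ f y s := by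
    intro y s hs
    obtain ⟨f₁, hf₁, hop₁⟩ := exists_hasHeatOpAt_cornerBarrier (b := a - R) (x := y) hα hs
    obtain ⟨f₂, hf₂, hop₂⟩ := exists_hasHeatOpAt_cornerBarrier (b := a + R) (x := y) hα hs
    refine ⟨_, ?_, ((hasHeatOpAt_const _).add (hasHeatOpAt_mul_sub_time C T₀)).add
      ((hop₁.const_mul B).add (hop₂.const_mul B))⟩
    rw [zero_add]
    exact le_add_of_nonneg_right (by positivity)
  refine sub_nonpos.1 (nonpos_of_heatSubsolutionAt (w := fun y s => u y s - Φ y s)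
    (isCompact_Icc.prod isCompact_Icc) ((hcont.mono (prod_mono_right hI)).sub hΦ_cont)
    (fun y hy s hs h => (h ⟨hy, hs⟩).elim) ?_ ?_ x hx t ⟨ht.1, le_rfl⟩)
  · intro y s hys
    obtain ⟨hy, hs⟩ := parabolicBoundary_subset (hx.1.trans hx.2) ht.1 hys
    have hu := hle y hy s (hI hs)
    rcases hys with ⟨-, rfl⟩ | ⟨rfl | rfl, -⟩
    · linarith [hCs s hs, hS (a - R) y s hs, hS (a + R) y s hs]
    · rw [← cornerBarrier_self (b := a - R)] at hu
      linarith [hCs s hs, hS (a + R) (a - R) s hs]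
    · rw [← cornerBarrier_self (b := a + R)] at hu
      linarith [hCs s hs, hS (a - R) (a + R) s hs]
  · intro y hy s hs hpos
    have hs' := Ioc_subset_Icc_self hs
    obtain ⟨f, hf, hop⟩ := hΦ_op y s (hI hs').2
    have hu : 0 < u y s := by
      linarith [hCs s hs', hS (a - R) y s hs', hS (a + R) y s hs']
    exact ((hsub y (Ioo_subset_Icc_self hy) s (hI hs') hu).sub hop).mono (sub_nonpos.2 hf)

theorem exists_forall_le_of_heatSubsolutionAt (hRR' : R' < R) (hα : 0 ≤ α) (hB : 0 ≤ B)
    (hC : 0 ≤ C) (hcont : ContinuousOn (uncurry u) (Icc (a - R) (a + R) ×ˢ Ico T₀ T))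
    (hle : ∀ x ∈ Icc (a - R) (a + R), ∀ t ∈ Ico T₀ T, u x t ≤ B * (T - t) ^ (-α))
    (hsub : ∀ x ∈ Icc (a - R) (a + R), ∀ t ∈ Ico T₀ T, 0 < u x t → HeatSubsolutionAt u C x t) :
    ∃ M, ∀ x ∈ Icc (a - R') (a + R'), ∀ t ∈ Ico T₀ T, u x t ≤ M := by
  set E : ℝ := ((R - R') ^ 2 / (4 * (α + 1))) ^ (-α)
  refine ⟨B * (T - T₀) ^ (-α) + C * (T - T₀) + (B * E + B * E), fun x hx t ht => ?_⟩
  have hbarrier := le_cornerBarrier_of_heatSubsolutionAt hα hB hC hcont hle hsub x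
    ⟨by linarith [hx.1], by linarith [hx.2]⟩ t ht
  have hE : ∀ b, R - R' ≤ |x - b| → B * cornerBarrier α b T x t ≤ B * E := fun b hb =>
    mul_le_mul_of_nonneg_left (cornerBarrier_le hα ht.2.le (sub_pos.2 hRR') hb) hB
  have hleft := hE (a - R) (le_abs.2 (.inl (by linarith [hx.1])))
  have hright := hE (a + R) (le_abs.2 (.inr (by linarith [hx.2])))
  have htime : C * (t - T₀) ≤ C * (T - T₀) := by
    gcongr
    exact ht.2.le
  linarith

end FinalTimeSingularity

/-! ### Power nonlinearities -/

/-- `|∂ₜv − ∂ₓ²v| ≤ C (1 + |v| ^ p)` at `(x, t)`. -/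
def SemilinearHeatAt (v : ℝ → ℝ → ℝ) (C p x t : ℝ) : Prop :=
  ∃ f, HasHeatOpAt v f x t ∧ |f| ≤ C * (1 + |v x t| ^ p)

section Semilinear

variable {v : ℝ → ℝ → ℝ} {μ : ℝ → ℝ} {a R R' T₀ T' T C E m p β x t : ℝ}

theorem SemilinearHeatAt.neg (hv : SemilinearHeatAt v C p x t) :
    SemilinearHeatAt (fun y s => -v y s) C p x t := by
  obtain ⟨f, hop, hf⟩ := hv
  exact ⟨-f, hop.neg, by rwa [abs_neg, abs_neg]⟩

theorem continuousAt_uncurry_of_semilinearHeatAt {D : Set (ℝ × ℝ)} (hD : IsOpen D) (hC : 0 ≤ C)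
    (hp : 0 ≤ p) (hv : ∀ x t, (x, t) ∈ D → SemilinearHeatAt v C p x t)
    (hbdd : ∀ q ∈ D, ∃ B, ∀ᶠ z : ℝ × ℝ in 𝓝 q, |v z.1 z.2| ≤ B) :
    ∀ q ∈ D, ContinuousAt (uncurry v) q := by
  intro q hq
  obtain ⟨B, hB⟩ := hbdd q hq
  obtain ⟨U, hU_sub, hU, hqU⟩ := _root_.mem_nhds_iff.1 (hB.and (hD.mem_nhds hq))
  refine continuousAt_uncurry_of_bounded (B := B) (C := C * (1 + B ^ p)) hU
    (fun x t hxt => (hU_sub hxt).1) (fun x t hxt => ?_) q hqU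
  obtain ⟨f, hop, hf⟩ := hv x t (hU_sub hxt).2
  have hvB : |v x t| ≤ B := (hU_sub hxt).1
  exact ⟨f, hf.trans (by gcongr), hop⟩

theorem continuousAt_uncurry_of_le_mul_rpow {I : Set ℝ} (hI : IsOpen I) (hC : 0 ≤ C) (hp : 0 ≤ p)
    (hv : ∀ x ∈ I, ∀ t ∈ Ioo T₀ T, SemilinearHeatAt v C p x t)
    (hle : ∀ x ∈ I, ∀ t ∈ Ioo T₀ T, |v x t| ≤ E * (T - t) ^ (-β)) :
    ∀ q ∈ I ×ˢ Ioo T₀ T, ContinuousAt (uncurry v) q := by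
  have hD : IsOpen (I ×ˢ Ioo T₀ T) := hI.prod isOpen_Ioo
  refine continuousAt_uncurry_of_semilinearHeatAt hD hC hp (fun x t h => hv x h.1 t h.2)
    fun q hq => ⟨E * (T - q.2) ^ (-β) + 1, ?_⟩
  have hcont : ContinuousAt (fun z : ℝ × ℝ => E * (T - z.2) ^ (-β)) q :=
    continuousAt_const.mul
      (ContinuousAt.rpow_const (by fun_prop) (Or.inl (sub_pos.2 hq.2.2).ne'))
  filter_upwards [hD.mem_nhds hq, hcont.eventually (gt_mem_nhds (lt_add_one _))] with z hz hz'
  exact (hle z.1 hz.1 z.2 hz.2).trans hz'.le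

theorem SemilinearHeatAt.heatSubsolutionAt_mul {h : ℝ} (hv : SemilinearHeatAt v C p x t)
    (hC : 0 ≤ C) (hpos : 0 ≤ v x t) (habsorb : C * v x t ^ p ≤ h * v x t)
    (hμ : HasDerivAt μ (-h * μ t) t) (hμ0 : 0 ≤ μ t) (hμm : μ t ≤ m) :
    HeatSubsolutionAt (fun y s => v y s * μ s) (C * m) x t := by
  obtain ⟨f, hop, hf⟩ := hv
  rw [abs_of_nonneg hpos] at hf
  refine ⟨_, ?_, hop.mul_time hμ⟩
  calc f * μ t + v x t * (-h * μ t) = (f - h * v x t) * μ t := by ring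
    _ ≤ C * μ t := by
      gcongr
      linarith [le_of_abs_le hf]
    _ ≤ C * m := by gcongr

theorem mul_rpow_le_of_le_mul_rpow {w s : ℝ} (hp : 1 ≤ p) (hC : 0 ≤ C) (hE : 0 ≤ E) (hs : 0 ≤ s)
    (hw : 0 ≤ w) (hwE : w ≤ E * s ^ (-β)) :
    C * w ^ p ≤ C * E ^ (p - 1) * s ^ (-(β * (p - 1))) * w := by
  have hrate : w ^ (p - 1) ≤ E ^ (p - 1) * s ^ (-(β * (p - 1))) :=
    calc w ^ (p - 1) ≤ (E * s ^ (-β)) ^ (p - 1) := by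
          gcongr
      _ = E ^ (p - 1) * s ^ (-(β * (p - 1))) := by
        rw [mul_rpow hE (by positivity), ← rpow_mul hs, neg_mul]
  calc C * w ^ p = C * w ^ (p - 1) * w := by
        rw [mul_assoc, ← rpow_add_one' hw (by linarith), sub_add_cancel]
    _ ≤ C * (E ^ (p - 1) * s ^ (-(β * (p - 1)))) * w := by gcongr
    _ = C * E ^ (p - 1) * s ^ (-(β * (p - 1))) * w := by ring

/- The integrating factor `μ` decays at the rate at which the nonlinearity can make `v` grow. -/
theorem exists_forall_mul_le_of_integratingFactor (hRR' : R' < R) (hp : 1 ≤ p) (hC : 0 ≤ C)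
    (hE : 0 ≤ E) (hβ : 0 ≤ β) (hm : 0 ≤ m)
    (hcont : ContinuousOn (uncurry v) (Icc (a - R) (a + R) ×ˢ Ico T₀ T))
    (hv : ∀ x ∈ Icc (a - R) (a + R), ∀ t ∈ Ico T₀ T, SemilinearHeatAt v C p x t)
    (hle : ∀ x ∈ Icc (a - R) (a + R), ∀ t ∈ Ico T₀ T, |v x t| ≤ E * (T - t) ^ (-β))
    (hμ : ∀ t ∈ Ico T₀ T,
      HasDerivAt μ (-(C * E ^ (p - 1) * (T - t) ^ (-(β * (p - 1)))) * μ t) t)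
    (hμ0 : ∀ t ∈ Ico T₀ T, 0 < μ t) (hμm : ∀ t ∈ Ico T₀ T, μ t ≤ m) :
    ∃ M, ∀ x ∈ Icc (a - R') (a + R'), ∀ t ∈ Ico T₀ T, v x t * μ t ≤ M := by
  refine exists_forall_le_of_heatSubsolutionAt (u := fun x t => v x t * μ t) (B := E * m)
    (C := C * m) (α := β) hRR' hβ (by positivity) (by positivity) ?_ ?_ ?_
  · refine hcont.mul fun q hq => ContinuousAt.continuousWithinAt ?_
    exact ContinuousAt.comp (f := Prod.snd) (hμ q.2 hq.2).continuousAt continuousAt_snd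
  · intro x hx t ht
    have hT : 0 ≤ (T - t) ^ (-β) := rpow_nonneg (sub_nonneg.2 ht.2.le) _
    calc v x t * μ t ≤ E * (T - t) ^ (-β) * m :=
          mul_le_mul (le_of_abs_le (hle x hx t ht)) (hμm t ht) (hμ0 t ht).le (by positivity)
      _ = E * m * (T - t) ^ (-β) := by ring
  · intro x hx t ht hpos
    have hvpos : 0 < v x t := pos_of_mul_pos_left hpos (hμ0 t ht).le
    exact (hv x hx t ht).heatSubsolutionAt_mul hC hvpos.le
      (mul_rpow_le_of_le_mul_rpow hp hC hE (sub_nonneg.2 ht.2.le) hvpos.le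
        (le_of_abs_le (hle x hx t ht))) (hμ t ht) (hμ0 t ht).le (hμm t ht)

theorem exists_forall_abs_mul_le_of_integratingFactor (hRR' : R' < R) (hp : 1 ≤ p) (hC : 0 ≤ C)
    (hE : 0 ≤ E) (hβ : 0 ≤ β) (hm : 0 ≤ m)
    (hcont : ContinuousOn (uncurry v) (Icc (a - R) (a + R) ×ˢ Ico T₀ T))
    (hv : ∀ x ∈ Icc (a - R) (a + R), ∀ t ∈ Ico T₀ T, SemilinearHeatAt v C p x t)
    (hle : ∀ x ∈ Icc (a - R) (a + R), ∀ t ∈ Ico T₀ T, |v x t| ≤ E * (T - t) ^ (-β))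
    (hμ : ∀ t ∈ Ico T₀ T,
      HasDerivAt μ (-(C * E ^ (p - 1) * (T - t) ^ (-(β * (p - 1)))) * μ t) t)
    (hμ0 : ∀ t ∈ Ico T₀ T, 0 < μ t) (hμm : ∀ t ∈ Ico T₀ T, μ t ≤ m) :
    ∃ M ≥ 0, ∀ x ∈ Icc (a - R') (a + R'), ∀ t ∈ Ico T₀ T, |v x t| * μ t ≤ M := by
  obtain ⟨M₁, hM₁⟩ :=
    exists_forall_mul_le_of_integratingFactor hRR' hp hC hE hβ hm hcont hv hle hμ hμ0 hμm
  obtain ⟨M₂, hM₂⟩ := exists_forall_mul_le_of_integratingFactor (v := fun x t => -v x t) hRR' hp hC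
    hE hβ hm hcont.neg (fun x hx t ht => (hv x hx t ht).neg)
    (fun x hx t ht => (abs_neg _).trans_le (hle x hx t ht)) hμ hμ0 hμm
  refine ⟨max 0 (max M₁ M₂), le_max_left _ _, fun x hx t ht => le_max_of_le_right ?_⟩
  rw [abs_eq_max_neg, max_mul_of_nonneg _ _ (hμ0 t ht).le]
  exact max_le_max (hM₁ x hx t ht) (hM₂ x hx t ht)

theorem hasDerivAt_const_sub_rpow {κ : ℝ} (ht : t < T) :
    HasDerivAt (fun s => (T - s) ^ κ) (-(κ * (T - t) ^ (κ - 1))) t :=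
  (((hasDerivAt_id' t).const_sub T).rpow_const (Or.inl (sub_pos.2 ht).ne')).congr_deriv (by ring)

theorem exists_forall_abs_le_mul_rpow_of_critical_bound (hRR' : R' < R) (hp : 1 < p) (hC : 0 ≤ C)
    (hE : 0 ≤ E)
    (hcont : ContinuousOn (uncurry v) (Icc (a - R) (a + R) ×ˢ Ico T₀ T))
    (hv : ∀ x ∈ Icc (a - R) (a + R), ∀ t ∈ Ico T₀ T, SemilinearHeatAt v C p x t)
    (hle : ∀ x ∈ Icc (a - R) (a + R), ∀ t ∈ Ico T₀ T,
      |v x t| ≤ E * (T - t) ^ (-(1 / (p - 1)))) :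
    ∃ M ≥ 0, ∀ x ∈ Icc (a - R') (a + R'), ∀ t ∈ Ico T₀ T,
      |v x t| ≤ M * (T - t) ^ (-(C * E ^ (p - 1))) := by
  have hp₁ : 0 < p - 1 := sub_pos.2 hp
  set κ : ℝ := C * E ^ (p - 1)
  have hκ : 0 ≤ κ := by positivity
  obtain ⟨M, hM₀, hM⟩ : ∃ M ≥ 0, ∀ x ∈ Icc (a - R') (a + R'), ∀ t ∈ Ico T₀ T,
      |v x t| * (T - t) ^ κ ≤ M := by
    refine exists_forall_abs_mul_le_of_integratingFactor (m := |T - T₀| ^ κ) hRR' hp.le hC hE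
      (by positivity) (by positivity) hcont hv hle (fun t ht => ?_)
      (fun t ht => rpow_pos_of_pos (sub_pos.2 ht.2) κ) fun t ht => ?_
    · refine (hasDerivAt_const_sub_rpow ht.2).congr_deriv ?_
      rw [div_mul_cancel₀ _ hp₁.ne', rpow_sub_one (sub_pos.2 ht.2).ne', rpow_neg_one]
      ring
    · exact rpow_le_rpow (sub_nonneg.2 ht.2.le)
        ((sub_le_sub_left ht.1 T).trans (le_abs_self _)) hκ
  refine ⟨M, hM₀, fun x hx t ht => ?_⟩
  rw [rpow_neg (sub_nonneg.2 ht.2.le), ← div_eq_mul_inv,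
    le_div_iff₀ (rpow_pos_of_pos (sub_pos.2 ht.2) κ)]
  exact hM x hx t ht

theorem exists_forall_abs_le_of_subcritical_bound (hRR' : R' < R) (hp : 1 ≤ p) (hC : 0 ≤ C)
    (hE : 0 ≤ E) (hβ : 0 ≤ β) (hβp : β * (p - 1) < 1)
    (hcont : ContinuousOn (uncurry v) (Icc (a - R) (a + R) ×ˢ Ico T₀ T))
    (hv : ∀ x ∈ Icc (a - R) (a + R), ∀ t ∈ Ico T₀ T, SemilinearHeatAt v C p x t)
    (hle : ∀ x ∈ Icc (a - R) (a + R), ∀ t ∈ Ico T₀ T, |v x t| ≤ E * (T - t) ^ (-β)) :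
    ∃ M, ∀ x ∈ Icc (a - R') (a + R'), ∀ t ∈ Ico T₀ T, |v x t| ≤ M := by
  set θ : ℝ := β * (p - 1)
  have hθ : 0 < 1 - θ := sub_pos.2 hβp
  set k : ℝ := C * E ^ (p - 1) / (1 - θ)
  have hk : 0 ≤ k := by positivity
  have hkθ : k * (1 - θ) = C * E ^ (p - 1) := div_mul_cancel₀ _ hθ.ne'
  obtain ⟨M, -, hM⟩ : ∃ M ≥ 0, ∀ x ∈ Icc (a - R') (a + R'), ∀ t ∈ Ico T₀ T,
      |v x t| * exp (k * (T - t) ^ (1 - θ)) ≤ M := by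
    refine exists_forall_abs_mul_le_of_integratingFactor (m := exp (k * |T - T₀| ^ (1 - θ))) hRR' hp
      hC hE hβ (exp_nonneg _) hcont hv hle (fun t ht => ?_) (fun t _ => exp_pos _) fun t ht => ?_
    · refine ((hasDerivAt_const_sub_rpow ht.2).const_mul k).exp.congr_deriv ?_
      rw [sub_sub_cancel_left, ← hkθ]
      ring
    · refine exp_le_exp.2 (mul_le_mul_of_nonneg_left ?_ hk)
      exact rpow_le_rpow (sub_nonneg.2 ht.2.le)
        ((sub_le_sub_left ht.1 T).trans (le_abs_self _)) hθ.le
  refine ⟨M, fun x hx t ht => le_trans ?_ (hM x hx t ht)⟩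
  have hT : 0 ≤ (T - t) ^ (1 - θ) := rpow_nonneg (sub_nonneg.2 ht.2.le) _
  exact le_mul_of_one_le_right (abs_nonneg _) (one_le_exp (by positivity))

theorem exists_forall_abs_le_of_small_critical_bound (hRR' : R' < R) (hT : T₀ < T') (hp : 1 < p)
    (hC : 0 ≤ C) (hE : 0 ≤ E) (hsmall : C * E ^ (p - 1) * (p - 1) < 1)
    (hv : ∀ x ∈ ball a R, ∀ t ∈ Ioo T₀ T, SemilinearHeatAt v C p x t)
    (hle : ∀ x ∈ ball a R, ∀ t ∈ Ioo T₀ T, |v x t| ≤ E * (T - t) ^ (-(1 / (p - 1)))) :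
    ∃ M, ∀ x ∈ closedBall a R', ∀ t ∈ Ico T' T, |v x t| ≤ M := by
  obtain ⟨R₁, hR'₁, hR₁⟩ := exists_between hRR'
  obtain ⟨R₂, hR'₂, hR₂⟩ := exists_between hR'₁
  have hball : Icc (a - R₁) (a + R₁) ⊆ ball a R := by
    rw [← Real.closedBall_eq_Icc]
    exact closedBall_subset_ball hR₁
  have hIco : Ico T' T ⊆ Ioo T₀ T := fun t ht => ⟨hT.trans_le ht.1, ht.2⟩
  have hR₂₁ : Icc (a - R₂) (a + R₂) ⊆ Icc (a - R₁) (a + R₁) :=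
    Icc_subset_Icc (by linarith) (by linarith)
  have hcont : ContinuousOn (uncurry v) (Icc (a - R₁) (a + R₁) ×ˢ Ico T' T) := fun q hq =>
    (continuousAt_uncurry_of_le_mul_rpow isOpen_ball hC (by linarith) hv hle q
      ⟨hball hq.1, hIco hq.2⟩).continuousWithinAt
  obtain ⟨M₁, hM₁, hbound₁⟩ := exists_forall_abs_le_mul_rpow_of_critical_bound hR₂ hp hC hE hcont
    (fun x hx t ht => hv x (hball hx) t (hIco ht)) fun x hx t ht => hle x (hball hx) t (hIco ht)
  rw [Real.closedBall_eq_Icc]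
  exact exists_forall_abs_le_of_subcritical_bound hR'₂ hp.le hC hM₁ (by positivity) hsmall
    (hcont.mono (prod_mono_left hR₂₁))
    (fun x hx t ht => hv x (hball (hR₂₁ hx)) t (hIco ht)) hbound₁

end Semilinear

/-- Giga–Kohn: no blow-up under the ODE threshold. If `v` solves the differential
inequality `|∂ₜv − ∂ₓ²v| ≤ C0(1+|v|^p)` on `B(a,r) × [T−r²,T)` and satisfies
`|v| ≤ η0 (T−t)^{−1/(p−1)}` there, then `v` does not blow up at `(a,T)`. -/
theorem giga_kohn_no_blowup (p : ℝ) (hp : 1 < p) :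
    ∀ C0 > (0:ℝ), ∃ η0 > (0:ℝ), ∀ T a r : ℝ, 0 < r →
    ∀ v g : ℝ → ℝ → ℝ,
      -- v is a classical solution of the differential inequality
      (∀ t ∈ Set.Ico (T - r^2) T, ContDiffOn ℝ 2 (fun x => v x t) (Metric.ball a r)) →
      (∀ x ∈ Metric.ball a r, ∀ t ∈ Set.Ico (T - r^2) T,
        HasDerivWithinAt (fun τ => v x τ) (g x t) (Set.Ico (T - r^2) T) t ∧
        |g x t - deriv (deriv (fun ξ => v ξ t)) x| ≤ C0 * (1 + |v x t| ^ p)) →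
      -- the ODE-threshold bound
      (∀ x ∈ Metric.ball a r, ∀ t ∈ Set.Ico (T - r^2) T,
        |v x t| ≤ η0 * (T - t) ^ (-(1/(p-1)))) →
      -- conclusion: v is bounded near (a,T)
      ∃ r' : ℝ, 0 < r' ∧ r' < r ∧ ∃ M : ℝ,
        ∀ x ∈ Metric.ball a r', ∀ t ∈ Set.Ico (T - r'^2) T, |v x t| ≤ M := by
  intro C0 hC0
  have hp₁ : 0 < p - 1 := sub_pos.2 hp
  set η : ℝ := (1 / (2 * (p - 1)) / C0) ^ (1 / (p - 1)) with hη_def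
  have hη : 0 < η := by positivity
  have hsmall : C0 * η ^ (p - 1) * (p - 1) = 1 / 2 := by
    rw [hη_def, ← rpow_mul (by positivity), one_div_mul_cancel hp₁.ne', rpow_one]
    field_simp
  refine ⟨η, hη, fun T a r hr v g hspace htime hbound => ?_⟩
  have hIco : Ioo (T - r ^ 2) T ⊆ Ico (T - r ^ 2) T := Ioo_subset_Ico_self
  have hv : ∀ x ∈ ball a r, ∀ t ∈ Ioo (T - r ^ 2) T, SemilinearHeatAt v C0 p x t := by
    intro x hx t ht
    obtain ⟨hderiv, hineq⟩ := htime x hx t (hIco ht)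
    refine ⟨_, ⟨(hspace t (hIco ht)).contDiffAt (isOpen_ball.mem_nhds hx), ?_⟩, hineq⟩
    rw [iteratedDeriv_succ, iteratedDeriv_one, sub_add_cancel]
    exact hderiv.hasDerivAt (Ico_mem_nhds ht.1 ht.2)
  have hT : T - r ^ 2 < T - (r / 2) ^ 2 := by nlinarith [pow_pos hr 2]
  obtain ⟨M, hM⟩ := exists_forall_abs_le_of_small_critical_bound (half_lt_self hr) hT hp hC0.le
    hη.le (by linarith) hv fun x hx t ht => hbound x hx t (hIco ht)
  exact ⟨r / 2, half_pos hr, half_lt_self hr, M, fun x hx => hM x (ball_subset_closedBall hx)⟩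

end
end

section
/- Fix K0>0 and T∈(0,e^{−1}). For every θ0≠0 with |θ0| small enough there exists a unique t0(θ0)∈(0,T) satisfying |θ0| = K0√((T−t0(θ0))|log(T−t0(θ0))|), and as θ0→0 one has the asymptotics log(T−t0(θ0)) ∼ 2 log|θ0| and T−t0(θ0) ∼ θ0²/(2K0²|log|θ0||), i.e. the ratios log(T−t0(θ0))/(2 log|θ0|) and (T−t0(θ0))·2K0²|log|θ0||/θ0² both tend to 1. -/
/-!
With `s = T - t0`, the defining equation reads `negMulLog s = θ0² / K0²`. Since `negMulLog` is
concave, vanishes at `0` and is positive at `T < 1`, each small positive value is attained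
exactly once on `(0, T)`, at a point tending to `0` with the value. Both asymptotics then come from
`log (K0² * negMulLog s) = log s + log (-log s) + log K0² ∼ log s` as `s → 0⁺`: the left side is
`2 log |θ0|`, and `s * |log s| = θ0² / K0²`.
-/

noncomputable section

open Real Set Filter Topology

section ConcaveInverse

section OrderedField

variable {𝕜 : Type*} [Field 𝕜] [LinearOrder 𝕜] [IsStrictOrderedRing 𝕜] {f : 𝕜 → 𝕜} {a b : 𝕜}

theorem strictMonoOn_lt_right_of_concaveOn {S : Set 𝕜} (hf : ConcaveOn 𝕜 S f) (hb : b ∈ S) :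
    StrictMonoOn f {x ∈ S | x < b ∧ f x < f b} :=
  fun _ hx _ hy hxy => hf.strictMonoOn hb hy.2.1 hy.2.2 ⟨hx.1, hxy.le⟩ ⟨hy.1, le_rfl⟩ hxy

theorem left_lt_of_concaveOn_of_lt_right (hf : ConcaveOn 𝕜 (Icc a b) f) (hab : f a < f b) {c : 𝕜}
    (hc : c ∈ Ioc a b) : f a < f c := by
  by_contra! hca
  have hcb : f c < f b := hca.trans_lt hab
  have hne : c ≠ b := fun h => hcb.ne (congrArg f h)
  have hb : b ∈ Icc a b := ⟨hc.1.le.trans hc.2, le_rfl⟩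
  have ha : a ∈ Icc a b := ⟨le_rfl, hb.1⟩
  have hlt : f a < f c := strictMonoOn_lt_right_of_concaveOn hf hb
    ⟨ha, hc.1.trans_le hc.2, hab⟩ ⟨Ioc_subset_Icc_self hc, hc.2.lt_of_ne hne, hcb⟩ hc.1
  exact hlt.not_ge hca

theorem tendsto_nhdsGT_left_of_concaveOn [TopologicalSpace 𝕜] [OrderTopology 𝕜] {ι : Type*}
    {l : Filter ι} {u : ι → 𝕜} (hf : ConcaveOn 𝕜 (Icc a b) f) (hab : f a < f b)
    (hu : ∀ᶠ i in l, u i ∈ Ioo a b) (hfu : Tendsto (fun i => f (u i)) l (𝓝 (f a))) :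
    Tendsto u l (𝓝[>] a) := by
  refine tendsto_nhdsWithin_iff.2 ⟨tendsto_order.2 ⟨fun c hc => ?_, fun c hc => ?_⟩, ?_⟩
  · exact hu.mono fun i hi => hc.trans hi.1
  · rcases le_or_gt b c with hbc | hcb
    · exact hu.mono fun i hi => hi.2.trans_le hbc
    · have hmin : f a < min (f c) (f b) :=
        lt_min (left_lt_of_concaveOn_of_lt_right hf hab ⟨hc, hcb.le⟩) hab
      filter_upwards [hu, hfu.eventually_lt_const hmin] with i hi hfi
      by_contra! hci
      exact hfi.not_ge <| hf.min_le_of_mem_Icc ⟨hc.le, hcb.le⟩ ⟨(hc.trans hcb).le, le_rfl⟩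
        ⟨hci, hi.2.le⟩
  · exact hu.mono fun i hi => hi.1

end OrderedField

theorem exists_inverse_tendsto_nhdsGT_of_concaveOn {f : ℝ → ℝ} {a b : ℝ} (hab : a ≤ b)
    (hf : ConcaveOn ℝ (Icc a b) f) (hcont : ContinuousOn f (Icc a b)) (hlt : f a < f b) :
    ∃ g : ℝ → ℝ, Tendsto g (𝓝[>] (f a)) (𝓝[>] a) ∧
      ∀ y ∈ Ioo (f a) (f b), g y ∈ Ioo a b ∧ ∀ x ∈ Ioo a b, f x = y ↔ x = g y := by
  have hsolve : ∀ y ∈ Ioo (f a) (f b), ∃ x, x ∈ Ioo a b ∧ f x = y :=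
    fun y hy => intermediate_value_Ioo hab hcont hy
  choose! g hg using hsolve
  have hinj : InjOn f {x ∈ Icc a b | x < b ∧ f x < f b} :=
    (strictMonoOn_lt_right_of_concaveOn hf (right_mem_Icc.2 hab)).injOn
  refine ⟨g, ?_, fun y hy => ⟨(hg y hy).1, fun x hx => ⟨fun hxy => ?_, fun hxg => ?_⟩⟩⟩
  · have hev : ∀ᶠ y in 𝓝[>] (f a), y ∈ Ioo (f a) (f b) := Ioo_mem_nhdsGT hlt
    refine tendsto_nhdsGT_left_of_concaveOn hf hlt (hev.mono fun y hy => (hg y hy).1) ?_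
    exact (tendsto_nhdsWithin_of_tendsto_nhds tendsto_id).congr'
      (hev.mono fun y hy => (hg y hy).2.symm)
  · obtain ⟨hgy, hfgy⟩ := hg y hy
    exact hinj ⟨Ioo_subset_Icc_self hx, hx.2, hxy.trans_lt hy.2⟩
      ⟨Ioo_subset_Icc_self hgy, hgy.2, hfgy.trans_lt hy.2⟩ (hxy.trans hfgy.symm)
  · rw [hxg, (hg y hy).2]

end ConcaveInverse

theorem negMulLog_pos {s : ℝ} (hs : 0 < s) (hs1 : s < 1) : 0 < negMulLog s := by
  rw [negMulLog_eq_neg]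
  exact neg_pos.2 (mul_log_neg hs hs1)

theorem mul_abs_log_eq_negMulLog {s : ℝ} (hs : 0 ≤ s) (hs1 : s ≤ 1) :
    s * |log s| = negMulLog s := by
  rw [abs_of_nonpos (log_nonpos hs hs1), negMulLog, neg_mul_comm]

theorem abs_eq_mul_sqrt_mul_abs_log_iff {K s θ : ℝ} (hK : 0 < K) (hs : 0 ≤ s) (hs1 : s ≤ 1) :
    |θ| = K * √(s * |log s|) ↔ negMulLog s = θ ^ 2 / K ^ 2 := by
  rw [mul_abs_log_eq_negMulLog hs hs1, ← sq_eq_sq₀ (abs_nonneg θ) (by positivity), sq_abs, mul_pow,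
    sq_sqrt (negMulLog_nonneg hs hs1), eq_div_iff (by positivity), mul_comm, eq_comm]

theorem tendsto_log_mul_negMulLog_div_log {c : ℝ} (hc : c ≠ 0) :
    Tendsto (fun s => log (c * negMulLog s) / log s) (𝓝[>] 0) (𝓝 1) := by
  have hlog : Tendsto (fun s => -log s) (𝓝[>] 0) atTop :=
    tendsto_neg_atBot_atTop.comp tendsto_log_nhdsGT_zero
  have hconst : Tendsto (fun s => log c / -log s) (𝓝[>] 0) (𝓝 0) := hlog.const_div_atTop _
  have hloglog : Tendsto (fun s => log (-log s) / -log s) (𝓝[>] 0) (𝓝 0) :=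
    isLittleO_log_id_atTop.tendsto_div_nhds_zero.comp hlog
  have hsum : Tendsto (fun s => 1 - (log c / -log s + log (-log s) / -log s)) (𝓝[>] 0) (𝓝 1) := by
    simpa only [add_zero, sub_zero] using tendsto_const_nhds.sub (hconst.add hloglog)
  refine hsum.congr' ?_
  filter_upwards [self_mem_nhdsWithin, hlog.eventually_gt_atTop 0] with s (hs : 0 < s) hlogs
  have hexpand : log (c * negMulLog s) = log c + (log s + log (-log s)) := by
    rw [negMulLog, neg_mul_comm, log_mul hc (mul_pos hs hlogs).ne', log_mul hs.ne' hlogs.ne']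
  have hne : log s ≠ 0 := (neg_pos.1 hlogs).ne
  rw [hexpand]
  field_simp
  ring

theorem tendsto_mul_abs_log_mul_negMulLog_div_negMulLog {c : ℝ} (hc : c ≠ 0) :
    Tendsto (fun s => s * |log (c * negMulLog s)| / negMulLog s) (𝓝[>] 0) (𝓝 1) := by
  have habs : Tendsto (fun s => |log (c * negMulLog s) / log s|) (𝓝[>] 0) (𝓝 1) := by
    simpa only [abs_one] using (tendsto_log_mul_negMulLog_div_log hc).abs
  refine habs.congr' ?_
  filter_upwards [Ioo_mem_nhdsGT one_pos] with s hs
  rw [← mul_abs_log_eq_negMulLog hs.1.le hs.2.le, mul_div_mul_left _ _ hs.1.ne', abs_div]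

theorem tendsto_sq_div_nhdsNE_zero {c : ℝ} (hc : 0 < c) :
    Tendsto (fun x : ℝ => x ^ 2 / c) (𝓝[≠] 0) (𝓝[>] 0) := by
  refine tendsto_nhdsWithin_iff.2 ⟨?_, ?_⟩
  · exact tendsto_nhdsWithin_of_tendsto_nhds (Continuous.tendsto' (by fun_prop) _ _ (by simp))
  · filter_upwards [self_mem_nhdsWithin] with x (hx : x ≠ 0)
    exact div_pos (by positivity) hc

theorem exists_negMulLog_eq_sq_div_sq_branch {K T : ℝ} (hK : K ≠ 0) (hT : 0 < T) (hT1 : T < 1) :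
    ∃ δ > 0, ∃ s : ℝ → ℝ, Tendsto s (𝓝[≠] 0) (𝓝[>] 0) ∧ ∀ θ ≠ 0, |θ| ≤ δ →
      s θ ∈ Ioo 0 T ∧ ∀ x ∈ Ioo 0 T, negMulLog x = θ ^ 2 / K ^ 2 ↔ x = s θ := by
  have hpos : negMulLog 0 < negMulLog T := negMulLog_zero.trans_lt (negMulLog_pos hT hT1)
  obtain ⟨g, hg0, hg⟩ := exists_inverse_tendsto_nhdsGT_of_concaveOn hT.le
    (concaveOn_negMulLog.subset Icc_subset_Ici_self (convex_Icc 0 T))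
    continuous_negMulLog.continuousOn hpos
  rw [negMulLog_zero] at hg0 hg hpos
  have hy : Tendsto (fun θ => θ ^ 2 / K ^ 2) (𝓝[≠] 0) (𝓝[>] 0) :=
    tendsto_sq_div_nhdsNE_zero (by positivity)
  obtain ⟨δ, hδ, hsmall⟩ := (nhdsWithin_hasBasis Metric.nhds_basis_closedBall _).eventually_iff.1
    (hy.eventually (Ioo_mem_nhdsGT hpos))
  exact ⟨δ, hδ, fun θ => g (θ ^ 2 / K ^ 2), hg0.comp hy,
    fun θ hθ hθδ => hg _ (hsmall ⟨by simpa using hθδ, hθ⟩)⟩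

section BranchAsymptotics

variable {K : ℝ} {s : ℝ → ℝ} {l : Filter ℝ}

theorem log_sq_mul_of_eq_sq_div_sq {y θ : ℝ} (hK : K ≠ 0) (h : y = θ ^ 2 / K ^ 2) :
    log (K ^ 2 * y) = 2 * log |θ| := by
  rw [h, mul_div_cancel₀ _ (by positivity), log_pow, log_abs, Nat.cast_ofNat]

theorem tendsto_log_div_two_mul_log_abs_of_negMulLog_eq (hK : K ≠ 0) (hs0 : Tendsto s l (𝓝[>] 0))
    (hs : ∀ᶠ θ in l, negMulLog (s θ) = θ ^ 2 / K ^ 2) :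
    Tendsto (fun θ => log (s θ) / (2 * log |θ|)) l (𝓝 1) := by
  have hratio : Tendsto (fun θ => (log (K ^ 2 * negMulLog (s θ)) / log (s θ))⁻¹) l (𝓝 1) := by
    simpa only [inv_one, Function.comp_apply] using
      ((tendsto_log_mul_negMulLog_div_log (pow_ne_zero 2 hK)).comp hs0).inv₀ one_ne_zero
  refine hratio.congr' (hs.mono fun θ hθ => ?_)
  rw [log_sq_mul_of_eq_sq_div_sq hK hθ, inv_div]

theorem tendsto_mul_abs_log_div_sq_of_negMulLog_eq (hK : K ≠ 0) (hs0 : Tendsto s l (𝓝[>] 0))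
    (hs : ∀ᶠ θ in l, negMulLog (s θ) = θ ^ 2 / K ^ 2) :
    Tendsto (fun θ => s θ * (2 * K ^ 2 * |log (|θ|)|) / θ ^ 2) l (𝓝 1) := by
  refine ((tendsto_mul_abs_log_mul_negMulLog_div_negMulLog (pow_ne_zero 2 hK)).comp hs0).congr'
    (hs.mono fun θ hθ => ?_)
  rw [Function.comp_apply, log_sq_mul_of_eq_sq_div_sq hK hθ, hθ, abs_mul, abs_two]
  field_simp

end BranchAsymptotics

theorem asymptotics_t0_general (K0 T : ℝ) (hK0 : 0 < K0) (hT : 0 < T) (hT1 : T < 1) :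
    ∃ δ > (0:ℝ), ∃ t0 : ℝ → ℝ,
      (∀ θ0 : ℝ, θ0 ≠ 0 → |θ0| ≤ δ →
        t0 θ0 ∈ Set.Ioo (0:ℝ) T ∧
        |θ0| = K0 * Real.sqrt ((T - t0 θ0) * |Real.log (T - t0 θ0)|) ∧
        (∀ t' ∈ Set.Ioo (0:ℝ) T,
          |θ0| = K0 * Real.sqrt ((T - t') * |Real.log (T - t')|) → t' = t0 θ0)) ∧
      Tendsto (fun θ0 => Real.log (T - t0 θ0) / (2 * Real.log |θ0|)) (𝓝[≠] 0) (𝓝 1) ∧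
      Tendsto (fun θ0 => (T - t0 θ0) * (2 * K0^2 * |Real.log (|θ0|)|) / θ0^2)
        (𝓝[≠] 0) (𝓝 1) := by
  obtain ⟨δ, hδ, s, hs0, hs⟩ := exists_negMulLog_eq_sq_div_sq_branch hK0.ne' hT hT1
  have hsub {x : ℝ} (hx : x ∈ Ioo 0 T) : T - x ∈ Ioo 0 T := by simpa [and_comm] using hx
  have hroot : ∀ᶠ θ in 𝓝[≠] 0, negMulLog (s θ) = θ ^ 2 / K0 ^ 2 := by
    filter_upwards [self_mem_nhdsWithin, nhdsWithin_le_nhds (Metric.closedBall_mem_nhds 0 hδ)]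
      with θ hθ hθδ
    obtain ⟨hmem, huniq⟩ := hs θ hθ (by simpa using hθδ)
    exact (huniq _ hmem).2 rfl
  refine ⟨δ, hδ, fun θ => T - s θ, fun θ hθ hθδ => ?_, ?_, ?_⟩
  · obtain ⟨hmem, huniq⟩ := hs θ hθ hθδ
    have hequiv {x : ℝ} (hx : x ∈ Ioo 0 T) : |θ| = K0 * √(x * |log x|) ↔ x = s θ :=
      (abs_eq_mul_sqrt_mul_abs_log_iff hK0 hx.1.le (hx.2.trans hT1).le).trans (huniq x hx)
    simp only [sub_sub_cancel]
    refine ⟨hsub hmem, (hequiv hmem).2 rfl, fun t ht hθt => ?_⟩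
    rw [← (hequiv (hsub ht)).1 hθt, sub_sub_cancel]
  · simpa only [sub_sub_cancel] using
      tendsto_log_div_two_mul_log_abs_of_negMulLog_eq hK0.ne' hs0 hroot
  · simpa only [sub_sub_cancel] using
      tendsto_mul_abs_log_div_sq_of_negMulLog_eq hK0.ne' hs0 hroot

/-- Definition and asymptotics of the intermediate time `t0(θ0)` determined by
`|θ0| = K0 √((T−t0)|log(T−t0)|)`. -/
theorem asymptotics_t0 (K0 T : ℝ) (hK0 : 0 < K0) (hT : 0 < T) (hT1 : T < Real.exp (-1)) :
    ∃ δ > (0:ℝ), ∃ t0 : ℝ → ℝ,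
      (∀ θ0 : ℝ, θ0 ≠ 0 → |θ0| ≤ δ →
        t0 θ0 ∈ Set.Ioo (0:ℝ) T ∧
        |θ0| = K0 * Real.sqrt ((T - t0 θ0) * |Real.log (T - t0 θ0)|) ∧
        -- uniqueness
        (∀ t' ∈ Set.Ioo (0:ℝ) T,
          |θ0| = K0 * Real.sqrt ((T - t') * |Real.log (T - t')|) → t' = t0 θ0)) ∧
      -- log(T−t0(θ0)) ∼ 2 log|θ0| as θ0 → 0
      Tendsto (fun θ0 => Real.log (T - t0 θ0) / (2 * Real.log |θ0|)) (𝓝[≠] 0) (𝓝 1) ∧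
      -- T−t0(θ0) ∼ θ0²/(2K0²|log|θ0||) as θ0 → 0
      Tendsto (fun θ0 => (T - t0 θ0) * (2 * K0^2 * |Real.log (|θ0|)|) / θ0^2)
        (𝓝[≠] 0) (𝓝 1) :=
  asymptotics_t0_general K0 T hK0 hT (hT1.trans (exp_lt_one_iff.2 (by norm_num)))

end
end

section
/- For every natural number m, the polynomial h_m(y) = Σ_{n=0}^{⌊m/2⌋} m!/(n!(m−2n)!) (−1)^n y^{m−2n} satisfies 𝓛h_m = (1−m/2) h_m, i.e. h_m''(y) − (y/2) h_m'(y) + h_m(y) = (1−m/2) h_m(y) for all y∈ℝ. -/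
noncomputable section

open Real

/-!
The Euler operator `x ∂` has `x ^ m` as an eigenvector with eigenvalue `m`, and the heat semigroup
`e^{s∂²}` conjugates it to `x ∂ + 2s ∂²`, because `[∂^{2n}, x ∂] = 2n ∂^{2n}`. Since
`h_m = e^{-∂²} x ^ m`, this gives `(x ∂ - 2 ∂²) h_m = m h_m`, that is, `𝓛 h_m = (1 - m/2) h_m`.
-/

section HeatFlow

open Polynomial

variable {K : Type*} [Field K]

/-- The heat semigroup `e^{s∂²} p = ∑ₙ sⁿ/n! ∂²ⁿ p` acting on polynomials. The series is truncated
at `n = ⌊deg p / 2⌋`, beyond which its terms vanish. In positive characteristic the coefficients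
take the junk value `0` once `n! = 0` in `K`. -/
def heatFlow (s : K) (p : K[X]) : K[X] :=
  ∑ n ∈ Finset.range (p.natDegree / 2 + 1), (s ^ n / (n.factorial : K)) • derivative^[2 * n] p

theorem heatFlow_eq_sum_range (s : K) {p : K[X]} {N : ℕ} (hN : p.natDegree < 2 * N) :
    heatFlow s p = ∑ n ∈ Finset.range N, (s ^ n / (n.factorial : K)) • derivative^[2 * n] p := by
  refine Finset.sum_subset (Finset.range_subset_range.2 (by omega)) fun n _ hn ↦ ?_
  rw [Finset.mem_range] at hn
  rw [iterate_derivative_eq_zero (by omega), smul_zero]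

theorem heatFlow_smul (s a : K) (p : K[X]) : heatFlow s (a • p) = a • heatFlow s p := by
  have hdeg : (a • p).natDegree < 2 * (p.natDegree / 2 + 1) :=
    (natDegree_smul_le a p).trans_lt (by omega)
  rw [heatFlow_eq_sum_range s hdeg, heatFlow, Finset.smul_sum]
  exact Finset.sum_congr rfl fun n _ ↦ by rw [iterate_derivative_smul, smul_comm]

theorem smul_derivative_derivative_heatFlow [CharZero K] (s : K) {p : K[X]} {N : ℕ}
    (hN : p.natDegree < 2 * N) :
    s • derivative (derivative (heatFlow s p)) =
      ∑ n ∈ Finset.range (N + 1), (s ^ n / (n.factorial : K)) • n • derivative^[2 * n] p := by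
  have hcoeff (n : ℕ) : s * (s ^ n / (n.factorial : K)) =
      s ^ (n + 1) / ((n + 1).factorial : K) * ((n + 1 : ℕ) : K) := by
    have := Nat.cast_ne_zero (R := K).2 n.succ_ne_zero
    rw [Nat.factorial_succ, Nat.cast_mul]
    field_simp
    ring
  rw [Finset.sum_range_succ', zero_smul, smul_zero, add_zero, heatFlow_eq_sum_range s hN]
  simp only [derivative_sum, derivative_smul, Finset.smul_sum]
  refine Finset.sum_congr rfl fun n _ ↦ ?_
  rw [← Nat.cast_smul_eq_nsmul K, smul_smul, smul_smul, hcoeff, mul_add_one,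
    Function.iterate_succ_apply', Function.iterate_succ_apply']

theorem heatFlow_derivative_mul_X [CharZero K] (s : K) (p : K[X]) :
    heatFlow s (derivative p * X) =
      derivative (heatFlow s p) * X + (2 * s) • derivative (derivative (heatFlow s p)) := by
  obtain ⟨N, hN⟩ : ∃ N, p.natDegree < 2 * N := ⟨p.natDegree + 1, by omega⟩
  have hN' : p.natDegree < 2 * (N + 1) := by omega
  have hdeg : (derivative p * X).natDegree < 2 * (N + 1) :=
    (natDegree_mul_le_of_le (natDegree_derivative_le p) natDegree_X_le).trans_lt (by omega)
  have hcomm (n : ℕ) : derivative^[2 * n] (derivative p * X) =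
      derivative (derivative^[2 * n] p) * X + (2 : K) • n • derivative^[2 * n] p := by
    rw [iterate_derivative_derivative_mul_X, Function.iterate_succ_apply', mul_smul,
      ofNat_smul_eq_nsmul K 2]
  rw [mul_smul, smul_derivative_derivative_heatFlow s hN, heatFlow_eq_sum_range s hdeg,
    heatFlow_eq_sum_range s hN']
  simp only [hcomm, smul_add, Finset.sum_add_distrib, derivative_sum, derivative_smul,
    Finset.sum_mul, smul_mul_assoc, Finset.smul_sum, smul_comm (2 : K)]

theorem heatFlow_X_pow_eigenvector [CharZero K] (s : K) (m : ℕ) :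
    derivative (heatFlow s (X ^ m)) * X +
      (2 * s) • derivative (derivative (heatFlow s (X ^ m))) = (m : K) • heatFlow s (X ^ m) := by
  have euler : derivative (X ^ m : K[X]) * X = (m : K) • X ^ m := by
    cases m with
    | zero => simp
    | succ m => rw [derivative_X_pow, Nat.add_sub_cancel, mul_assoc, ← pow_succ, smul_eq_C_mul]
  rw [← heatFlow_derivative_mul_X, euler, heatFlow_smul]

theorem hpoly_eq_eval_heatFlow (m : ℕ) :
    hpoly m = fun y ↦ (heatFlow (-1) (X ^ m : ℝ[X])).eval y := by
  funext y
  rw [hpoly, heatFlow, natDegree_X_pow, eval_finsetSum]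
  refine Finset.sum_congr rfl fun n hn ↦ ?_
  have hnm : 2 * n ≤ m := by rw [Finset.mem_range] at hn; omega
  have hfact : ((m - 2 * n).factorial : ℝ) * m.descFactorial (2 * n) = m.factorial := by
    exact_mod_cast Nat.factorial_mul_descFactorial hnm
  have := Nat.cast_ne_zero (R := ℝ).2 (m - 2 * n).factorial_ne_zero
  rw [iterate_derivative_X_pow_eq_smul, eval_smul, eval_smul, eval_pow, eval_X, ← hfact,
    smul_eq_mul, smul_eq_mul]
  field_simp

end HeatFlow

/-- `h_m` is an eigenfunction of `𝓛g = g'' − (y/2)g' + g` with eigenvalue `1 − m/2`. -/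
theorem hermite_eigenfunction (m : ℕ) (y : ℝ) :
    deriv (deriv (hpoly m)) y - y/2 * deriv (hpoly m) y + hpoly m y =
      (1 - (m : ℝ)/2) * hpoly m y := by
  rw [hpoly_eq_eval_heatFlow]
  set p := heatFlow (-1 : ℝ) (Polynomial.X ^ m) with hp
  have hderiv (q : Polynomial ℝ) : deriv (fun x ↦ q.eval x) = fun x ↦ q.derivative.eval x :=
    funext fun _ ↦ q.deriv
  have heigen : p.derivative.eval y * y - 2 * p.derivative.derivative.eval y = m * p.eval y := by
    simpa [← hp, sub_eq_add_neg] using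
      congrArg (Polynomial.eval y) (heatFlow_X_pow_eigenvector (-1 : ℝ) m)
  simp only [hderiv]
  linear_combination -heigen / 2

end
end

section
/- Let p>1 and define R(y,s) = ∂_y²φ(y,s) − (y/2)∂_yφ(y,s) − φ(y,s)/(p−1) + φ(y,s)^p − ∂_sφ(y,s) and V(y,s) = p φ(y,s)^{p−1} − p/(p−1). Then sup_{y∈ℝ}|R(y,s)| → 0 and ‖V(·,s)‖_{L²_ρ} → 0 as s→∞, where ‖g‖²_{L²_ρ} = ∫_ℝ |g(y)|² e^{−y²/4}/√(4π) dy. -/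
noncomputable section

open Real Set Filter Topology MeasureTheory

/-- The error term `R = ∂_y²φ − (y/2)∂_yφ − φ/(p−1) + φ^p − ∂_sφ`. -/
def Rterm (p y s : ℝ) : ℝ :=
  deriv (deriv (fun z => phi p z s)) y - y/2 * deriv (fun z => phi p z s) y -
    phi p y s / (p - 1) + phi p y s ^ p - deriv (fun σ => phi p y σ) s

/-- The potential `V = p φ^{p−1} − p/(p−1)`. -/
def Vterm (p y s : ℝ) : ℝ := p * phi p y s ^ (p-1) - p/(p-1)

/-!
In the similarity variable `z = y / √s`, the profile `f` solves the first-order stationary equation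
`f ^ p - f / (p - 1) = (z / 2) f'`. Substituting `f (y / √s) + c / s`, where `c = κ / (4 p)`,
therefore cancels every term of order one: what is left is `(f'' + z f' / 2) / s`, `c / s ^ 2`, and
the increment of the reaction term under the shift by `c / s`. The first vanishes uniformly because
`f''` and `z f'` are bounded, the last because the reaction term is uniformly continuous on
bounded intervals. At fixed `y` the ansatz tends to `f 0 = κ`, where the potential
vanishes, so bounded convergence for the Gaussian measure handles `V`.
-/

/-- The residual of `u` (a function of space and time) in the equation
`∂ₛu = ∂_y²u - (y / 2) ∂_y u + F u`, a semilinear heat equation in similarity variables. The linear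
term `-u / (p - 1)` of the power nonlinearity is absorbed into the reaction term `F`. -/
def heatResidual (F : ℝ → ℝ) (u : ℝ → ℝ → ℝ) (y s : ℝ) : ℝ :=
  deriv (deriv fun x => u x s) y - y / 2 * deriv (fun x => u x s) y + F (u y s) -
    deriv (fun σ => u y σ) s

/-- The approximate solution with profile `g` in the variable `y / √s` and correction `c / s`. -/
def ansatz (g : ℝ → ℝ) (c y s : ℝ) : ℝ := g (y / √s) + c / s

/-- The profile `(a + b z²) ^ r`. The exponent is kept free because differentiation lowers it. -/
def quadPow (a b r z : ℝ) : ℝ := (a + b * z ^ 2) ^ r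

/-- The profile `(p - 1 + b z²) ^ (-1 / (p - 1))`, with the coefficient `b ≥ 0` left free: the
stationary equation holds for all of them. -/
abbrev blowupProfile (p b : ℝ) : ℝ → ℝ := quadPow (p - 1) b (-(1 / (p - 1)))

/-- The reaction term `x ^ p - x / (p - 1)` of the rescaled equation. -/
def reaction (p x : ℝ) : ℝ := x ^ p - x / (p - 1)

/-- The potential `p x ^ (p - 1) - p / (p - 1)` as a function of the value `x` of the ansatz. -/
def potential (p x : ℝ) : ℝ := p * x ^ (p - 1) - p / (p - 1)

section Ansatz

variable {g g' g'' F : ℝ → ℝ} {c s y K : ℝ}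

lemma hasDerivAt_ansatz_space {m : ℝ} (hg : HasDerivAt g m (y / √s)) :
    HasDerivAt (fun x => ansatz g c x s) (m / √s) y :=
  ((hg.comp y ((hasDerivAt_id y).div_const √s)).add_const (c / s)).congr_deriv
    (mul_one_div m √s)

lemma hasDerivAt_div_sqrt (y : ℝ) (hs : 0 < s) :
    HasDerivAt (fun σ => y / √σ) (-(y / √s) / (2 * s)) s := by
  have h := (hasDerivAt_const s y).div (hasDerivAt_sqrt hs.ne') (sqrt_pos.2 hs).ne'
  refine h.congr_deriv ?_
  rw [sq_sqrt hs.le]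
  field_simp
  ring

lemma hasDerivAt_ansatz_time {m : ℝ} (hs : 0 < s) (hg : HasDerivAt g m (y / √s)) :
    HasDerivAt (fun σ => ansatz g c y σ) (-(y / √s * m) / (2 * s) - c / s ^ 2) s := by
  have hcorr : HasDerivAt (fun σ => c / σ) (-(c / s ^ 2)) s :=
    ((hasDerivAt_inv hs.ne').const_mul c).congr_deriv (by ring)
  exact ((hg.comp s (hasDerivAt_div_sqrt y hs)).add hcorr).congr_deriv (by ring)

lemma deriv_ansatz_space (hg : ∀ z, HasDerivAt g (g' z) z) :
    deriv (fun x => ansatz g c x s) = fun x => g' (x / √s) / √s :=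
  funext fun _ => (hasDerivAt_ansatz_space (hg _)).deriv

lemma deriv_deriv_ansatz_space (hg : ∀ z, HasDerivAt g (g' z) z)
    (hg' : ∀ z, HasDerivAt g' (g'' z) z) (hs : 0 ≤ s) :
    deriv (deriv fun x => ansatz g c x s) y = g'' (y / √s) / s := by
  rw [deriv_ansatz_space hg]
  have h := (hg' (y / √s)).comp y ((hasDerivAt_id y).div_const √s)
  refine ((h.div_const √s).congr_deriv ?_).deriv
  rw [mul_one_div, div_div, mul_self_sqrt hs]

lemma heatResidual_ansatz (hg : ∀ z, HasDerivAt g (g' z) z) (hg' : ∀ z, HasDerivAt g' (g'' z) z)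
    (hF : ∀ z, F (g z) = z / 2 * g' z) (hs : 0 < s) :
    heatResidual F (ansatz g c) y s =
      (g'' (y / √s) + y / √s * g' (y / √s) / 2) / s + c / s ^ 2 +
        (F (g (y / √s) + c / s) - F (g (y / √s))) := by
  rw [heatResidual, deriv_deriv_ansatz_space hg hg' hs.le, deriv_ansatz_space hg,
    (hasDerivAt_ansatz_time hs (hg _)).deriv, hF, ansatz]
  ring

lemma tendstoUniformly_comp_add {ι α : Type*} {l : Filter ι} {f : α → ℝ} {δ : ι → ℝ}
    (hF : ContinuousOn F (Ici 0)) (hf : ∀ x, f x ∈ Icc 0 K) (hδ : Tendsto δ l (𝓝[≥] 0)) :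
    TendstoUniformly (fun i x => F (f x + δ i)) (fun x => F (f x)) l := by
  obtain ⟨hδ_zero, hδ_nonneg⟩ := tendsto_nhdsWithin_iff.1 hδ
  have hF_unif : UniformContinuousOn F (Icc 0 (K + 1)) :=
    isCompact_Icc.uniformContinuousOn_of_continuous (hF.mono Icc_subset_Ici_self)
  have hshift : TendstoUniformly (fun i x => f x + δ i) f l := by
    refine Metric.tendstoUniformly_iff.2 fun ε hε => ?_
    filter_upwards [Metric.tendsto_nhds.1 hδ_zero ε hε] with i hi x
    simpa using hi
  refine hF_unif.comp_tendstoUniformly_eventually ?_ (fun x => ?_) hshift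
  · filter_upwards [hδ_nonneg, hδ_zero.eventually_le_const one_pos] with i h0 h1 x
    exact ⟨add_nonneg (hf x).1 h0, add_le_add (hf x).2 h1⟩
  · exact Icc_subset_Icc_right (le_add_of_nonneg_right zero_le_one) (hf x)

lemma tendsto_const_div_atTop_nhdsGE (hc : 0 ≤ c) :
    Tendsto (fun s => c / s) atTop (𝓝[≥] 0) :=
  tendsto_nhdsWithin_iff.2 ⟨tendsto_id.const_div_atTop c,
    (eventually_ge_atTop 0).mono fun _ hs => div_nonneg hc hs⟩

theorem tendstoUniformly_heatResidual_ansatz {B₁ B₂ : ℝ} (hg : ∀ z, HasDerivAt g (g' z) z)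
    (hg' : ∀ z, HasDerivAt g' (g'' z) z) (hF : ∀ z, F (g z) = z / 2 * g' z)
    (hF_cont : ContinuousOn F (Ici 0)) (hgK : ∀ z, g z ∈ Icc 0 K) (hB₁ : ∀ z, |z * g' z| ≤ B₁)
    (hB₂ : ∀ z, |g'' z| ≤ B₂) (hc : 0 ≤ c) :
    TendstoUniformly (fun s y => heatResidual F (ansatz g c) y s) 0 atTop := by
  refine Metric.tendstoUniformly_iff.2 fun ε hε => ?_
  have hlin : Tendsto (fun s : ℝ => (B₂ + B₁ / 2) / s + c / s ^ 2) atTop (𝓝 0) := by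
    simpa using (tendsto_id.const_div_atTop (B₂ + B₁ / 2)).add
      ((tendsto_pow_atTop two_ne_zero).const_div_atTop c)
  have hreact := Metric.tendstoUniformly_iff.1
    (tendstoUniformly_comp_add hF_cont hgK (tendsto_const_div_atTop_nhdsGE hc)) _ (half_pos hε)
  filter_upwards [hlin.eventually_lt_const (half_pos hε), hreact, eventually_gt_atTop 0]
    with s hlin_s hreact_s hs y
  set z := y / √s with hz
  have hprofile : |(g'' z + z * g' z / 2) / s| ≤ (B₂ + B₁ / 2) / s := by
    rw [abs_div, abs_of_pos hs]
    gcongr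
    refine (abs_add_le _ _).trans (add_le_add (hB₂ z) ?_)
    rw [abs_div, abs_two]
    exact div_le_div_of_nonneg_right (hB₁ z) zero_le_two
  have hcorr : |c / s ^ 2| = c / s ^ 2 := abs_of_nonneg (by positivity)
  have hincr : |F (g z + c / s) - F (g z)| < ε / 2 := by
    simpa only [Real.dist_eq, abs_sub_comm] using hreact_s z
  rw [Pi.zero_apply, dist_zero_left, norm_eq_abs, heatResidual_ansatz hg hg' hF hs, ← hz]
  linarith [abs_add_three ((g'' z + z * g' z / 2) / s) (c / s ^ 2) (F (g z + c / s) - F (g z))]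

lemma ansatz_mem_Icc (hgK : ∀ z, g z ∈ Icc 0 K) (hc : 0 ≤ c) (hs : 1 ≤ s) (y : ℝ) :
    ansatz g c y s ∈ Icc 0 (K + c) :=
  ⟨add_nonneg (hgK _).1 (by positivity), add_le_add (hgK _).2 (div_le_self hc hs)⟩

lemma continuous_ansatz (hg : Continuous g) (c s : ℝ) : Continuous fun y => ansatz g c y s :=
  (hg.comp (continuous_id.div_const _)).add_const _

lemma tendsto_ansatz (hg : ContinuousAt g 0) (c y : ℝ) :
    Tendsto (fun s => ansatz g c y s) atTop (𝓝 (g 0)) := by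
  simpa [ansatz] using
    (hg.tendsto.comp (tendsto_sqrt_atTop.const_div_atTop y)).add (tendsto_id.const_div_atTop c)

theorem tendsto_integral_comp_ansatz {μ : Measure ℝ} [IsFiniteMeasure μ]
    (hF : ContinuousOn F (Ici 0)) (hg : Continuous g) (hgK : ∀ z, g z ∈ Icc 0 K) (hc : 0 ≤ c) :
    Tendsto (fun s => ∫ y, F (ansatz g c y s) ∂μ) atTop (𝓝 (∫ _, F (g 0) ∂μ)) := by
  obtain ⟨C, hC⟩ := isCompact_Icc.exists_bound_of_continuousOn
    (hF.mono (Icc_subset_Ici_self : Icc 0 (K + c) ⊆ Ici 0))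
  have hlim (y : ℝ) : Tendsto (fun s => ansatz g c y s) atTop (𝓝[Ici 0] (g 0)) :=
    tendsto_nhdsWithin_iff.2 ⟨tendsto_ansatz hg.continuousAt c y,
      (eventually_ge_atTop 1).mono fun _ hs => (ansatz_mem_Icc hgK hc hs y).1⟩
  refine tendsto_integral_filter_of_norm_le_const ?_ ⟨C, ?_⟩ ?_
  · filter_upwards [eventually_ge_atTop 1] with s hs
    exact (hF.comp_continuous (continuous_ansatz hg c s)
      fun y => (ansatz_mem_Icc hgK hc hs y).1).aestronglyMeasurable
  · filter_upwards [eventually_ge_atTop 1] with s hs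
    exact ae_of_all _ fun y => hC _ (ansatz_mem_Icc hgK hc hs y)
  · exact ae_of_all _ fun y => (hF (g 0) (hgK 0).1).tendsto.comp (hlim y)

end Ansatz

section QuadPow

variable {a b r : ℝ}

lemma add_mul_sq_pos (ha : 0 < a) (hb : 0 ≤ b) (z : ℝ) : 0 < a + b * z ^ 2 := by positivity

lemma quadPow_nonneg (ha : 0 < a) (hb : 0 ≤ b) (r z : ℝ) : 0 ≤ quadPow a b r z :=
  rpow_nonneg (add_mul_sq_pos ha hb z).le r

lemma quadPow_le (ha : 0 < a) (hb : 0 ≤ b) (hr : r ≤ 0) (z : ℝ) : quadPow a b r z ≤ a ^ r :=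
  rpow_le_rpow_of_nonpos ha (le_add_of_nonneg_right (by positivity)) hr

lemma quadPow_mem_Icc (ha : 0 < a) (hb : 0 ≤ b) (hr : r ≤ 0) (z : ℝ) :
    quadPow a b r z ∈ Icc 0 (a ^ r) :=
  ⟨quadPow_nonneg ha hb r z, quadPow_le ha hb hr z⟩

lemma quadPow_zero_right (a b r : ℝ) : quadPow a b r 0 = a ^ r := by simp [quadPow]

lemma quadPow_rpow (ha : 0 < a) (hb : 0 ≤ b) (r q z : ℝ) :
    quadPow a b r z ^ q = quadPow a b (r * q) z :=
  (rpow_mul (add_mul_sq_pos ha hb z).le r q).symm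

lemma quadPow_eq_quadPow_sub_one_mul (ha : 0 < a) (hb : 0 ≤ b) (r z : ℝ) :
    quadPow a b r z = quadPow a b (r - 1) z * (a + b * z ^ 2) := by
  rw [quadPow, quadPow, ← rpow_add_one (add_mul_sq_pos ha hb z).ne', sub_add_cancel]

lemma mul_sq_mul_quadPow_sub_one_le (ha : 0 < a) (hb : 0 ≤ b) (r z : ℝ) :
    b * z ^ 2 * quadPow a b (r - 1) z ≤ quadPow a b r z := by
  have := mul_nonneg ha.le (quadPow_nonneg ha hb (r - 1) z)
  rw [quadPow_eq_quadPow_sub_one_mul ha hb r]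
  linarith

lemma hasDerivAt_quadPow (ha : 0 < a) (hb : 0 ≤ b) (r z : ℝ) :
    HasDerivAt (quadPow a b r) (2 * b * r * (z * quadPow a b (r - 1) z)) z := by
  have hbase : HasDerivAt (fun x => a + b * x ^ 2) (b * (2 * z)) z := by
    simpa using ((hasDerivAt_pow 2 z).const_mul b).const_add a
  refine (hbase.rpow_const (p := r) (Or.inl (add_mul_sq_pos ha hb z).ne')).congr_deriv ?_
  rw [quadPow]
  ring

lemma hasDerivAt_deriv_quadPow (ha : 0 < a) (hb : 0 ≤ b) (r z : ℝ) :
    HasDerivAt (fun x => 2 * b * r * (x * quadPow a b (r - 1) x))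
      (2 * b * r * (quadPow a b (r - 1) z +
        2 * (r - 1) * (b * z ^ 2 * quadPow a b (r - 1 - 1) z))) z :=
  (((hasDerivAt_id' z).mul (hasDerivAt_quadPow ha hb (r - 1) z)).const_mul
    (2 * b * r)).congr_deriv (by ring)

lemma continuous_quadPow (ha : 0 < a) (hb : 0 ≤ b) (r : ℝ) : Continuous (quadPow a b r) :=
  continuous_iff_continuousAt.2 fun z => (hasDerivAt_quadPow ha hb r z).continuousAt

lemma abs_mul_deriv_quadPow_le (ha : 0 < a) (hb : 0 ≤ b) (hr : r ≤ 0) (z : ℝ) :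
    |z * (2 * b * r * (z * quadPow a b (r - 1) z))| ≤ 2 * |r| * a ^ r := by
  have hq := quadPow_nonneg ha hb (r - 1) z
  calc |z * (2 * b * r * (z * quadPow a b (r - 1) z))|
      = |2 * r * (b * z ^ 2 * quadPow a b (r - 1) z)| := by ring_nf
    _ = 2 * |r| * (b * z ^ 2 * quadPow a b (r - 1) z) := by
      rw [abs_mul, abs_mul, abs_two, abs_of_nonneg (mul_nonneg (by positivity) hq)]
    _ ≤ 2 * |r| * a ^ r := by
      gcongr
      exact (mul_sq_mul_quadPow_sub_one_le ha hb r z).trans (quadPow_le ha hb hr z)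

lemma abs_deriv_deriv_quadPow_le (ha : 0 < a) (hb : 0 ≤ b) (hr : r ≤ 1) (z : ℝ) :
    |2 * b * r * (quadPow a b (r - 1) z + 2 * (r - 1) * (b * z ^ 2 * quadPow a b (r - 1 - 1) z))| ≤
      2 * b * |r| * ((1 + 2 * |r - 1|) * a ^ (r - 1)) := by
  set A := quadPow a b (r - 1) z
  set B := b * z ^ 2 * quadPow a b (r - 1 - 1) z
  have hA_nonneg : 0 ≤ A := quadPow_nonneg ha hb _ z
  have hB_nonneg : 0 ≤ B := mul_nonneg (by positivity) (quadPow_nonneg ha hb _ z)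
  have hBA : B ≤ A := mul_sq_mul_quadPow_sub_one_le ha hb (r - 1) z
  have hA : A ≤ a ^ (r - 1) := quadPow_le ha hb (sub_nonpos.2 hr) z
  calc |2 * b * r * (A + 2 * (r - 1) * B)|
      = 2 * b * |r| * |A + 2 * (r - 1) * B| := by
        rw [abs_mul, abs_mul, abs_of_nonneg (by positivity : 0 ≤ 2 * b)]
    _ ≤ 2 * b * |r| * (A + 2 * |r - 1| * B) := by
      gcongr
      refine (abs_add_le _ _).trans_eq ?_
      rw [abs_mul, abs_mul, abs_two, abs_of_nonneg hA_nonneg, abs_of_nonneg hB_nonneg]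
    _ ≤ 2 * b * |r| * (a ^ (r - 1) + 2 * |r - 1| * a ^ (r - 1)) := by
      gcongr
      exact hBA.trans hA
    _ = 2 * b * |r| * ((1 + 2 * |r - 1|) * a ^ (r - 1)) := by ring

end QuadPow

section PowerNonlinearity

variable {p b c : ℝ}

lemma continuous_reaction (hp : 0 ≤ p) : Continuous (reaction p) :=
  (continuous_rpow_const hp).sub (continuous_id.div_const _)

lemma continuous_potential (hp : 1 ≤ p) : Continuous (potential p) :=
  ((continuous_rpow_const (sub_nonneg.2 hp)).const_mul p).sub continuous_const

lemma potential_blowupProfile_zero (hp : 1 < p) (b : ℝ) :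
    potential p (blowupProfile p b 0) = 0 := by
  have hp1 : 0 < p - 1 := sub_pos.2 hp
  rw [potential, blowupProfile, quadPow_zero_right, ← rpow_mul hp1.le, neg_mul,
    one_div_mul_cancel hp1.ne', rpow_neg_one, ← div_eq_mul_inv, sub_self]

lemma reaction_blowupProfile (hp : 1 < p) (hb : 0 ≤ b) (z : ℝ) :
    reaction p (blowupProfile p b z) =
      z / 2 * (2 * b * -(1 / (p - 1)) * (z * quadPow (p - 1) b (-(1 / (p - 1)) - 1) z)) := by
  have hp1 : 0 < p - 1 := sub_pos.2 hp
  have hexp : -(1 / (p - 1)) * p = -(1 / (p - 1)) - 1 := by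
    field_simp
    ring
  rw [reaction, quadPow_rpow hp1 hb, hexp, blowupProfile,
    quadPow_eq_quadPow_sub_one_mul hp1 hb (-(1 / (p - 1)))]
  field_simp
  ring

theorem tendstoUniformly_heatResidual_blowupProfile (hp : 1 < p) (hb : 0 ≤ b) (hc : 0 ≤ c) :
    TendstoUniformly (fun s y => heatResidual (reaction p) (ansatz (blowupProfile p b) c) y s)
      0 atTop := by
  have hp1 : 0 < p - 1 := sub_pos.2 hp
  have hr : -(1 / (p - 1)) ≤ 0 := neg_nonpos.2 (by positivity)
  exact tendstoUniformly_heatResidual_ansatz (hasDerivAt_quadPow hp1 hb _)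
    (hasDerivAt_deriv_quadPow hp1 hb _) (reaction_blowupProfile hp hb)
    (continuous_reaction (zero_le_one.trans hp.le)).continuousOn (quadPow_mem_Icc hp1 hb hr)
    (abs_mul_deriv_quadPow_le hp1 hb hr)
    (abs_deriv_deriv_quadPow_le hp1 hb (hr.trans zero_le_one)) hc

theorem tendsto_integral_potential_sq_blowupProfile (hp : 1 < p) (hb : 0 ≤ b) (hc : 0 ≤ c)
    (μ : Measure ℝ) [IsFiniteMeasure μ] :
    Tendsto (fun s => ∫ y, potential p (ansatz (blowupProfile p b) c y s) ^ 2 ∂μ)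
      atTop (𝓝 0) := by
  have hp1 : 0 < p - 1 := sub_pos.2 hp
  have hr : -(1 / (p - 1)) ≤ 0 := neg_nonpos.2 (by positivity)
  have hV : Continuous fun x => potential p x ^ 2 := (continuous_potential hp.le).pow 2
  simpa only [potential_blowupProfile_zero hp, zero_pow two_ne_zero, integral_zero] using
    tendsto_integral_comp_ansatz (μ := μ) hV.continuousOn (continuous_quadPow hp1 hb _)
      (quadPow_mem_Icc hp1 hb hr) hc

end PowerNonlinearity

lemma phi_eq_ansatz (p : ℝ) : phi p =
    ansatz (blowupProfile p ((p - 1) ^ 2 / (4 * p))) (kap p / (4 * p)) := by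
  funext y s
  rw [phi, ansatz, div_div]
  rfl

lemma Rterm_eq_heatResidual (p : ℝ) : Rterm p = heatResidual (reaction p) (phi p) := by
  funext y s
  rw [Rterm, heatResidual, reaction]
  ring

lemma rho_eq_gaussianPDFReal : rho = ProbabilityTheory.gaussianPDFReal 0 2 := by
  funext y
  have hvar : 2 * π * ((2 : NNReal) : ℝ) = 4 * π := by
    push_cast
    ring
  have hexp : -(y - 0) ^ 2 / (2 * ((2 : NNReal) : ℝ)) = -(y ^ 2 / 4) := by
    push_cast
    ring
  rw [rho, ProbabilityTheory.gaussianPDFReal, hvar, hexp, div_eq_inv_mul]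

lemma integral_mul_rho (h : ℝ → ℝ) :
    ∫ y, h y * rho y = ∫ y, h y ∂ProbabilityTheory.gaussianReal 0 2 := by
  simp only [ProbabilityTheory.integral_gaussianReal_eq_integral_smul two_ne_zero,
    rho_eq_gaussianPDFReal, smul_eq_mul, mul_comm]

theorem R_and_V_vanish_general {p b c : ℝ} (hp : 1 < p) (hb : 0 ≤ b) (hc : 0 ≤ c)
    (μ : Measure ℝ) [IsFiniteMeasure μ] :
    (∀ ε > (0 : ℝ), ∃ s₁ : ℝ, ∀ s ≥ s₁, ∀ y : ℝ,
      |heatResidual (reaction p) (ansatz (blowupProfile p b) c) y s| ≤ ε) ∧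
    Tendsto (fun s => √(∫ y, potential p (ansatz (blowupProfile p b) c y s) ^ 2 ∂μ))
      atTop (𝓝 0) := by
  refine ⟨fun ε hε => ?_, ?_⟩
  · obtain ⟨s₁, hs₁⟩ := eventually_atTop.1
      (Metric.tendstoUniformly_iff.1 (tendstoUniformly_heatResidual_blowupProfile hp hb hc) ε hε)
    exact ⟨s₁, fun s hs y => by simpa using (hs₁ s hs y).le⟩
  · simpa using (tendsto_integral_potential_sq_blowupProfile hp hb hc μ).sqrt

/-- `‖R(·,s)‖_{L^∞} → 0` and `‖V(·,s)‖_{L²_ρ} → 0` as `s → ∞`. -/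
theorem R_and_V_vanish (p : ℝ) (hp : 1 < p) :
    (∀ ε > (0:ℝ), ∃ s1 : ℝ, ∀ s ≥ s1, ∀ y : ℝ, |Rterm p y s| ≤ ε) ∧
    Tendsto (fun s => Real.sqrt (∫ y : ℝ, (Vterm p y s)^2 * rho y)) atTop (𝓝 0) := by
  have hp4 : 0 ≤ 4 * p := by linarith
  have hb : 0 ≤ (p - 1) ^ 2 / (4 * p) := div_nonneg (sq_nonneg _) hp4
  have hc : 0 ≤ kap p / (4 * p) := div_nonneg (rpow_nonneg (sub_pos.2 hp).le _) hp4
  simp only [Rterm_eq_heatResidual, integral_mul_rho, Vterm, phi_eq_ansatz]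
  exact R_and_V_vanish_general hp hb hc (ProbabilityTheory.gaussianReal 0 2)

end
end
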